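/- Let k ≥ 0 be an integer and α ∈ (0,1). There is a constant C, depending only on k and α, such that for every R with 0 < R ≤ 1 and every h of class C^{k+α}(D), the function Th is of class C^{k+1+α}(D) and satisfies ‖Th‖^{(k+1)} ≤ C ‖h‖^{(k)}; likewise ‖T̄h‖^{(k+1)} ≤ C ‖h‖^{(k)}, where T̄h = conj(T(conj h)). -/

import Mathlib

open Complex MeasureTheory Metric ENNReal NNReal

noncomputable section

/-- Wirtinger derivative `∂`. -/
def wD (f : ℂ → ℂ) : ℂ → ℂ := fun z =>
  (fderiv ℝ f z 1 - Complex.I * fderiv ℝ f z Complex.I) / 2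

/-- Wirtinger derivative `∂̄`. -/
def wDbar (f : ℂ → ℂ) : ℂ → ℂ := fun z =>
  (fderiv ℝ f z 1 + Complex.I * fderiv ℝ f z Complex.I) / 2

/-- Iterated Wirtinger derivative `∂^i ∂̄^j`. -/
def wDij (i j : ℕ) (f : ℂ → ℂ) : ℂ → ℂ := wD^[i] (wDbar^[j] f)

/-- α-Hölder constant of `f` on `A`, valued in `ℝ≥0∞`. -/
def Hol (α : ℝ) (A : Set ℂ) (f : ℂ → ℂ) : ℝ≥0∞ :=
  ⨆ z ∈ A, ⨆ z' ∈ A, ⨆ _ : z ≠ z', (‖f z - f z'‖₊ : ℝ≥0∞) / (‖z - z'‖₊ : ℝ≥0∞) ^ α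

/-- `f` is of class `C^{k+α}(D)`, `D` the closed disk of radius `R`. -/
def CkHolder (k : ℕ) (α R : ℝ) (f : ℂ → ℂ) : Prop :=
  (∃ U : Set ℂ, IsOpen U ∧ closedBall (0:ℂ) R ⊆ U ∧ ContDiffOn ℝ k f U) ∧
  ∀ i j : ℕ, i + j = k → Hol α (closedBall (0:ℂ) R) (wDij i j f) < ⊤

/-- The norm `‖f‖ = sup_D |f| + (2R)^α H_α[f]`. -/
def hnorm (α R : ℝ) (f : ℂ → ℂ) : ℝ≥0∞ :=
  (⨆ z ∈ closedBall (0:ℂ) R, (‖f z‖₊ : ℝ≥0∞)) +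
    ENNReal.ofReal ((2*R) ^ α) * Hol α (closedBall (0:ℂ) R) f

/-- The norm `‖f‖^{(k)} = max_{i+j=k} ‖∂^i∂̄^j f‖`. -/
def hnormK (k : ℕ) (α R : ℝ) (f : ℂ → ℂ) : ℝ≥0∞ :=
  ⨆ p ∈ Finset.HasAntidiagonal.antidiagonal k, hnorm α R (wDij p.1 p.2 f)

/-- `C_0^{k+α}(D)`: members of `C^{k+α}(D)` all of whose derivatives of order `≤ k-1`
vanish at the origin. -/
def C0kHolder (k : ℕ) (α R : ℝ) (f : ℂ → ℂ) : Prop :=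
  CkHolder k α R f ∧ ∀ i j : ℕ, i + j < k → wDij i j f 0 = 0

/-- The Cauchy–Green operator `T`. -/
def Tcg (R : ℝ) (g : ℂ → ℂ) : ℂ → ℂ := fun z =>
  -(Real.pi : ℂ)⁻¹ * ∫ ζ in closedBall (0:ℂ) R, g ζ / (ζ - z)

/-- The operator `T̄ g = conj (T (conj g))`. -/
def Tcgbar (R : ℝ) (g : ℂ → ℂ) : ℂ → ℂ := fun z =>
  (starRingEnd ℂ) (Tcg R (fun w => (starRingEnd ℂ) (g w)) z)

/-- The Cauchy integral `S`. -/
def Scau (R : ℝ) (f : ℂ → ℂ) : ℂ → ℂ := fun z =>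
  (2 * Real.pi * Complex.I)⁻¹ * ∮ ζ in C(0, R), f ζ / (ζ - z)

/-- The operator `S̄ f = conj (S (conj f))`. -/
def Scaubar (R : ℝ) (f : ℂ → ℂ) : ℂ → ℂ := fun z =>
  (starRingEnd ℂ) (Scau R (fun w => (starRingEnd ℂ) (f w)) z)

/-- The boundary operator `S_b`. -/
def Sb (R : ℝ) (f : ℂ → ℂ) : ℂ → ℂ := fun z =>
  (2 * Real.pi * Complex.I)⁻¹ *
    ∫ θ in (0:ℝ)..(2 * Real.pi),
      f (R * Complex.exp (Complex.I * θ)) / (R * Complex.exp (Complex.I * θ) - z) *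
        (-Complex.I * R * Complex.exp (-Complex.I * θ))

/-- The Taylor polynomial `P_k(ζ, z)` of `f` at `z` of degree `k`. -/
def TaylorP (k : ℕ) (f : ℂ → ℂ) (ζ z : ℂ) : ℂ :=
  ∑ l ∈ Finset.range (k+1), ((Nat.factorial l : ℂ))⁻¹ *
    ∑ p ∈ Finset.HasAntidiagonal.antidiagonal l,
      wDij p.1 p.2 f z * (ζ - z) ^ p.1 * ((starRingEnd ℂ) ζ - (starRingEnd ℂ) z) ^ p.2

/-- The operator `^{k+2}T`. -/
def TkOp (k : ℕ) (R : ℝ) (f : ℂ → ℂ) : ℂ → ℂ := fun z =>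
  -((Nat.factorial (k+1) : ℂ) / (Real.pi : ℂ)) *
    ∫ ζ in closedBall (0:ℂ) R, (f ζ - TaylorP k f ζ z) / (ζ - z) ^ (k + 2)

end

noncomputable section

/-- Norm `‖f‖` computed on the open disk. -/
def hnormB (α R : ℝ) (f : ℂ → ℂ) : ℝ≥0∞ :=
  (⨆ z ∈ ball (0:ℂ) R, (‖f z‖₊ : ℝ≥0∞)) +
    ENNReal.ofReal ((2*R) ^ α) * Hol α (ball (0:ℂ) R) f

/-- Norm `‖f‖^{(k)}` computed on the open disk. -/
def hnormKB (k : ℕ) (α R : ℝ) (f : ℂ → ℂ) : ℝ≥0∞ :=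
  ⨆ p ∈ Finset.HasAntidiagonal.antidiagonal k, hnormB α R (wDij p.1 p.2 f)

/-- `f` is of class `C^{k+α}(D)`, in the sense that it is `C^k` on the open disk,
all its derivatives of order `≤ k` extend continuously to the closed disk, and its
derivatives of order `k` have finite `α`-Hölder constant. -/
def CkHolderBall (k : ℕ) (α R : ℝ) (f : ℂ → ℂ) : Prop :=
  ContDiffOn ℝ k f (ball (0:ℂ) R) ∧
  (∀ i j : ℕ, i + j ≤ k → ∃ g : ℂ → ℂ, ContinuousOn g (closedBall (0:ℂ) R) ∧
    Set.EqOn (wDij i j f) g (ball (0:ℂ) R)) ∧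
  ∀ i j : ℕ, i + j = k → Hol α (ball (0:ℂ) R) (wDij i j f) < ⊤

end


theorem wD_congr {f g : ℂ → ℂ} {z : ℂ} (h : f =ᶠ[nhds z] g) : wD f z = wD g z := by
  simp only [wD, h.fderiv_eq]

theorem wDbar_congr {f g : ℂ → ℂ} {z : ℂ} (h : f =ᶠ[nhds z] g) : wDbar f z = wDbar g z := by
  simp only [wDbar, h.fderiv_eq]

theorem wD_eqOn {f g : ℂ → ℂ} {V : Set ℂ} (hV : IsOpen V) (h : Set.EqOn f g V) :
    Set.EqOn (wD f) (wD g) V := fun z hz =>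
  wD_congr (Filter.eventuallyEq_of_mem (hV.mem_nhds hz) h)

theorem wDbar_eqOn {f g : ℂ → ℂ} {V : Set ℂ} (hV : IsOpen V) (h : Set.EqOn f g V) :
    Set.EqOn (wDbar f) (wDbar g) V := fun z hz =>
  wDbar_congr (Filter.eventuallyEq_of_mem (hV.mem_nhds hz) h)

theorem wD_iter_eqOn {V : Set ℂ} (hV : IsOpen V) (n : ℕ) : ∀ {f g : ℂ → ℂ}, Set.EqOn f g V →
    Set.EqOn (wD^[n] f) (wD^[n] g) V := by
  induction n with
  | zero => intro f g h; exact h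
  | succ n ih => intro f g h; exact ih (wD_eqOn hV h)

theorem wDbar_iter_eqOn {V : Set ℂ} (hV : IsOpen V) (n : ℕ) : ∀ {f g : ℂ → ℂ}, Set.EqOn f g V →
    Set.EqOn (wDbar^[n] f) (wDbar^[n] g) V := by
  induction n with
  | zero => intro f g h; exact h
  | succ n ih => intro f g h; exact ih (wDbar_eqOn hV h)

theorem wDij_eqOn {V : Set ℂ} (hV : IsOpen V) (i j : ℕ) {f g : ℂ → ℂ} (h : Set.EqOn f g V) :
    Set.EqOn (wDij i j f) (wDij i j g) V :=
  wD_iter_eqOn hV i (wDbar_iter_eqOn hV j h)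

/-- The real linear map `v ↦ p v + q conj v`. -/
noncomputable def cL (p q : ℂ) : ℂ →L[ℝ] ℂ :=
  p • (ContinuousLinearMap.id ℝ ℂ) + q • (Complex.conjCLE : ℂ →L[ℝ] ℂ)

theorem cL_apply (p q v : ℂ) : cL p q v = p * v + q * (starRingEnd ℂ) v := by
  simp [cL]

theorem wD_of_hasFDerivAt {f : ℂ → ℂ} {p q z : ℂ} (h : HasFDerivAt f (cL p q) z) :
    wD f z = p := by
  simp only [wD, h.fderiv, cL_apply, map_one, conj_I]
  linear_combination (-(p - q)/2) * I_sq

theorem wDbar_of_hasFDerivAt {f : ℂ → ℂ} {p q z : ℂ} (h : HasFDerivAt f (cL p q) z) :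
    wDbar f z = q := by
  simp only [wDbar, h.fderiv, cL_apply, map_one, conj_I]
  linear_combination ((p - q)/2) * I_sq

theorem clm_eq_cL (L : ℂ →L[ℝ] ℂ) : L = cL ((L 1 - I * L I)/2) ((L 1 + I * L I)/2) := by
  ext v
  have hv : L v = v.re * L 1 + v.im * L I := by
    have : v = v.re • (1:ℂ) + v.im • I := by
      simp only [real_smul, mul_one]; exact (re_add_im v).symm
    conv_lhs => rw [this]
    rw [map_add, map_smul, map_smul, real_smul, real_smul]
  rw [cL_apply, hv]
  conv_rhs => rw [← re_add_im v]
  simp only [map_add, map_mul, conj_ofReal, conj_I]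
  linear_combination (v.im * L I) * I_sq

theorem hasFDerivAt_wirt {f : ℂ → ℂ} {z : ℂ} (h : DifferentiableAt ℝ f z) :
    HasFDerivAt f (cL (wD f z) (wDbar f z)) z := by
  have := h.hasFDerivAt
  rwa [clm_eq_cL (fderiv ℝ f z)] at this

theorem norm_cL_le (p q : ℂ) : ‖cL p q‖ ≤ ‖p‖ + ‖q‖ := by
  refine ContinuousLinearMap.opNorm_le_bound _ (by positivity) fun v => ?_
  rw [cL_apply, add_mul]
  refine (norm_add_le _ _).trans ?_
  simp

theorem hasFDerivAt_of_hasDerivAt {f : ℂ → ℂ} {p z : ℂ} (h : HasDerivAt f p z) :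
    HasFDerivAt f (cL p 0) z := by
  have := h.hasFDerivAt.restrictScalars ℝ
  refine this.congr_fderiv ?_
  ext v
  simp [cL_apply, mul_comm]

theorem wD_of_hasDerivAt {f : ℂ → ℂ} {p z : ℂ} (h : HasDerivAt f p z) : wD f z = p :=
  wD_of_hasFDerivAt (hasFDerivAt_of_hasDerivAt h)

theorem wDbar_of_hasDerivAt {f : ℂ → ℂ} {p z : ℂ} (h : HasDerivAt f p z) : wDbar f z = 0 :=
  wDbar_of_hasFDerivAt (hasFDerivAt_of_hasDerivAt h)

theorem hasDerivAt_of_wDbar_zero {f : ℂ → ℂ} {z : ℂ} (h : DifferentiableAt ℝ f z)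
    (h0 : wDbar f z = 0) : HasDerivAt f (wD f z) z := by
  have h1 := hasFDerivAt_wirt h
  rw [h0] at h1
  rw [hasDerivAt_iff_hasFDerivAt]
  refine hasFDerivAt_of_restrictScalars ℝ h1 ?_
  ext v
  simp [cL_apply, mul_comm]

theorem cL_add (p q p' q' : ℂ) : cL p q + cL p' q' = cL (p + p') (q + q') := by
  ext v; simp [cL_apply]; ring

theorem cL_sub (p q p' q' : ℂ) : cL p q - cL p' q' = cL (p - p') (q - q') := by
  ext v; simp [cL_apply]; ring

theorem cL_smul (c p q : ℂ) : c • cL p q = cL (c * p) (c * q) := by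
  ext v; simp [cL_apply]; ring

section wirtcalc
variable {f g : ℂ → ℂ} {z : ℂ}

theorem wirt_add (hf : DifferentiableAt ℝ f z) (hg : DifferentiableAt ℝ g z) :
    HasFDerivAt (fun w => f w + g w) (cL (wD f z + wD g z) (wDbar f z + wDbar g z)) z := by
  rw [← cL_add]
  exact (hasFDerivAt_wirt hf).add (hasFDerivAt_wirt hg)

theorem wirt_sub (hf : DifferentiableAt ℝ f z) (hg : DifferentiableAt ℝ g z) :
    HasFDerivAt (fun w => f w - g w) (cL (wD f z - wD g z) (wDbar f z - wDbar g z)) z := by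
  rw [← cL_sub]
  exact (hasFDerivAt_wirt hf).sub (hasFDerivAt_wirt hg)

theorem wirt_cmul (c : ℂ) (hf : DifferentiableAt ℝ f z) :
    HasFDerivAt (fun w => c * f w) (cL (c * wD f z) (c * wDbar f z)) z := by
  rw [← cL_smul]
  exact (hasFDerivAt_wirt hf).const_mul c

theorem wirt_mul (hf : DifferentiableAt ℝ f z) (hg : DifferentiableAt ℝ g z) :
    HasFDerivAt (fun w => f w * g w)
      (cL (wD f z * g z + f z * wD g z) (wDbar f z * g z + f z * wDbar g z)) z := by
  refine ((hasFDerivAt_wirt hf).mul (hasFDerivAt_wirt hg)).congr_fderiv ?_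
  ext v
  simp [cL_apply]; ring

theorem wirt_conj (hf : DifferentiableAt ℝ f z) :
    HasFDerivAt (fun w => (starRingEnd ℂ) (f w))
      (cL ((starRingEnd ℂ) (wDbar f z)) ((starRingEnd ℂ) (wD f z))) z := by
  have := (Complex.conjCLE : ℂ →L[ℝ] ℂ).hasFDerivAt.comp z (hasFDerivAt_wirt hf)
  refine this.congr_fderiv ?_
  ext v
  simp [cL_apply]; ring

theorem wD_add (hf : DifferentiableAt ℝ f z) (hg : DifferentiableAt ℝ g z) :
    wD (fun w => f w + g w) z = wD f z + wD g z := wD_of_hasFDerivAt (wirt_add hf hg)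
theorem wDbar_add (hf : DifferentiableAt ℝ f z) (hg : DifferentiableAt ℝ g z) :
    wDbar (fun w => f w + g w) z = wDbar f z + wDbar g z := wDbar_of_hasFDerivAt (wirt_add hf hg)
theorem wD_sub (hf : DifferentiableAt ℝ f z) (hg : DifferentiableAt ℝ g z) :
    wD (fun w => f w - g w) z = wD f z - wD g z := wD_of_hasFDerivAt (wirt_sub hf hg)
theorem wDbar_sub (hf : DifferentiableAt ℝ f z) (hg : DifferentiableAt ℝ g z) :
    wDbar (fun w => f w - g w) z = wDbar f z - wDbar g z := wDbar_of_hasFDerivAt (wirt_sub hf hg)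
theorem wD_cmul (c : ℂ) (hf : DifferentiableAt ℝ f z) :
    wD (fun w => c * f w) z = c * wD f z := wD_of_hasFDerivAt (wirt_cmul c hf)
theorem wDbar_cmul (c : ℂ) (hf : DifferentiableAt ℝ f z) :
    wDbar (fun w => c * f w) z = c * wDbar f z := wDbar_of_hasFDerivAt (wirt_cmul c hf)
theorem wD_mul (hf : DifferentiableAt ℝ f z) (hg : DifferentiableAt ℝ g z) :
    wD (fun w => f w * g w) z = wD f z * g z + f z * wD g z := wD_of_hasFDerivAt (wirt_mul hf hg)
theorem wDbar_mul (hf : DifferentiableAt ℝ f z) (hg : DifferentiableAt ℝ g z) :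
    wDbar (fun w => f w * g w) z = wDbar f z * g z + f z * wDbar g z :=
  wDbar_of_hasFDerivAt (wirt_mul hf hg)
end wirtcalc

section smooth
variable {f g : ℂ → ℂ} {V : Set ℂ}

theorem contDiffOn_wD (hV : IsOpen V) {n : ℕ} (h : ContDiffOn ℝ (n+1 : ℕ) f V) :
    ContDiffOn ℝ n (wD f) V := by
  have h1 := h.fderiv_of_isOpen (m := n) hV (by norm_cast)
  exact ((h1.clm_apply contDiffOn_const).sub
    (contDiffOn_const.mul (h1.clm_apply contDiffOn_const))).div_const 2

theorem contDiffOn_wDbar (hV : IsOpen V) {n : ℕ} (h : ContDiffOn ℝ (n+1 : ℕ) f V) :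
    ContDiffOn ℝ n (wDbar f) V := by
  have h1 := h.fderiv_of_isOpen (m := n) hV (by norm_cast)
  exact ((h1.clm_apply contDiffOn_const).add
    (contDiffOn_const.mul (h1.clm_apply contDiffOn_const))).div_const 2

theorem contDiffOn_wD_iter (hV : IsOpen V) (i : ℕ) : ∀ {f : ℂ → ℂ} {n : ℕ},
    ContDiffOn ℝ (n+i : ℕ) f V → ContDiffOn ℝ n (wD^[i] f) V := by
  induction i with
  | zero => intro f n h; exact h
  | succ i ih => intro f n h; exact ih (contDiffOn_wD hV h)

theorem contDiffOn_wDbar_iter (hV : IsOpen V) (i : ℕ) : ∀ {f : ℂ → ℂ} {n : ℕ},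
    ContDiffOn ℝ (n+i : ℕ) f V → ContDiffOn ℝ n (wDbar^[i] f) V := by
  induction i with
  | zero => intro f n h; exact h
  | succ i ih => intro f n h; exact ih (contDiffOn_wDbar hV h)

theorem contDiffOn_wDij (hV : IsOpen V) {i j n : ℕ} (h : ContDiffOn ℝ (n+i+j : ℕ) f V) :
    ContDiffOn ℝ n (wDij i j f) V :=
  contDiffOn_wD_iter hV i (contDiffOn_wDbar_iter hV j h)

theorem diffAt_of_contDiffOn (hV : IsOpen V) {n : ℕ} (h : ContDiffOn ℝ (n+1 : ℕ) f V) {z : ℂ}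
    (hz : z ∈ V) : DifferentiableAt ℝ f z :=
  (h.contDiffAt (hV.mem_nhds hz)).differentiableAt (by norm_cast)

theorem contDiffOn_succ_of_wirt (hV : IsOpen V) {n : ℕ} (hd : ∀ z ∈ V, DifferentiableAt ℝ f z)
    (h1 : ContDiffOn ℝ n (wD f) V) (h2 : ContDiffOn ℝ n (wDbar f) V) :
    ContDiffOn ℝ (n+1 : ℕ) f V := by
  have := (contDiffOn_succ_iff_fderiv_of_isOpen (𝕜 := ℝ) (f := f) (n := n) hV).2 ⟨fun z hz => (hd z hz).differentiableWithinAt,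
    by intro h; simp at h, ?_⟩
  · exact_mod_cast this
  · have : ContDiffOn ℝ n (fun z => cL (wD f z) (wDbar f z)) V := by
      unfold cL
      exact (h1.smul contDiffOn_const).add (h2.smul contDiffOn_const)
    refine this.congr fun z hz => (hasFDerivAt_wirt (hd z hz)).fderiv

theorem wD_wDbar_comm (hV : IsOpen V) (h : ContDiffOn ℝ 2 f V) {z : ℂ} (hz : z ∈ V) :
    wDbar (wD f) z = wD (wDbar f) z := by
  have hc := h.contDiffAt (hV.mem_nhds hz)
  have hs : IsSymmSndFDerivAt ℝ f z := hc.isSymmSndFDerivAt (by simp)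
  have hd : DifferentiableAt ℝ (fderiv ℝ f) z :=
    (hc.fderiv_right (m := 1) (by norm_num)).differentiableAt (by norm_num)
  have e (v w : ℂ) : fderiv ℝ (fun x => fderiv ℝ f x v) z w = fderiv ℝ (fderiv ℝ f) z w v := by
    rw [fderiv_clm_apply hd (differentiableAt_const v)]
    simp
  have d (v : ℂ) : DifferentiableAt ℝ (fun x => fderiv ℝ f x v) z :=
    hd.clm_apply (differentiableAt_const v)
  have e1 (w : ℂ) : fderiv ℝ (wD f) z w =
      (fderiv ℝ (fderiv ℝ f) z w 1 - I * fderiv ℝ (fderiv ℝ f) z w I)/2 := by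
    have : HasFDerivAt (wD f) ((2:ℂ)⁻¹ • (fderiv ℝ (fun x => fderiv ℝ f x 1) z -
      I • fderiv ℝ (fun x => fderiv ℝ f x I) z)) z := by
      have := (((d 1).hasFDerivAt.sub ((d I).hasFDerivAt.const_mul I)).const_mul (2:ℂ)⁻¹)
      refine this.congr_of_eventuallyEq (Filter.Eventually.of_forall fun x => ?_)
      simp only [wD, Pi.sub_apply]; ring
    rw [this.fderiv]
    simp [e]; ring
  have e2 (w : ℂ) : fderiv ℝ (wDbar f) z w =
      (fderiv ℝ (fderiv ℝ f) z w 1 + I * fderiv ℝ (fderiv ℝ f) z w I)/2 := by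
    have : HasFDerivAt (wDbar f) ((2:ℂ)⁻¹ • (fderiv ℝ (fun x => fderiv ℝ f x 1) z +
      I • fderiv ℝ (fun x => fderiv ℝ f x I) z)) z := by
      have := (((d 1).hasFDerivAt.add ((d I).hasFDerivAt.const_mul I)).const_mul (2:ℂ)⁻¹)
      refine this.congr_of_eventuallyEq (Filter.Eventually.of_forall fun x => ?_)
      simp only [wDbar, Pi.add_apply]; ring
    rw [this.fderiv]
    simp [e]; ring
  unfold wD wDbar at *
  rw [e1, e1, e2, e2, hs I 1]
  ring

theorem wDbar_wD_iter (hV : IsOpen V) (i : ℕ) : ∀ {f : ℂ → ℂ}, ContDiffOn ℝ (i+1 : ℕ) f V →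
    Set.EqOn (wDbar (wD^[i] f)) (wD^[i] (wDbar f)) V := by
  induction i with
  | zero => intro f _ z _; rfl
  | succ i ih =>
    intro f h z hz
    rw [Function.iterate_succ_apply, Function.iterate_succ_apply]
    rw [ih (f := wD f) (contDiffOn_wD hV h) hz]
    refine wD_iter_eqOn hV i (fun w hw => ?_) hz
    exact wD_wDbar_comm hV (h.of_le (by norm_cast; omega)) hw

theorem wDbar_wDij (hV : IsOpen V) {i j : ℕ} (h : ContDiffOn ℝ (i+j+1 : ℕ) f V) :
    Set.EqOn (wDbar (wDij i j f)) (wDij i (j+1) f) V := by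
  intro z hz
  unfold wDij
  rw [wDbar_wD_iter hV i (contDiffOn_wDbar_iter hV j (by convert h using 2; norm_cast; omega)) hz,
    Function.iterate_succ_apply']

theorem wD_wDij (i j : ℕ) (f : ℂ → ℂ) : wD (wDij i j f) = wDij (i+1) j f := by
  unfold wDij; rw [Function.iterate_succ_apply']

theorem wD_wDij' (i j : ℕ) (f : ℂ → ℂ) : wDij i (j+1) f = wDij i j (wDbar f) := by
  unfold wDij; rw [Function.iterate_succ_apply]

/-- conjugation swaps the iterated derivatives -/
theorem wD_iter_conj (hV : IsOpen V) (i : ℕ) : ∀ {f : ℂ → ℂ}, ContDiffOn ℝ (i:ℕ) f V →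
    Set.EqOn (wD^[i] (fun w => (starRingEnd ℂ) (f w)))
      (fun w => (starRingEnd ℂ) (wDbar^[i] f w)) V := by
  induction i with
  | zero => intro f _ z _; rfl
  | succ i ih =>
    intro f h z hz
    rw [Function.iterate_succ_apply, Function.iterate_succ_apply]
    rw [← ih (f := wDbar f) (contDiffOn_wDbar hV h) hz]
    exact wD_iter_eqOn hV i (fun w hw => wD_of_hasFDerivAt (wirt_conj (diffAt_of_contDiffOn hV h hw))) hz

theorem wDbar_iter_conj (hV : IsOpen V) (i : ℕ) : ∀ {f : ℂ → ℂ}, ContDiffOn ℝ (i:ℕ) f V →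
    Set.EqOn (wDbar^[i] (fun w => (starRingEnd ℂ) (f w)))
      (fun w => (starRingEnd ℂ) (wD^[i] f w)) V := by
  induction i with
  | zero => intro f _ z _; rfl
  | succ i ih =>
    intro f h z hz
    rw [Function.iterate_succ_apply, Function.iterate_succ_apply]
    rw [← ih (f := wD f) (contDiffOn_wD hV h) hz]
    exact wDbar_iter_eqOn hV i
      (fun w hw => wDbar_of_hasFDerivAt (wirt_conj (diffAt_of_contDiffOn hV h hw))) hz

theorem wD_iter_wDbar_iter (hV : IsOpen V) (i j : ℕ) : ∀ {f : ℂ → ℂ}, ContDiffOn ℝ (i+j : ℕ) f V →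
    Set.EqOn (wDbar^[i] (wD^[j] f)) (wD^[j] (wDbar^[i] f)) V := by
  induction i with
  | zero => intro f _ z _; rfl
  | succ i ih =>
    intro f h z hz
    rw [Function.iterate_succ_apply, Function.iterate_succ_apply]
    rw [← ih (f := wDbar f) (contDiffOn_wDbar hV (by convert h using 2; norm_cast; omega)) hz]
    exact wDbar_iter_eqOn hV i
      (wDbar_wD_iter hV j (h.of_le (by norm_cast; omega))) hz

theorem wDij_conj (hV : IsOpen V) {i j : ℕ} (h : ContDiffOn ℝ (i+j : ℕ) f V) :
    Set.EqOn (wDij i j (fun w => (starRingEnd ℂ) (f w)))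
      (fun w => (starRingEnd ℂ) (wDij j i f w)) V := by
  intro z hz
  unfold wDij
  have h1 : Set.EqOn (wDbar^[j] (fun w => (starRingEnd ℂ) (f w)))
      (fun w => (starRingEnd ℂ) (wD^[j] f w)) V :=
    wDbar_iter_conj hV j (h.of_le (by norm_cast; omega))
  rw [wD_iter_eqOn hV i h1 hz, wD_iter_conj hV i (contDiffOn_wD_iter hV j h) hz]
  simp only
  rw [wD_iter_wDbar_iter hV i j h hz]

theorem wD_iter_add (hV : IsOpen V) (i : ℕ) : ∀ {f g : ℂ → ℂ}, ContDiffOn ℝ (i:ℕ) f V →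
    ContDiffOn ℝ (i:ℕ) g V →
    Set.EqOn (wD^[i] (fun w => f w + g w)) (fun w => wD^[i] f w + wD^[i] g w) V := by
  induction i with
  | zero => intro f g _ _ z _; rfl
  | succ i ih =>
    intro f g hf hg z hz
    simp only [Function.iterate_succ_apply]
    refine Eq.trans ?_ (ih (contDiffOn_wD hV hf) (contDiffOn_wD hV hg) hz)
    exact wD_iter_eqOn hV i (fun w hw =>
      wD_add (diffAt_of_contDiffOn hV hf hw) (diffAt_of_contDiffOn hV hg hw)) hz

theorem wDbar_iter_add (hV : IsOpen V) (i : ℕ) : ∀ {f g : ℂ → ℂ}, ContDiffOn ℝ (i:ℕ) f V →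
    ContDiffOn ℝ (i:ℕ) g V →
    Set.EqOn (wDbar^[i] (fun w => f w + g w)) (fun w => wDbar^[i] f w + wDbar^[i] g w) V := by
  induction i with
  | zero => intro f g _ _ z _; rfl
  | succ i ih =>
    intro f g hf hg z hz
    simp only [Function.iterate_succ_apply]
    refine Eq.trans ?_ (ih (contDiffOn_wDbar hV hf) (contDiffOn_wDbar hV hg) hz)
    exact wDbar_iter_eqOn hV i (fun w hw =>
      wDbar_add (diffAt_of_contDiffOn hV hf hw) (diffAt_of_contDiffOn hV hg hw)) hz

theorem wDij_add (hV : IsOpen V) {i j : ℕ} (hf : ContDiffOn ℝ (i+j:ℕ) f V)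
    (hg : ContDiffOn ℝ (i+j:ℕ) g V) :
    Set.EqOn (wDij i j (fun w => f w + g w)) (fun w => wDij i j f w + wDij i j g w) V := by
  intro z hz
  unfold wDij
  rw [wD_iter_eqOn hV i (wDbar_iter_add hV j (hf.of_le (by norm_cast; omega))
    (hg.of_le (by norm_cast; omega))) hz]
  rw [wD_iter_add hV i (contDiffOn_wDbar_iter hV j hf) (contDiffOn_wDbar_iter hV j hg) hz]

theorem wD_iter_cmul (hV : IsOpen V) (c : ℂ) (i : ℕ) : ∀ {f : ℂ → ℂ}, ContDiffOn ℝ (i:ℕ) f V →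
    Set.EqOn (wD^[i] (fun w => c * f w)) (fun w => c * wD^[i] f w) V := by
  induction i with
  | zero => intro f _ z _; rfl
  | succ i ih =>
    intro f hf z hz
    simp only [Function.iterate_succ_apply]
    refine Eq.trans ?_ (ih (contDiffOn_wD hV hf) hz)
    exact wD_iter_eqOn hV i (fun w hw => wD_cmul c (diffAt_of_contDiffOn hV hf hw)) hz

theorem wDbar_iter_cmul (hV : IsOpen V) (c : ℂ) (i : ℕ) : ∀ {f : ℂ → ℂ}, ContDiffOn ℝ (i:ℕ) f V →
    Set.EqOn (wDbar^[i] (fun w => c * f w)) (fun w => c * wDbar^[i] f w) V := by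
  induction i with
  | zero => intro f _ z _; rfl
  | succ i ih =>
    intro f hf z hz
    simp only [Function.iterate_succ_apply]
    refine Eq.trans ?_ (ih (contDiffOn_wDbar hV hf) hz)
    exact wDbar_iter_eqOn hV i (fun w hw => wDbar_cmul c (diffAt_of_contDiffOn hV hf hw)) hz

theorem wDij_cmul (hV : IsOpen V) (c : ℂ) {i j : ℕ} (hf : ContDiffOn ℝ (i+j:ℕ) f V) :
    Set.EqOn (wDij i j (fun w => c * f w)) (fun w => c * wDij i j f w) V := by
  intro z hz
  unfold wDij
  rw [wD_iter_eqOn hV i (wDbar_iter_cmul hV c j (hf.of_le (by norm_cast; omega))) hz]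
  rw [wD_iter_cmul hV c i (contDiffOn_wDbar_iter hV j hf) hz]

theorem wDij_sub (hV : IsOpen V) {i j : ℕ} (hf : ContDiffOn ℝ (i+j:ℕ) f V)
    (hg : ContDiffOn ℝ (i+j:ℕ) g V) :
    Set.EqOn (wDij i j (fun w => f w - g w)) (fun w => wDij i j f w - wDij i j g w) V := by
  intro z hz
  have h1 := wDij_add hV hf ((contDiffOn_const (c := (-1:ℂ))).mul hg) hz
  have h2 := wDij_cmul hV (-1) hg hz
  simp only at h1 h2
  rw [h2] at h1
  convert h1 using 1
  · congr 1; ext w; ring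
  · ring

end smooth

/-- Affine rescaling -/
theorem wD_affine (f : ℂ → ℂ) (a : ℝ) (b z : ℂ) :
    wD (fun w => f (a * w + b)) z = a * wD f (a * z + b) := by
  have : fderiv ℝ (fun w : ℂ => f (a * w + b)) z = a • fderiv ℝ f (a * z + b) := by
    have h1 := fderiv_comp_smul (𝕜 := ℝ) (f := fun w => f (w + b)) (x := z) a
    simp only [real_smul] at h1
    rw [h1, fderiv_comp_add_right]
  simp only [wD, this, ContinuousLinearMap.smul_apply, real_smul]; ring

theorem wDbar_affine (f : ℂ → ℂ) (a : ℝ) (b z : ℂ) :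
    wDbar (fun w => f (a * w + b)) z = a * wDbar f (a * z + b) := by
  have : fderiv ℝ (fun w : ℂ => f (a * w + b)) z = a • fderiv ℝ f (a * z + b) := by
    have h1 := fderiv_comp_smul (𝕜 := ℝ) (f := fun w => f (w + b)) (x := z) a
    simp only [real_smul] at h1
    rw [h1, fderiv_comp_add_right]
  simp only [wDbar, this, ContinuousLinearMap.smul_apply, real_smul]; ring


theorem near_aux (s δ : ℝ) (hs : -2 < s) (hδ : 0 < δ) :
    Integrable (fun w : ℂ => (Set.Iio δ).indicator (fun y : ℝ => y ^ s) ‖w‖) ∧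
    ∫ w : ℂ, (Set.Iio δ).indicator (fun y : ℝ => y ^ s) ‖w‖ = 2 * Real.pi / (s+2) * δ ^ (s+2) := by
  have e : ∀ y ∈ Set.Ioi (0:ℝ), y ^ (Module.finrank ℝ ℂ - 1) • (Set.Iio δ).indicator (fun y : ℝ => y ^ s) y
      = (Set.Iio δ).indicator (fun y : ℝ => y ^ (s+1)) y := by
    intro y hy
    by_cases h : y ∈ Set.Iio δ
    · simp only [Set.indicator_of_mem h, finrank_real_complex, smul_eq_mul]
      rw [Real.rpow_add_one (ne_of_gt hy)]; simp; ring
    · simp [Set.indicator_of_notMem h]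
  have hinteg : IntegrableOn (fun y : ℝ => y ^ (s+1)) (Set.Ioc 0 δ) := by
    rw [← intervalIntegrable_iff_integrableOn_Ioc_of_le hδ.le]
    exact intervalIntegral.intervalIntegrable_rpow' (by linarith)
  constructor
  · rw [integrable_fun_norm_addHaar, integrableOn_congr_fun e measurableSet_Ioi,
      IntegrableOn, integrable_indicator_iff measurableSet_Iio, IntegrableOn,
      Measure.restrict_restrict measurableSet_Iio]
    exact hinteg.mono_set (fun y hy => ⟨hy.2, le_of_lt hy.1⟩)
  · rw [integral_fun_norm_addHaar, setIntegral_congr_fun measurableSet_Ioi e,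
      setIntegral_indicator measurableSet_Iio]
    have : Set.Ioi (0:ℝ) ∩ Set.Iio δ = Set.Ioo 0 δ := rfl
    rw [this, ← integral_Ioc_eq_integral_Ioo, ← intervalIntegral.integral_of_le hδ.le,
      integral_rpow (Or.inl (by linarith)), Real.zero_rpow (by linarith)]
    simp [Measure.real, Complex.volume_ball, finrank_real_complex]
    rw [show s + 1 + 1 = s + 2 by ring]
    ring

theorem far_aux (s δ : ℝ) (hs : s < -2) (hδ : 0 < δ) :
    Integrable (fun w : ℂ => (Set.Ici δ).indicator (fun y : ℝ => y ^ s) ‖w‖) ∧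
    ∫ w : ℂ, (Set.Ici δ).indicator (fun y : ℝ => y ^ s) ‖w‖ = 2 * Real.pi / (-(s+2)) * δ ^ (s+2) := by
  have e : ∀ y ∈ Set.Ioi (0:ℝ), y ^ (Module.finrank ℝ ℂ - 1) • (Set.Ici δ).indicator (fun y : ℝ => y ^ s) y
      = (Set.Ici δ).indicator (fun y : ℝ => y ^ (s+1)) y := by
    intro y hy
    by_cases h : y ∈ Set.Ici δ
    · simp only [Set.indicator_of_mem h, finrank_real_complex, smul_eq_mul]
      rw [Real.rpow_add_one (ne_of_gt hy)]; simp; ring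
    · simp [Set.indicator_of_notMem h]
  have hinteg : IntegrableOn (fun y : ℝ => y ^ (s+1)) (Set.Ioi δ) :=
    integrableOn_Ioi_rpow_of_lt (by linarith) hδ
  have hI : Set.Ioi (0:ℝ) ∩ Set.Ici δ = Set.Ici δ :=
    Set.inter_eq_right.2 fun y hy => lt_of_lt_of_le hδ hy
  constructor
  · rw [integrable_fun_norm_addHaar, integrableOn_congr_fun e measurableSet_Ioi,
      IntegrableOn, integrable_indicator_iff measurableSet_Ici, IntegrableOn,
      Measure.restrict_restrict measurableSet_Ici, Set.inter_comm, hI]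
    exact (integrableOn_Ici_iff_integrableOn_Ioi).2 hinteg
  · rw [integral_fun_norm_addHaar, setIntegral_congr_fun measurableSet_Ioi e,
      setIntegral_indicator measurableSet_Ici, hI, integral_Ici_eq_integral_Ioi,
      integral_Ioi_rpow_of_lt (by linarith) hδ]
    simp [Measure.real, Complex.volume_ball, finrank_real_complex]
    rw [show s + 1 + 1 = s + 2 by ring]
    have : s + 2 ≠ 0 := by linarith
    have : -2 + -s ≠ 0 := by intro h; linarith
    field_simp
    ring

/-- `‖ζ - z‖^s` on the ball of radius `δ` around `z` -/
noncomputable def nearF (s δ : ℝ) (z ζ : ℂ) : ℝ := (ball z δ).indicator (fun ζ => ‖ζ - z‖ ^ s) ζ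
/-- `‖ζ - z‖^s` off the ball of radius `δ` around `z` -/
noncomputable def farF (s δ : ℝ) (z ζ : ℂ) : ℝ := (ball z δ)ᶜ.indicator (fun ζ => ‖ζ - z‖ ^ s) ζ

theorem nearF_eq (s δ : ℝ) (z ζ : ℂ) :
    nearF s δ z ζ = (Set.Iio δ).indicator (fun y : ℝ => y ^ s) ‖ζ - z‖ := by
  simp [nearF, Set.indicator, dist_eq_norm]

theorem farF_eq (s δ : ℝ) (z ζ : ℂ) :
    farF s δ z ζ = (Set.Ici δ).indicator (fun y : ℝ => y ^ s) ‖ζ - z‖ := by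
  simp [farF, Set.indicator, dist_eq_norm]

theorem nearF_of_lt {s δ : ℝ} {z ζ : ℂ} (h : ‖ζ - z‖ < δ) : nearF s δ z ζ = ‖ζ - z‖ ^ s := by
  rw [nearF_eq, Set.indicator_of_mem]; exact h
theorem farF_of_le {s δ : ℝ} {z ζ : ℂ} (h : δ ≤ ‖ζ - z‖) : farF s δ z ζ = ‖ζ - z‖ ^ s := by
  rw [farF_eq, Set.indicator_of_mem]; exact h
theorem nearF_nonneg (s δ : ℝ) (z ζ : ℂ) : 0 ≤ nearF s δ z ζ :=
  Set.indicator_nonneg (fun _ _ => by positivity) _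
theorem farF_nonneg (s δ : ℝ) (z ζ : ℂ) : 0 ≤ farF s δ z ζ :=
  Set.indicator_nonneg (fun _ _ => by positivity) _

theorem nearF_int {s δ : ℝ} (hs : -2 < s) (hδ : 0 < δ) (z : ℂ) :
    Integrable (nearF s δ z) ∧ ∫ ζ, nearF s δ z ζ = 2 * Real.pi / (s+2) * δ ^ (s+2) := by
  have h := near_aux s δ hs hδ
  have e : nearF s δ z = fun ζ => (fun w : ℂ => (Set.Iio δ).indicator (fun y : ℝ => y ^ s) ‖w‖) (ζ - z) := by
    ext ζ; exact nearF_eq _ _ _ _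
  rw [e]
  exact ⟨h.1.comp_sub_right z, by rw [integral_sub_right_eq_self, h.2]⟩

theorem farF_int {s δ : ℝ} (hs : s < -2) (hδ : 0 < δ) (z : ℂ) :
    Integrable (farF s δ z) ∧ ∫ ζ, farF s δ z ζ = 2 * Real.pi / (-(s+2)) * δ ^ (s+2) := by
  have h := far_aux s δ hs hδ
  have e : farF s δ z = fun ζ => (fun w : ℂ => (Set.Ici δ).indicator (fun y : ℝ => y ^ s) ‖w‖) (ζ - z) := by
    ext ζ; exact farF_eq _ _ _ _
  rw [e]
  exact ⟨h.1.comp_sub_right z, by rw [integral_sub_right_eq_self, h.2]⟩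

/-- Bounded, measurable, boundedly supported densities. -/
def Adm (F : ℂ → ℂ) : Prop :=
  AEStronglyMeasurable F volume ∧ (∃ M : ℝ, 0 ≤ M ∧ ∀ ζ, ‖F ζ‖ ≤ M) ∧
    ∃ ρ : ℝ, 0 < ρ ∧ ∀ ζ, ρ ≤ ‖ζ‖ → F ζ = 0

/-- The Cauchy potential and its formal derivatives. -/
noncomputable def Kn (n : ℕ) (F : ℂ → ℂ) (z : ℂ) : ℂ :=
  -(Real.pi : ℂ)⁻¹ * ((n.factorial : ℂ) * ∫ ζ, F ζ / (ζ - z) ^ (n+1))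

theorem Adm.add {F G : ℂ → ℂ} (hF : Adm F) (hG : Adm G) : Adm (fun ζ => F ζ + G ζ) := by
  obtain ⟨hm, ⟨M, hM0, hM⟩, ρ, hρ, hs⟩ := hF
  obtain ⟨hm', ⟨M', hM0', hM'⟩, ρ', hρ', hs'⟩ := hG
  refine ⟨hm.add hm', ⟨M + M', by positivity, fun ζ => ?_⟩, max ρ ρ', by positivity, fun ζ h => ?_⟩
  · exact (norm_add_le _ _).trans (add_le_add (hM ζ) (hM' ζ))
  · simp [hs ζ ((le_max_left _ _).trans h), hs' ζ ((le_max_right _ _).trans h)]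

theorem Adm.cmul {F : ℂ → ℂ} (hF : Adm F) (c : ℂ) : Adm (fun ζ => c * F ζ) := by
  obtain ⟨hm, ⟨M, hM0, hM⟩, ρ, hρ, hs⟩ := hF
  refine ⟨hm.const_mul c, ⟨‖c‖ * M, by positivity, fun ζ => ?_⟩, ρ, hρ, fun ζ h => by simp [hs ζ h]⟩
  rw [norm_mul]; gcongr; exact hM ζ

theorem Adm.sub {F G : ℂ → ℂ} (hF : Adm F) (hG : Adm G) : Adm (fun ζ => F ζ - G ζ) := by
  have := hF.add (hG.cmul (-1))
  convert this using 2; ring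

theorem Adm.int {F : ℂ → ℂ} (hF : Adm F) (z : ℂ) : Integrable (fun ζ => F ζ / (ζ - z)) := by
  obtain ⟨hm, ⟨M, hM0, hM⟩, ρ, hρ, hs⟩ := hF
  have hd : 0 < ρ + ‖z‖ + 1 := by positivity
  refine (((nearF_int (s := -1) (by norm_num) hd z).1).const_mul M).mono' ?_ ?_
  · simp_rw [div_eq_mul_inv]
    exact hm.mul (Measurable.aestronglyMeasurable (by fun_prop))
  · refine Filter.Eventually.of_forall fun ζ => ?_
    by_cases h : ρ ≤ ‖ζ‖
    · rw [hs ζ h]; simp; exact mul_nonneg hM0 (nearF_nonneg _ _ _ _)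
    · push Not at h
      rw [nearF_of_lt (by linarith [norm_sub_le ζ z]), Real.rpow_neg_one, norm_div, div_eq_mul_inv]
      gcongr; exact hM ζ

theorem Kn_zero (F : ℂ → ℂ) (z : ℂ) : Kn 0 F z = -(Real.pi : ℂ)⁻¹ * ∫ ζ, F ζ / (ζ - z) := by
  simp [Kn]

theorem Tcg_eq (R : ℝ) (g : ℂ → ℂ) (z : ℂ) :
    Tcg R g z = Kn 0 ((closedBall (0:ℂ) R).indicator g) z := by
  rw [Kn_zero, Tcg, ← integral_indicator measurableSet_closedBall]
  congr 2; ext ζ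
  by_cases h : ζ ∈ closedBall (0:ℂ) R <;> simp [h]

theorem Kn0_add {F G : ℂ → ℂ} (hF : Adm F) (hG : Adm G) (z : ℂ) :
    Kn 0 (fun ζ => F ζ + G ζ) z = Kn 0 F z + Kn 0 G z := by
  simp only [Kn_zero, add_div]
  rw [integral_add (hF.int z) (hG.int z)]; ring

theorem Kn_cmul (n : ℕ) (F : ℂ → ℂ) (c z : ℂ) :
    Kn n (fun ζ => c * F ζ) z = c * Kn n F z := by
  simp only [Kn, mul_div_assoc]
  rw [integral_const_mul]; ring

theorem Kn0_sub {F G : ℂ → ℂ} (hF : Adm F) (hG : Adm G) (z : ℂ) :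
    Kn 0 (fun ζ => F ζ - G ζ) z = Kn 0 F z - Kn 0 G z := by
  have := Kn0_add hF (hG.cmul (-1)) z
  rw [Kn_cmul] at this
  convert this using 1
  · congr 1; ext ζ; ring
  · ring

/-- differentiation away from the support -/
theorem Kn_hasDerivAt {F : ℂ → ℂ} (hF : Adm F) {z : ℂ} {δ : ℝ} (h0 : ∀ ζ ∈ ball z δ, F ζ = 0)
    (n : ℕ) {w : ℂ} (hw : w ∈ ball z δ) : HasDerivAt (Kn n F) (Kn (n+1) F w) w := by
  obtain ⟨hm, ⟨M, hM0, hM⟩, ρ, hρ, hs⟩ := hF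
  obtain ⟨η, hη, hηb⟩ : ∃ η > 0, ball w (2*η) ⊆ ball z δ := by
    obtain ⟨η, hη, h⟩ := Metric.isOpen_iff.1 isOpen_ball w hw
    exact ⟨η/2, by positivity, by convert h using 2; ring⟩
  have key : ∀ x ∈ ball w η, ∀ ζ, F ζ ≠ 0 → η ≤ ‖ζ - x‖ := by
    intro x hx ζ hζ
    by_contra hc
    push Not at hc
    apply hζ
    apply h0; apply hηb
    rw [mem_ball, dist_eq_norm] at hx ⊢
    have : ζ - w = (ζ - x) + (x - w) := by ring
    rw [this]
    linarith [norm_add_le (ζ - x) (x - w)]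
  have hbd : ∀ m : ℕ, ∀ x ∈ ball w η, ∀ ζ, ‖F ζ / (ζ - x) ^ m‖ ≤
      (ball (0:ℂ) ρ).indicator (fun _ => M / η ^ m) ζ := by
    intro m x hx ζ
    by_cases hF : F ζ = 0
    · simp only [hF, zero_div, norm_zero]
      exact Set.indicator_nonneg (fun _ _ => by positivity) _
    · have hζ : ζ ∈ ball (0:ℂ) ρ := by
        by_contra hc
        exact hF (hs ζ (by simpa using hc))
      rw [Set.indicator_of_mem hζ, norm_div, norm_pow]
      gcongr
      · exact hM ζ
      · exact key x hx ζ hF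
  have hbi : ∀ m : ℕ, Integrable ((ball (0:ℂ) ρ).indicator (fun _ : ℂ => M / η ^ m)) := by
    intro m
    rw [integrable_indicator_iff measurableSet_ball]
    exact integrableOn_const (by simp [Complex.volume_ball, ENNReal.mul_eq_top])
  have hmeas : ∀ (m : ℕ) (x : ℂ), AEStronglyMeasurable (fun ζ => F ζ / (ζ - x) ^ m) volume :=
    fun m x => by
      simp_rw [div_eq_mul_inv]
      exact hm.mul (Measurable.aestronglyMeasurable (by fun_prop))
  have := hasDerivAt_integral_of_dominated_loc_of_deriv_le (𝕜 := ℂ) (μ := volume)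
    (F := fun x ζ => F ζ / (ζ - x) ^ (n+1)) (F' := fun x ζ => (n+1 : ℕ) * (F ζ / (ζ - x) ^ (n+2)))
    (x₀ := w) (s := ball w η) (bound := fun ζ => (n+1 : ℕ) * (ball (0:ℂ) ρ).indicator (fun _ => M / η ^ (n+2)) ζ)
    (ball_mem_nhds w hη) (Filter.Eventually.of_forall fun x => hmeas _ x)
    ((hbi (n+1)).mono' (hmeas _ _) (Filter.Eventually.of_forall fun ζ => hbd _ w (mem_ball_self hη) ζ))
    ((hmeas _ _).const_mul _)
    (Filter.Eventually.of_forall fun ζ x hx => by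
      rw [norm_mul, Complex.norm_natCast]; gcongr; exact hbd _ x hx ζ)
    ((hbi _).const_mul _)
    (Filter.Eventually.of_forall fun ζ x hx => by
      by_cases hF : F ζ = 0
      · simp only [hF, zero_div, mul_zero]; exact hasDerivAt_const _ _
      · have hne : ζ - x ≠ 0 := by
          intro h; have := key x hx ζ hF; rw [h] at this; simp at this; linarith
        have h1 : HasDerivAt (fun x => (ζ - x) ^ (n+1)) (((n+1 : ℕ):ℂ) * (ζ - x) ^ n * (-1)) x :=
          ((hasDerivAt_id x).const_sub ζ).pow (n+1)
        have h2 := (hasDerivAt_const x (F ζ)).div h1 (pow_ne_zero _ hne)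
        refine h2.congr_deriv ?_
        field_simp
        push_cast
        ring)
  have h3 := (this.2.const_mul ((n.factorial : ℂ))).const_mul (-(Real.pi : ℂ)⁻¹)
  refine HasDerivAt.congr_deriv (f := Kn n F) h3 ?_
  simp only [Kn]
  rw [integral_const_mul, Nat.factorial_succ]
  push_cast; ring

theorem Kn_iter {F : ℂ → ℂ} (hF : Adm F) {z : ℂ} {δ : ℝ} (h0 : ∀ ζ ∈ ball z δ, F ζ = 0)
    (i : ℕ) : ∀ n : ℕ, Set.EqOn (wD^[i] (Kn n F)) (Kn (n+i) F) (ball z δ) := by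
  induction i with
  | zero => intro n w _; rfl
  | succ i ih =>
    intro n w hw
    rw [Function.iterate_succ_apply, wD_iter_eqOn isOpen_ball i
      (fun x hx => wD_of_hasDerivAt (Kn_hasDerivAt hF h0 n hx)) hw, ih (n+1) hw]
    congr 1; ring

theorem Kn_contDiffOn {F : ℂ → ℂ} (hF : Adm F) {z : ℂ} {δ : ℝ} (h0 : ∀ ζ ∈ ball z δ, F ζ = 0)
    (n : ℕ) (m : ℕ) : ContDiffOn ℝ m (Kn n F) (ball z δ) := by
  have : DifferentiableOn ℂ (Kn n F) (ball z δ) :=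
    fun w hw => (Kn_hasDerivAt hF h0 n hw).differentiableAt.differentiableWithinAt
  exact ((this.contDiffOn (n := m) isOpen_ball)).restrict_scalars ℝ


theorem integral_polar {G : ℂ → ℂ} (hm : Measurable G) (hG : Integrable G) :
    ∫ ζ, G ζ = ∫ r in Set.Ioi (0:ℝ), ((2 * Real.pi * r : ℝ) : ℂ) * Real.circleAverage G 0 r := by
  have hT : polarCoord.target = Set.Ioi (0:ℝ) ×ˢ Set.Ioo (-Real.pi) Real.pi := rfl
  have hcont : Continuous (fun p : ℝ × ℝ => Complex.polarCoord.symm p) := by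
    simp only [Complex.polarCoord_symm_apply]; fun_prop
  have hI : IntegrableOn (fun p : ℝ × ℝ => p.1 • G (Complex.polarCoord.symm p)) polarCoord.target := by
    refine ⟨?_, ?_⟩
    · exact (Measurable.aestronglyMeasurable
        (measurable_fst.smul (hm.comp hcont.measurable)))
    · have h2 := hG.2
      rw [hasFiniteIntegral_iff_enorm, ← Complex.lintegral_comp_polarCoord_symm] at h2
      rw [hasFiniteIntegral_iff_enorm]
      refine lt_of_eq_of_lt ?_ h2
      refine setLIntegral_congr_fun polarCoord.open_target.measurableSet ?_
      intro p hp
      have hp1 : 0 < p.1 := hp.1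
      simp only [enorm_smul, smul_eq_mul]
      congr 1
      rw [Real.enorm_of_nonneg hp1.le]
  rw [← Complex.integral_comp_polarCoord_symm]
  rw [hT] at hI ⊢
  rw [Measure.volume_eq_prod] at hI ⊢
  rw [setIntegral_prod _ hI]
  refine setIntegral_congr_fun measurableSet_Ioi ?_
  intro r hr
  simp only
  rw [integral_smul, Real.circleAverage_eq_integral_add (-Real.pi), ← integral_Ioc_eq_integral_Ioo,
    ← intervalIntegral.integral_of_le (by linarith [Real.pi_pos])]
  have h1 : ∫ θ in (0:ℝ)..2 * Real.pi, G (circleMap 0 r (θ + -Real.pi)) =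
      ∫ θ in (-Real.pi)..Real.pi, G (circleMap 0 r θ) := by
    rw [intervalIntegral.integral_comp_add_right (fun θ => G (circleMap 0 r θ))]
    congr 1 <;> ring
  rw [h1]
  have h2 : ∀ θ : ℝ, Complex.polarCoord.symm (r, θ) = circleMap 0 r θ := by
    intro θ
    rw [Complex.polarCoord_symm_apply, circleMap, Complex.exp_mul_I]; simp
  simp only [h2, Complex.real_smul]
  have := Real.pi_pos.ne'
  push_cast
  field_simp

theorem circleAverage_conj {f : ℂ → ℂ} {c : ℂ} {r : ℝ} (h : CircleIntegrable f c r) :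
    Real.circleAverage (fun ζ => (starRingEnd ℂ) (f ζ)) c r =
      (starRingEnd ℂ) (Real.circleAverage f c r) :=
  ContinuousLinearMap.circleAverage_comp_comm (Complex.conjCLE : ℂ →L[ℝ] ℂ) h

theorem avg_inner (b : ℕ) {z : ℂ} {r : ℝ} (hr : 0 < r) (hz : ‖z‖ < r) :
    Real.circleAverage (fun ζ => (starRingEnd ℂ) ζ ^ b / (ζ - z)) 0 r = 0 := by
  set f : ℂ → ℂ := fun ζ => ζ ^ (b+1) / ((r:ℂ)^2 - (starRingEnd ℂ) z * ζ) with hf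
  have hne : ∀ ζ ∈ closedBall (0:ℂ) r, (r:ℂ)^2 - (starRingEnd ℂ) z * ζ ≠ 0 := by
    intro ζ hζ h
    have h1 : (r:ℂ)^2 = (starRingEnd ℂ) z * ζ := sub_eq_zero.1 h
    have h2 := congrArg norm h1
    rw [norm_mul, RCLike.norm_conj, norm_pow, Complex.norm_real, Real.norm_of_nonneg hr.le] at h2
    have : ‖ζ‖ ≤ r := by simpa using hζ
    nlinarith [norm_nonneg z, norm_nonneg ζ]
  have hd : DifferentiableOn ℂ f (closedBall 0 r) := fun ζ hζ =>
    (DifferentiableAt.fun_div (c := fun ζ : ℂ => ζ ^ (b+1)) (d := fun ζ => (r:ℂ)^2 - (starRingEnd ℂ) z * ζ)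
      (by fun_prop) (by fun_prop) (hne ζ hζ)).differentiableWithinAt
  have hdc : DiffContOnCl ℂ f (ball 0 |r|) := by
    rw [abs_of_pos hr]; exact (hd.mono closure_ball_subset_closedBall).diffContOnCl
  have hci : CircleIntegrable f 0 r :=
    (hd.continuousOn.mono sphere_subset_closedBall).circleIntegrable hr.le
  have h1 := hdc.circleAverage
  have h2 := circleAverage_conj hci
  rw [h1] at h2
  have h3 : (starRingEnd ℂ) (f 0) = 0 := by simp [hf]
  rw [h3] at h2
  refine Eq.trans ?_ h2
  refine Real.circleAverage_congr_sphere ?_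
  intro ζ hζ
  rw [abs_of_pos hr] at hζ
  have hζ' : ‖ζ‖ = r := by simpa using hζ
  have hζ0 : ζ ≠ 0 := by intro h; simp [h] at hζ'; linarith
  have hc0 : (starRingEnd ℂ) ζ ≠ 0 := by simpa using hζ0
  have hm : (r:ℂ)^2 = ζ * (starRingEnd ℂ) ζ := by
    rw [Complex.mul_conj, Complex.normSq_eq_norm_sq, hζ']; push_cast; ring
  have hz0 : ζ - z ≠ 0 := by
    intro h; rw [sub_eq_zero.1 h] at hζ'; linarith
  simp only [hf, map_div₀, map_pow, map_sub, map_mul, Complex.conj_conj, Complex.conj_ofReal]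
  rw [hm, ← sub_mul, pow_succ]
  field_simp

theorem avg_outer (b : ℕ) {z : ℂ} {r : ℝ} (hr : 0 < r) (hz : r < ‖z‖) :
    Real.circleAverage (fun ζ => (starRingEnd ℂ) ζ ^ b / (ζ - z)) 0 r = - (r:ℂ)^(2*b) / z^(b+1) := by
  have hz0 : z ≠ 0 := by intro h; simp [h] at hz; linarith
  have hzc : (starRingEnd ℂ) z ≠ 0 := by simpa using hz0
  set w : ℂ := (r:ℂ)^2 / (starRingEnd ℂ) z with hw
  set f : ℂ → ℂ := fun ζ => - ζ ^ b / (starRingEnd ℂ) z with hf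
  have hwb : w ∈ ball (0:ℂ) |r| := by
    rw [abs_of_pos hr, mem_ball_zero_iff, hw, norm_div, RCLike.norm_conj, norm_pow, Complex.norm_real,
      Real.norm_of_nonneg hr.le, div_lt_iff₀ (by linarith)]
    nlinarith
  have hdc : DiffContOnCl ℂ f (ball 0 |r|) := by
    apply Differentiable.diffContOnCl; fun_prop
  have h1 := hdc.circleAverage_smul_div hwb
  have hwb' : ‖w‖ < r := by simpa [abs_of_pos hr] using hwb
  have hci : CircleIntegrable (fun ζ => ((ζ - 0) / (ζ - w)) • f ζ) 0 r := by
    apply ContinuousOn.circleIntegrable hr.le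
    refine ContinuousOn.fun_smul ?_ ?_
    · apply ContinuousOn.div (by fun_prop) (by fun_prop)
      intro ζ hζ h
      have : ‖ζ‖ = r := by simpa using hζ
      rw [sub_eq_zero.1 h] at this; linarith
    · fun_prop
  have h2 := circleAverage_conj hci
  rw [h1] at h2
  have h3 : (starRingEnd ℂ) (f w) = - (r:ℂ)^(2*b) / z^(b+1) := by
    simp only [hf, hw, map_div₀, map_neg, map_pow, Complex.conj_conj, Complex.conj_ofReal]
    rw [div_pow, ← pow_mul, pow_succ]; field_simp
  rw [h3] at h2
  refine Eq.trans ?_ h2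
  refine Real.circleAverage_congr_sphere ?_
  intro ζ hζ
  rw [abs_of_pos hr] at hζ
  have hζ' : ‖ζ‖ = r := by simpa using hζ
  have hζ0 : ζ ≠ 0 := by intro h; simp [h] at hζ'; linarith
  have hc0 : (starRingEnd ℂ) ζ ≠ 0 := by simpa using hζ0
  have hm : (r:ℂ)^2 = ζ * (starRingEnd ℂ) ζ := by
    rw [Complex.mul_conj, Complex.normSq_eq_norm_sq, hζ']; push_cast; ring
  have hz1 : ζ - z ≠ 0 := by
    intro h; rw [sub_eq_zero.1 h] at hζ'; linarith
  have hz2 : z - ζ ≠ 0 := by intro h; apply hz1; linear_combination -h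
  simp only [hf, hw, smul_eq_mul, map_div₀, map_pow, map_sub, map_mul, map_neg, Complex.conj_conj,
    Complex.conj_ofReal, map_zero, sub_zero]
  rw [hm]
  have e : (starRingEnd ℂ) ζ - ζ * (starRingEnd ℂ) ζ / z = (starRingEnd ℂ) ζ * (z - ζ) / z := by
    field_simp
  rw [e]
  field_simp
  ring

theorem Adm_disc (b : ℕ) {ρ : ℝ} (hρ : 0 < ρ) :
    Adm ((ball (0:ℂ) ρ).indicator (fun ζ => (starRingEnd ℂ) ζ ^ b)) := by
  refine ⟨?_, ⟨ρ^b, by positivity, fun ζ => ?_⟩, ρ, hρ, fun ζ h => ?_⟩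
  · apply Measurable.aestronglyMeasurable
    apply Measurable.indicator _ measurableSet_ball
    exact (by fun_prop : Continuous fun ζ : ℂ => (starRingEnd ℂ) ζ ^ b).measurable
  · by_cases h : ζ ∈ ball (0:ℂ) ρ
    · rw [Set.indicator_of_mem h, norm_pow, RCLike.norm_conj]
      gcongr; simp at h; exact h.le
    · rw [Set.indicator_of_notMem h]; simp; positivity
  · exact Set.indicator_of_notMem (by simpa using h) _

theorem Kn_disc (b : ℕ) {ρ : ℝ} (hρ : 0 < ρ) {z : ℂ} (hz : ‖z‖ < ρ) :
    Kn 0 ((ball (0:ℂ) ρ).indicator (fun ζ => (starRingEnd ℂ) ζ ^ b)) z =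
      (starRingEnd ℂ) z ^ (b+1) / (b+1) := by
  rw [Kn_zero, integral_polar _ ((Adm_disc b hρ).int z)]
  · have key : ∀ r ∈ Set.Ioi (0:ℝ), r ≠ ‖z‖ →
        ((2 * Real.pi * r : ℝ) : ℂ) * Real.circleAverage (fun ζ =>
          (ball (0:ℂ) ρ).indicator (fun ζ => (starRingEnd ℂ) ζ ^ b) ζ / (ζ - z)) 0 r =
        (Set.Ioc 0 ‖z‖).indicator (fun r : ℝ => (-2 * Real.pi / z^(b+1)) * (r:ℂ)^(2*b+1)) r := by
      intro r hr hne
      have hr0 : 0 < r := hr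
      by_cases hrρ : r < ρ
      · rw [Real.circleAverage_congr_sphere (f₂ := fun ζ => (starRingEnd ℂ) ζ ^ b / (ζ - z))]
        · rcases lt_or_gt_of_ne hne with h | h
          · rw [avg_outer b hr0 h, Set.indicator_of_mem (Set.mem_Ioc.2 ⟨hr0, h.le⟩)]
            push_cast; ring
          · rw [avg_inner b hr0 h, Set.indicator_of_notMem (by simp [h])]; simp
        · intro ζ hζ
          simp only
          rw [Set.indicator_of_mem]
          rw [abs_of_pos hr0] at hζ
          simp at hζ ⊢; linarith
      · rw [Real.circleAverage_congr_sphere (f₂ := fun ζ => 0)]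
        · rw [Set.indicator_of_notMem (by simp; intro; linarith)]; simp [Real.circleAverage_const]
        · intro ζ hζ
          simp only
          rw [Set.indicator_of_notMem, zero_div]
          rw [abs_of_pos hr0] at hζ
          simp at hζ ⊢; linarith
    rw [setIntegral_congr_ae (g := (Set.Ioc 0 ‖z‖).indicator
      (fun r : ℝ => (-2 * Real.pi / z^(b+1)) * (r:ℂ)^(2*b+1))) measurableSet_Ioi
      (by
        have : ∀ᵐ r : ℝ, r ≠ ‖z‖ := by simp [ae_iff, measure_singleton]
        filter_upwards [this] with r h1 h2
        exact key r h2 h1)]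
    rw [setIntegral_indicator measurableSet_Ioc, Set.inter_eq_right.2 (fun x hx => hx.1),
      ← intervalIntegral.integral_of_le (norm_nonneg z), intervalIntegral.integral_const_mul]
    have : ∫ r in (0:ℝ)..‖z‖, (r:ℂ)^(2*b+1) = (‖z‖:ℂ)^(2*b+2)/(2*b+2) := by
      have := intervalIntegral.integral_ofReal (a := 0) (b := ‖z‖) (μ := volume) (f := fun r : ℝ => r^(2*b+1))
      push_cast at this
      rw [this, integral_pow]
      push_cast; simp; ring
    rw [this]
    by_cases hz0 : z = 0
    · subst hz0; simp
    have hm : ((‖z‖:ℝ):ℂ)^(2*b+2) = z^(b+1) * (starRingEnd ℂ) z^(b+1) := by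
      rw [← mul_pow, Complex.mul_conj, Complex.normSq_eq_norm_sq]; push_cast; ring
    rw [hm]
    have hpi : (Real.pi : ℂ) ≠ 0 := by exact_mod_cast Real.pi_pos.ne'
    have hb : (b:ℂ) + 1 ≠ 0 := by exact_mod_cast Nat.succ_ne_zero b
    have hb' : (2:ℂ)*b + 2 ≠ 0 := by
      intro h; apply hb; linear_combination h/2
    field_simp
  · refine Measurable.div ?_ (by fun_prop)
    apply Measurable.indicator _ measurableSet_ball
    exact (by fun_prop : Continuous fun ζ : ℂ => (starRingEnd ℂ) ζ ^ b).measurable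

/-- potential of the indicator of a disc -/
theorem Kn_ball (c : ℂ) {ρ : ℝ} (hρ : 0 < ρ) {z : ℂ} (hz : z ∈ ball c ρ) :
    Kn 0 ((ball c ρ).indicator (fun _ => 1)) z = (starRingEnd ℂ) (z - c) := by
  have h := Kn_disc 0 hρ (z := z - c) (by simpa [dist_eq_norm] using hz)
  simp only [pow_zero, Nat.cast_zero, zero_add, pow_one, div_one] at h
  rw [← h, Kn_zero, Kn_zero]
  congr 1
  rw [← integral_add_right_eq_self _ c]
  congr 1; ext ζ
  congr 1
  · simp only [Set.indicator, mem_ball, dist_eq_norm, sub_zero, add_sub_cancel_right]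
  · ring

theorem Kn_congr_ae {F G : ℂ → ℂ} (h : F =ᵐ[volume] G) (n : ℕ) (z : ℂ) : Kn n F z = Kn n G z := by
  unfold Kn
  congr 2
  apply integral_congr_ae
  filter_upwards [h] with ζ hζ
  rw [hζ]

theorem indicator_closedBall_ae (f : ℂ → ℂ) (ρ : ℝ) :
    (closedBall (0:ℂ) ρ).indicator f =ᵐ[volume] (ball (0:ℂ) ρ).indicator f := by
  by_cases h : ρ = 0
  · subst h
    have : ∀ᵐ x : ℂ, x ≠ 0 := by simp [ae_iff, measure_singleton]
    filter_upwards [this] with x hx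
    rw [Set.indicator_of_notMem (by simpa using hx), Set.indicator_of_notMem (by simp)]
  have h0 : volume (sphere (0:ℂ) ρ) = 0 := Measure.addHaar_sphere_of_ne_zero _ _ h
  have : ∀ᵐ x : ℂ, x ∉ sphere (0:ℂ) ρ := measure_eq_zero_iff_ae_notMem.1 h0
  filter_upwards [this] with x hx
  by_cases h1 : x ∈ ball (0:ℂ) ρ
  · rw [Set.indicator_of_mem h1, Set.indicator_of_mem (ball_subset_closedBall h1)]
  · rw [Set.indicator_of_notMem h1, Set.indicator_of_notMem]
    intro h2; apply hx; simp at h1 h2 ⊢; linarith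


theorem Adm.meas_div {F : ℂ → ℂ} (hF : Adm F) (m : ℕ) (z : ℂ) :
    AEStronglyMeasurable (fun ζ => F ζ / (ζ - z) ^ m) volume := by
  simp_rw [div_eq_mul_inv]
  exact hF.1.mul (Measurable.aestronglyMeasurable (by fun_prop))

theorem norm_div_sq_le {F : ℂ → ℂ} {z0 : ℂ} {H α : ℝ} (hα : α ∈ Set.Ioo (0:ℝ) 1) (h : ∀ ζ, ‖F ζ‖ ≤ H * ‖ζ - z0‖ ^ α) (ζ : ℂ) :
    ‖F ζ / (ζ - z0) ^ 2‖ ≤ H * ‖ζ - z0‖ ^ (α - 2) := by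
  have hH : 0 ≤ H := by
    have := h (z0 + 1); simp at this; exact (norm_nonneg _).trans this
  rcases eq_or_ne ζ z0 with rfl | hne
  · simp; positivity
  have hp : 0 < ‖ζ - z0‖ := norm_pos_iff.2 (sub_ne_zero.2 hne)
  rw [norm_div, norm_pow, Real.rpow_sub hp, Real.rpow_two, ← mul_div_assoc]
  gcongr
  exact h ζ

theorem Adm.int2 {F : ℂ → ℂ} (hF : Adm F) {z0 : ℂ} {H α : ℝ} (hα : α ∈ Set.Ioo (0:ℝ) 1)
    (h : ∀ ζ, ‖F ζ‖ ≤ H * ‖ζ - z0‖ ^ α) : Integrable (fun ζ => F ζ / (ζ - z0) ^ 2) := by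
  have hH : 0 ≤ H := by
    have := h (z0 + 1); simp at this; exact (norm_nonneg _).trans this
  have hmeas := hF.meas_div 2 z0
  obtain ⟨hm, ⟨M, hM0, hM⟩, ρ, hρ, hs⟩ := hF
  have hd : 0 < ρ + ‖z0‖ + 1 := by positivity
  refine (((nearF_int (s := α - 2) (by linarith [hα.1]) hd z0).1).const_mul H).mono' hmeas ?_
  refine Filter.Eventually.of_forall fun ζ => ?_
  by_cases h' : ρ ≤ ‖ζ‖
  · rw [hs ζ h']; simp; exact mul_nonneg hH (nearF_nonneg _ _ _ _)
  · push Not at h'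
    rw [nearF_of_lt (by linarith [norm_sub_le ζ z0])]
    exact norm_div_sq_le hα h ζ

theorem err_ptwise {α e : ℝ} (hα : α ∈ Set.Ioo (0:ℝ) 1) {z0 z : ℂ} (he : 0 < e) (hd : ‖z - z0‖ = 2 * e)
    (ζ : ℂ) (h0 : ζ ≠ z0) (h1 : ζ ≠ z) :
    ‖ζ - z0‖ ^ (α - 2) / ‖ζ - z‖ ≤ e⁻¹ * nearF (α - 2) e z0 ζ + e ^ (α - 2) * nearF (-1) e z ζ +
      3 * farF (α - 3) e z0 ζ := by
  have hp : 0 < ‖ζ - z0‖ := norm_pos_iff.2 (sub_ne_zero.2 h0)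
  have hp1 : 0 < ‖ζ - z‖ := norm_pos_iff.2 (sub_ne_zero.2 h1)
  have n1 := nearF_nonneg (α - 2) e z0 ζ
  have n2 := nearF_nonneg (-1) e z ζ
  have n3 := farF_nonneg (α - 3) e z0 ζ
  have t1 : ‖z - z0‖ ≤ ‖ζ - z0‖ + ‖ζ - z‖ := by
    have : z - z0 = (ζ - z0) - (ζ - z) := by ring
    rw [this]; exact norm_sub_le _ _
  have t2 : ‖ζ - z0‖ ≤ ‖ζ - z‖ + ‖z - z0‖ := by
    have : ζ - z0 = (ζ - z) + (z - z0) := by ring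
    rw [this]; exact norm_add_le _ _
  have hee : 0 ≤ e ^ (α - 2) := by positivity
  by_cases c1 : ‖ζ - z0‖ < e
  · rw [nearF_of_lt c1] at *
    have : ‖ζ - z0‖ ^ (α - 2) / ‖ζ - z‖ ≤ e⁻¹ * ‖ζ - z0‖ ^ (α - 2) := by
      rw [div_eq_mul_inv, mul_comm]
      gcongr
      linarith
    have := mul_nonneg hee n2
    linarith
  · push Not at c1
    by_cases c2 : ‖ζ - z‖ < e
    · rw [nearF_of_lt c2, Real.rpow_neg_one] at *
      have : ‖ζ - z0‖ ^ (α - 2) / ‖ζ - z‖ ≤ e ^ (α - 2) * ‖ζ - z‖⁻¹ := by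
        rw [div_eq_mul_inv]
        gcongr ?_ * _
        exact Real.rpow_le_rpow_of_nonpos he c1 (by linarith [hα.2])
      have := mul_nonneg (inv_nonneg.2 he.le) n1
      linarith
    · push Not at c2
      rw [farF_of_le c1] at *
      have : ‖ζ - z0‖ ^ (α - 2) / ‖ζ - z‖ ≤ 3 * ‖ζ - z0‖ ^ (α - 3) := by
        rw [show α - 3 = (α - 2) - 1 by ring, Real.rpow_sub_one hp.ne', div_le_iff₀ hp1]
        have : 1 ≤ 3 / ‖ζ - z0‖ * ‖ζ - z‖ := by
          rw [div_mul_eq_mul_div, le_div_iff₀ hp]; linarith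
        have h3 : 0 ≤ ‖ζ - z0‖ ^ (α - 2) := by positivity
        calc _ ≤ ‖ζ - z0‖ ^ (α - 2) * (3 / ‖ζ - z0‖ * ‖ζ - z‖) := le_mul_of_one_le_right h3 this
          _ = _ := by ring
      have := mul_nonneg (inv_nonneg.2 he.le) n1
      have := mul_nonneg hee n2
      linarith

/-- a Cauchy potential is complex differentiable where the density vanishes to Hölder order -/
theorem Kn0_hasDerivAt_holder {F : ℂ → ℂ} (hF : Adm F) {z0 : ℂ} {H α : ℝ} (hα : α ∈ Set.Ioo (0:ℝ) 1)
    (h : ∀ ζ, ‖F ζ‖ ≤ H * ‖ζ - z0‖ ^ α) : HasDerivAt (Kn 0 F) (Kn 1 F z0) z0 := by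
  have hH : 0 ≤ H := by
    have := h (z0 + 1); simp at this; exact (norm_nonneg _).trans this
  obtain ⟨hα0, hα1⟩ := hα
  set C : ℝ := 2 * Real.pi / α + 2 * Real.pi + 3 * (2 * Real.pi / (1 - α)) with hC
  have key : ∀ z, z ≠ z0 → ‖Kn 0 F z - Kn 0 F z0 - (z - z0) * Kn 1 F z0‖ ≤
      Real.pi⁻¹ * (H * ‖z - z0‖^2 * (C * (‖z - z0‖/2) ^ (α - 1))) := by
    intro z hz
    have hp : 0 < ‖z - z0‖ := norm_pos_iff.2 (sub_ne_zero.2 hz)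
    set e := ‖z - z0‖ / 2 with he
    have he0 : 0 < e := by positivity
    have hi2 := hF.int2 ⟨hα0, hα1⟩ h
    have e1 : Kn 0 F z - Kn 0 F z0 - (z - z0) * Kn 1 F z0 = -(Real.pi : ℂ)⁻¹ *
        ∫ ζ, (F ζ / (ζ - z) - F ζ / (ζ - z0) - (z - z0) * (F ζ / (ζ - z0) ^ 2)) := by
      have hs' : Integrable (fun ζ => F ζ / (ζ - z) - F ζ / (ζ - z0)) := (hF.int z).sub (hF.int z0)
      rw [integral_sub hs' (hi2.const_mul _), integral_sub (hF.int z) (hF.int z0),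
        integral_const_mul, Kn_zero, Kn_zero, Kn]
      simp; ring
    rw [e1, norm_mul, norm_neg, norm_inv, Complex.norm_real, Real.norm_of_nonneg Real.pi_pos.le]
    gcongr
    have i1 := nearF_int (s := α - 2) (by linarith) he0 z0
    have i2 := nearF_int (s := -1) (by norm_num) he0 z
    have i3 := farF_int (s := α - 3) (by linarith) he0 z0
    have hbd : ∫ ζ, H * ‖z - z0‖^2 * (e⁻¹ * nearF (α - 2) e z0 ζ + e ^ (α - 2) * nearF (-1) e z ζ +
        3 * farF (α - 3) e z0 ζ) = H * ‖z - z0‖^2 * (C * e ^ (α - 1)) := by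
      rw [integral_const_mul, integral_add ((i1.1.const_mul _).fun_add (i2.1.const_mul _)) (i3.1.const_mul _),
        integral_add (i1.1.const_mul _) (i2.1.const_mul _), integral_const_mul, integral_const_mul,
        integral_const_mul, i1.2, i2.2, i3.2]
      congr 1
      rw [hC, show α - 2 + 2 = α by ring, show (-1:ℝ) + 2 = 1 by ring, show α - 3 + 2 = α - 1 by ring,
        show -(α - 1) = 1 - α by ring, Real.rpow_one]
      have a1 : e⁻¹ * e ^ α = e ^ (α - 1) := by rw [Real.rpow_sub_one he0.ne']; ring
      have a2 : e ^ (α - 2) * e = e ^ (α - 1) := by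
        rw [← Real.rpow_add_one he0.ne']; congr 1; ring
      linear_combination (2 * Real.pi / α) * a1 + 2 * Real.pi * a2
    rw [← hbd]
    refine norm_integral_le_of_norm_le (((i1.1.const_mul _).fun_add (i2.1.const_mul _)).fun_add (i3.1.const_mul _) |>.const_mul _) ?_
    have n0 : ∀ᵐ x : ℂ, x ≠ z0 := by simp [ae_iff, measure_singleton]
    have n1 : ∀ᵐ x : ℂ, x ≠ z := by simp [ae_iff, measure_singleton]
    filter_upwards [n0, n1] with ζ h0 h1
    have h0' := sub_ne_zero.2 h0
    have h1' := sub_ne_zero.2 h1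
    have e2 : F ζ / (ζ - z) - F ζ / (ζ - z0) - (z - z0) * (F ζ / (ζ - z0) ^ 2) =
        (z - z0)^2 * (F ζ / (ζ - z0)^2) / (ζ - z) := by
      field_simp; ring
    rw [e2, norm_div, norm_mul, norm_pow]
    calc ‖z - z0‖ ^ 2 * ‖F ζ / (ζ - z0) ^ 2‖ / ‖ζ - z‖
        ≤ ‖z - z0‖ ^ 2 * (H * ‖ζ - z0‖ ^ (α - 2)) / ‖ζ - z‖ := by
          gcongr; exact norm_div_sq_le ⟨hα0, hα1⟩ h ζ
      _ = H * ‖z - z0‖ ^ 2 * (‖ζ - z0‖ ^ (α - 2) / ‖ζ - z‖) := by ring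
      _ ≤ _ := by
          gcongr
          exact err_ptwise ⟨hα0, hα1⟩ he0 (by rw [he]; ring) ζ h0 h1
  have hC0 : 0 ≤ C := by
    have : 0 < 1 - α := by linarith
    have := Real.pi_pos
    positivity
  rw [hasDerivAt_iff_isLittleO]
  set K := Real.pi⁻¹ * (H * (C * (1/2)^(α - 1))) with hK
  have hO : (fun z => Kn 0 F z - Kn 0 F z0 - (z - z0) • Kn 1 F z0) =O[nhds z0] fun z => ‖z - z0‖ ^ α * ‖z - z0‖ := by
    refine Asymptotics.IsBigO.of_bound K (Filter.Eventually.of_forall fun z => ?_)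
    rcases eq_or_ne z z0 with rfl | hz
    · simp
    refine (key z hz).trans (le_of_eq ?_)
    have hp : 0 < ‖z - z0‖ := norm_pos_iff.2 (sub_ne_zero.2 hz)
    rw [Real.norm_of_nonneg (by positivity), hK, div_eq_mul_one_div, Real.mul_rpow hp.le (by norm_num),
      Real.rpow_sub_one hp.ne']
    field_simp
  refine hO.trans_isLittleO ?_
  have : (fun z => ‖z - z0‖ ^ α * ‖z - z0‖) =o[nhds z0] fun z => (1:ℝ) * ‖z - z0‖ := by
    refine Asymptotics.IsLittleO.mul_isBigO ?_ (Asymptotics.isBigO_refl _ _)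
    rw [Asymptotics.isLittleO_one_iff]
    have hc : Filter.Tendsto (fun z : ℂ => ‖z - z0‖ ^ α) (nhds z0) (nhds (‖z0 - z0‖ ^ α)) := by
      have : Continuous (fun z : ℂ => ‖z - z0‖ ^ α) :=
        (by fun_prop : Continuous fun z : ℂ => ‖z - z0‖).rpow_const (fun _ => Or.inr hα0.le)
      exact this.tendsto z0
    simpa [Real.zero_rpow hα0.ne'] using hc
  simpa using this


/-- globally Hölder functions supported in the disc of radius 2 -/
def IsH (α H : ℝ) (g : ℂ → ℂ) : Prop :=
  (∀ ζ ζ', ‖g ζ - g ζ'‖ ≤ H * ‖ζ - ζ'‖ ^ α) ∧ ∀ ζ, 2 ≤ ‖ζ‖ → g ζ = 0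

theorem IsH.nonneg {α H : ℝ} {g : ℂ → ℂ} (hg : IsH α H g) : 0 ≤ H := by
  have := hg.1 1 0; simp at this; exact (norm_nonneg _).trans this

theorem IsH.cont {α H : ℝ} {g : ℂ → ℂ} (hα : 0 < α) (hg : IsH α H g) : Continuous g := by
  rw [continuous_iff_continuousAt]
  intro z
  rw [ContinuousAt, tendsto_iff_norm_sub_tendsto_zero]
  have hc : Filter.Tendsto (fun w : ℂ => H * ‖w - z‖ ^ α) (nhds z) (nhds (H * ‖z - z‖ ^ α)) := by
    have : Continuous (fun w : ℂ => H * ‖w - z‖ ^ α) :=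
      continuous_const.mul ((by fun_prop : Continuous fun w : ℂ => ‖w - z‖).rpow_const (fun _ => Or.inr hα.le))
    exact this.tendsto z
  rw [sub_self, norm_zero, Real.zero_rpow hα.ne', mul_zero] at hc
  exact squeeze_zero (fun _ => norm_nonneg _) (fun w => hg.1 w z) hc

theorem IsH.adm {α H : ℝ} {g : ℂ → ℂ} (hα : 0 < α) (hg : IsH α H g) : Adm g := by
  have hH := hg.nonneg
  refine ⟨(hg.cont hα).aestronglyMeasurable, ⟨H * 4 ^ α, by positivity, fun ζ => ?_⟩, 2, by norm_num, hg.2⟩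
  by_cases h : 2 ≤ ‖ζ‖
  · rw [hg.2 ζ h]; simp; positivity
  · have h1 : g (ζ + 4) = 0 := by
      apply hg.2
      push Not at h
      have : ‖(4:ℂ)‖ ≤ ‖ζ + 4‖ + ‖ζ‖ := by
        have : (4:ℂ) = (ζ + 4) - ζ := by ring
        conv_lhs => rw [this]
        exact norm_sub_le _ _
      simp at this; linarith
    have := hg.1 ζ (ζ + 4)
    simpa [h1] using this

/-- the density with the value at `z` removed on the disc `B(c,4)` -/
noncomputable def fB (g : ℂ → ℂ) (c z : ℂ) : ℂ → ℂ := fun ζ => g ζ - g z * (ball c 4).indicator (fun _ => 1) ζ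

theorem Adm_ball (c : ℂ) {ρ : ℝ} (hρ : 0 < ρ) : Adm ((ball c ρ).indicator (fun _ => (1:ℂ))) := by
  refine ⟨?_, ⟨1, by norm_num, fun ζ => ?_⟩, ρ + ‖c‖, by positivity, fun ζ h => ?_⟩
  · exact (measurable_const.indicator measurableSet_ball).aestronglyMeasurable
  · by_cases h : ζ ∈ ball c ρ <;> simp [h]
  · apply Set.indicator_of_notMem
    rw [mem_ball, dist_eq_norm]
    have : ‖ζ‖ ≤ ‖ζ - c‖ + ‖c‖ := by simpa using norm_add_le (ζ - c) c
    linarith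

theorem fB_adm {α H : ℝ} {g : ℂ → ℂ} (hα : 0 < α) (hg : IsH α H g) (c z : ℂ) : Adm (fB g c z) :=
  (hg.adm hα).sub ((Adm_ball c (by norm_num)).cmul _)

theorem notMem_ball4 {c ζ : ℂ} (hc : ‖c‖ < 1) (h : ζ ∉ ball c 4) : 2 ≤ ‖ζ‖ := by
  rw [mem_ball, dist_eq_norm, not_lt] at h
  linarith [norm_sub_le ζ c]

theorem fB_bound {α H : ℝ} {g : ℂ → ℂ} (hg : IsH α H g) {c : ℂ} (hc : ‖c‖ < 1) (z : ℂ) (ζ : ℂ) :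
    ‖fB g c z ζ‖ ≤ H * ‖ζ - z‖ ^ α := by
  have hH := hg.nonneg
  unfold fB
  by_cases h : ζ ∈ ball c 4
  · rw [Set.indicator_of_mem h, mul_one]; exact hg.1 ζ z
  · rw [Set.indicator_of_notMem h, hg.2 ζ (notMem_ball4 hc h)]; simp; positivity

theorem hasFDerivAt_conj_sub (c z : ℂ) : HasFDerivAt (fun w => (starRingEnd ℂ) (w - c)) (cL 0 1) z := by
  have h1 : HasDerivAt (fun w : ℂ => w - c) 1 z := (hasDerivAt_id z).sub_const c
  have h2 := hasFDerivAt_of_hasDerivAt h1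
  have h3 := wirt_conj h2.differentiableAt
  rw [wD_of_hasDerivAt h1, wDbar_of_hasDerivAt h1] at h3
  simpa using h3

theorem IsH.hasFDerivAt {α H : ℝ} {g : ℂ → ℂ} (hα : α ∈ Set.Ioo (0:ℝ) 1) (hg : IsH α H g) {c z : ℂ}
    (hc : ‖c‖ < 1) (hz : ‖z‖ < 1) : HasFDerivAt (Kn 0 g) (cL (Kn 1 (fB g c z) z) (g z)) z := by
  have h1 := hasFDerivAt_of_hasDerivAt
    (Kn0_hasDerivAt_holder (fB_adm hα.1 hg c z) hα (fB_bound hg hc z))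
  have h2 := (hasFDerivAt_conj_sub c z).const_mul (g z)
  have h3 := h1.add h2
  rw [cL_smul, cL_add] at h3
  simp only [mul_zero, add_zero, mul_one, zero_add] at h3
  refine h3.congr_of_eventuallyEq ?_
  have hzc : z ∈ ball c 4 := by
    rw [mem_ball, dist_eq_norm]; linarith [norm_sub_le z c]
  filter_upwards [isOpen_ball.mem_nhds hzc] with w hw
  have := Kn0_add (fB_adm hα.1 hg c z) ((Adm_ball c (ρ := 4) (by norm_num)).cmul (g z)) w
  rw [Kn_cmul, Kn_ball c (by norm_num) hw] at this
  simp only [Pi.add_apply]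
  rw [← this]
  congr 1; ext ζ; simp [fB]

theorem IsH.wD_eq {α H : ℝ} {g : ℂ → ℂ} (hα : α ∈ Set.Ioo (0:ℝ) 1) (hg : IsH α H g) {c z : ℂ}
    (hc : ‖c‖ < 1) (hz : ‖z‖ < 1) : wD (Kn 0 g) z = Kn 1 (fB g c z) z :=
  wD_of_hasFDerivAt (hg.hasFDerivAt hα hc hz)

theorem IsH.wDbar_eq {α H : ℝ} {g : ℂ → ℂ} (hα : α ∈ Set.Ioo (0:ℝ) 1) (hg : IsH α H g) {z : ℂ}
    (hz : ‖z‖ < 1) : wDbar (Kn 0 g) z = g z :=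
  wDbar_of_hasFDerivAt (hg.hasFDerivAt hα hz hz)

theorem IsH.sup {α H : ℝ} {g : ℂ → ℂ} (hα : α ∈ Set.Ioo (0:ℝ) 1) (hg : IsH α H g) {z : ℂ}
    (hz : ‖z‖ < 1) : ‖wD (Kn 0 g) z‖ ≤ (2 / α * 4 ^ α) * H := by
  have hH := hg.nonneg
  rw [hg.wD_eq hα hz hz, Kn, norm_mul, norm_neg, norm_inv, Complex.norm_real,
    Real.norm_of_nonneg Real.pi_pos.le]
  have i1 := nearF_int (s := α - 2) (by linarith [hα.1]) (δ := 4) (by norm_num) z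
  have : ‖∫ ζ, fB g z z ζ / (ζ - z) ^ (1 + 1)‖ ≤ ∫ ζ, H * nearF (α - 2) 4 z ζ := by
    refine norm_integral_le_of_norm_le (i1.1.const_mul _) (Filter.Eventually.of_forall fun ζ => ?_)
    by_cases h : ζ ∈ ball z 4
    · rw [nearF_of_lt (by simpa [dist_eq_norm] using h)]
      exact norm_div_sq_le hα (fB_bound hg hz z) ζ
    · have : fB g z z ζ = 0 := by
        simp [fB, Set.indicator_of_notMem h, hg.2 ζ (notMem_ball4 hz h)]
      rw [this]; simp; exact mul_nonneg hH (nearF_nonneg _ _ _ _)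
  rw [integral_const_mul, i1.2] at this
  have hpi := Real.pi_pos
  calc Real.pi⁻¹ * ‖((Nat.factorial 1 : ℕ) : ℂ) * ∫ ζ, fB g z z ζ / (ζ - z) ^ (1 + 1)‖
      ≤ Real.pi⁻¹ * (H * (2 * Real.pi / (α - 2 + 2) * 4 ^ (α - 2 + 2))) := by
        gcongr; simpa using this
    _ = _ := by
        rw [show α - 2 + 2 = α by ring]; field_simp

theorem ann_zero (z : ℂ) (a b : ℝ) :
    ∫ ζ, (ball z b \ ball z a).indicator (fun ζ => 1 / (ζ - z)^2) ζ = 0 := by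
  have h1 : ∫ ζ, (ball z b \ ball z a).indicator (fun ζ => 1 / (ζ - z)^2) ζ =
      ∫ ζ, (ball (0:ℂ) b \ ball 0 a).indicator (fun ζ => 1 / ζ^2) ζ := by
    rw [← integral_add_right_eq_self _ z]
    congr 1; ext ζ
    simp only [Set.indicator, Set.mem_diff, mem_ball, dist_eq_norm, sub_zero, add_sub_cancel_right]
  rw [h1]
  set φ : ℂ → ℂ := (ball (0:ℂ) b \ ball 0 a).indicator (fun ζ => 1 / ζ^2) with hφ
  have h2 : ∫ ζ, φ (rotation (Circle.ofConjDivSelf (1 - I) (by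
      intro h; have := congrArg Complex.re h; simp at this)) ζ) = ∫ ζ, φ ζ :=
    (LinearIsometryEquiv.measurePreserving _).integral_comp
      (LinearIsometryEquiv.toHomeomorph _).measurableEmbedding φ
  have h3 : ∀ ζ, φ (rotation (Circle.ofConjDivSelf (1 - I) (by
      intro h; have := congrArg Complex.re h; simp at this)) ζ) = - φ ζ := by
    intro ζ
    have e : (rotation (Circle.ofConjDivSelf (1 - I) (by
      intro h; have := congrArg Complex.re h; simp at this)) ζ) = I * ζ := by
      rw [rotation_apply]
      congr 1
      simp [Circle.ofConjDivSelf]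
      have : (1 - I) ≠ 0 := by
        intro h; have := congrArg Complex.re h; simp at this
      rw [div_eq_iff this]
      ring_nf; simp; ring
    rw [e]
    simp only [hφ, Set.indicator, Set.mem_diff, mem_ball, dist_zero_right, norm_mul, norm_I, one_mul,
      mul_pow, I_sq]
    split_ifs
    · field_simp
    · simp
  simp only [h3, integral_neg] at h2
  have := add_self_eq_zero (a := ∫ ζ, φ ζ)
  rw [← this]; linear_combination -h2


theorem hol_ptwise {α H δ : ℝ} {g : ℂ → ℂ} (hα : α ∈ Set.Ioo (0:ℝ) 1) (hg : IsH α H g) {z z' : ℂ}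
    (hz : ‖z‖ < 1) (hz' : ‖z'‖ < 1) (hδ : ‖z - z'‖ = δ) (hδ0 : 0 < δ) (ζ : ℂ) :
    ‖fB g z z ζ / (ζ - z)^2 - fB g z z' ζ / (ζ - z')^2 -
      (g z' - g z) * (ball z 4 \ ball z (2*δ)).indicator (fun ζ => 1 / (ζ - z)^2) ζ‖ ≤
    H * (nearF (α - 2) (2*δ) z ζ + nearF (α - 2) (3*δ) z' ζ + 20 * δ * farF (α - 3) (2*δ) z ζ) := by
  have hH := hg.nonneg
  have n1 := nearF_nonneg (α - 2) (2*δ) z ζ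
  have n2 := nearF_nonneg (α - 2) (3*δ) z' ζ
  have n3 := farF_nonneg (α - 3) (2*δ) z ζ
  have t1 : ‖ζ - z'‖ ≤ ‖ζ - z‖ + δ := by
    have : ζ - z' = (ζ - z) + (z - z') := by ring
    rw [this, ← hδ]; exact norm_add_le _ _
  have t2 : ‖ζ - z‖ ≤ ‖ζ - z'‖ + δ := by
    have : ζ - z = (ζ - z') - (z - z') := by ring
    rw [this, ← hδ]; exact norm_sub_le _ _
  by_cases hA : ‖ζ - z‖ < 2*δ
  · rw [Set.indicator_of_notMem (by simp [dist_eq_norm, hA]), mul_zero, sub_zero]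
    have b1 := norm_div_sq_le hα (fB_bound hg hz z) ζ
    have b2 := norm_div_sq_le hα (fB_bound hg hz z') ζ
    rw [nearF_of_lt hA, nearF_of_lt (show ‖ζ - z'‖ < 3*δ by linarith)]
    refine (norm_sub_le _ _).trans ?_
    have : 0 ≤ H * (20 * δ * farF (α - 3) (2*δ) z ζ) := by positivity
    linarith
  · push Not at hA
    have hp : 0 < ‖ζ - z‖ := by linarith
    have hp' : 0 < ‖ζ - z'‖ := by linarith
    have ha : ζ - z ≠ 0 := norm_pos_iff.1 hp
    have hb : ζ - z' ≠ 0 := norm_pos_iff.1 hp'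
    have e : fB g z z ζ / (ζ - z)^2 - fB g z z' ζ / (ζ - z')^2 -
      (g z' - g z) * (ball z 4 \ ball z (2*δ)).indicator (fun ζ => 1 / (ζ - z)^2) ζ =
        fB g z z' ζ * (((z - z') * ((ζ - z) + (ζ - z'))) / ((ζ - z)^2 * (ζ - z')^2)) := by
      have e1 : (ball z 4 \ ball z (2*δ)).indicator (fun ζ => 1 / (ζ - z)^2) ζ =
          (ball z 4).indicator (fun _ => 1) ζ / (ζ - z)^2 := by
        by_cases h4 : ζ ∈ ball z 4
        · rw [Set.indicator_of_mem, Set.indicator_of_mem h4]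
          exact ⟨h4, by simp [dist_eq_norm, hA]⟩
        · rw [Set.indicator_of_notMem (fun h => h4 h.1), Set.indicator_of_notMem h4, zero_div]
      rw [e1]
      unfold fB
      field_simp
      ring
    rw [e, norm_mul, norm_div, norm_mul, norm_mul, norm_pow, norm_pow, hδ, farF_of_le hA]
    have h1 : ‖fB g z z' ζ‖ ≤ 2 * H * ‖ζ - z‖ ^ α := by
      refine (fB_bound hg hz z' ζ).trans ?_
      have : ‖ζ - z'‖ ^ α ≤ 2 * ‖ζ - z‖ ^ α := by
        calc ‖ζ - z'‖ ^ α ≤ (2 * ‖ζ - z‖) ^ α := by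
              apply Real.rpow_le_rpow hp'.le (by linarith) hα.1.le
          _ = 2 ^ α * ‖ζ - z‖ ^ α := Real.mul_rpow (by norm_num) hp.le
          _ ≤ 2 ^ (1:ℝ) * ‖ζ - z‖ ^ α := by
              gcongr
              · norm_num
              · exact hα.2.le
          _ = _ := by rw [Real.rpow_one]
      calc _ ≤ H * (2 * ‖ζ - z‖ ^ α) := by gcongr
        _ = _ := by ring
    have h2 : δ * ‖ζ - z + (ζ - z')‖ / (‖ζ - z‖^2 * ‖ζ - z'‖^2) ≤ δ * (5/2 * ‖ζ - z‖) / (‖ζ - z‖^2 * (‖ζ - z‖/2)^2) := by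
      gcongr
      · refine (norm_add_le _ _).trans (by linarith)
      · linarith
    have h3 : ‖ζ - z‖ ^ (α - 3) = ‖ζ - z‖ ^ α / ‖ζ - z‖^3 := by
      rw [Real.rpow_sub hp]; norm_cast
    calc _ ≤ (2 * H * ‖ζ - z‖ ^ α) * (δ * (5/2 * ‖ζ - z‖) / (‖ζ - z‖^2 * (‖ζ - z‖/2)^2)) := by
          gcongr
      _ = H * (20 * δ * ‖ζ - z‖ ^ (α - 3)) := by
          rw [h3]; field_simp; ring
      _ ≤ _ := by
          gcongr; linarith

theorem IsH.hol {α H : ℝ} {g : ℂ → ℂ} (hα : α ∈ Set.Ioo (0:ℝ) 1) (hg : IsH α H g) {z z' : ℂ}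
    (hz : ‖z‖ < 1) (hz' : ‖z'‖ < 1) :
    ‖wD (Kn 0 g) z - wD (Kn 0 g) z'‖ ≤ (10 / α + 40 / (1 - α)) * H * ‖z - z'‖ ^ α := by
  have hH := hg.nonneg
  obtain ⟨hα0, hα1⟩ := hα
  have hα' : 0 < 1 - α := by linarith
  have hpi := Real.pi_pos
  rcases eq_or_ne z z' with rfl | hne
  · simp [Real.zero_rpow hα0.ne']
  set δ := ‖z - z'‖ with hδ
  have hδ0 : 0 < δ := norm_pos_iff.2 (sub_ne_zero.2 hne)
  have hα : α ∈ Set.Ioo (0:ℝ) 1 := ⟨hα0, hα1⟩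
  rw [hg.wD_eq hα hz hz, hg.wD_eq hα hz hz']
  have j1 := (fB_adm hα0 hg z z).int2 hα (fB_bound hg hz z)
  have j2 := (fB_adm hα0 hg z z').int2 hα (fB_bound hg hz z')
  have i1 := nearF_int (s := α - 2) (by linarith) (δ := 2*δ) (by positivity) z
  have i2 := nearF_int (s := α - 2) (by linarith) (δ := 3*δ) (by positivity) z'
  have i3 := farF_int (s := α - 3) (by linarith) (δ := 2*δ) (by positivity) z
  have i4 := farF_int (s := -3) (by norm_num) (δ := 2*δ) (by positivity) z
  have j3 : Integrable ((ball z 4 \ ball z (2*δ)).indicator (fun ζ => 1 / (ζ - z)^2)) := by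
    refine (i4.1.const_mul 4).mono' ?_ (Filter.Eventually.of_forall fun ζ => ?_)
    · exact (Measurable.indicator (by fun_prop) (measurableSet_ball.diff measurableSet_ball)).aestronglyMeasurable
    · by_cases h : ζ ∈ ball z 4 \ ball z (2*δ)
      · have ha : ‖ζ - z‖ < 4 := by simpa [dist_eq_norm] using h.1
        have hb : 2*δ ≤ ‖ζ - z‖ := by simpa [dist_eq_norm] using h.2
        have hp : 0 < ‖ζ - z‖ := by linarith
        rw [Set.indicator_of_mem h, farF_of_le hb, norm_div, norm_pow, norm_one,
          show (-3:ℝ) = -(3:ℕ) by norm_num, Real.rpow_neg hp.le, Real.rpow_natCast, ← div_eq_mul_inv,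
          div_le_div_iff₀ (by positivity) (by positivity)]
        nlinarith [pow_pos hp 2]
      · rw [Set.indicator_of_notMem h]; simp; exact farF_nonneg _ _ _ _
  have e : Kn 1 (fB g z z) z - Kn 1 (fB g z z') z' = -(Real.pi : ℂ)⁻¹ *
      ∫ ζ, (fB g z z ζ / (ζ - z)^2 - fB g z z' ζ / (ζ - z')^2 -
      (g z' - g z) * (ball z 4 \ ball z (2*δ)).indicator (fun ζ => 1 / (ζ - z)^2) ζ) := by
    have hs' : Integrable (fun ζ => fB g z z ζ / (ζ - z)^2 - fB g z z' ζ / (ζ - z')^2) := j1.sub j2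
    rw [integral_sub hs' (j3.const_mul _), integral_sub j1 j2, integral_const_mul, ann_zero, Kn, Kn]
    simp; ring
  rw [e, norm_mul, norm_neg, norm_inv, Complex.norm_real, Real.norm_of_nonneg hpi.le]
  have hb := norm_integral_le_of_norm_le
    (((i1.1.fun_add i2.1).fun_add (i3.1.const_mul (20*δ))).const_mul H)
    (Filter.Eventually.of_forall fun ζ => hol_ptwise hα hg hz hz' hδ.symm hδ0 ζ)
  rw [integral_const_mul, integral_add (i1.1.fun_add i2.1) (i3.1.const_mul _), integral_add i1.1 i2.1,
    integral_const_mul, i1.2, i2.2, i3.2, show α - 2 + 2 = α by ring, show α - 3 + 2 = α - 1 by ring,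
    show -(α - 1) = 1 - α by ring] at hb
  have p1 : (2 * δ) ^ α ≤ 2 * δ ^ α := by
    rw [Real.mul_rpow (by norm_num) hδ0.le]
    gcongr
    calc (2:ℝ) ^ α ≤ 2 ^ (1:ℝ) := Real.rpow_le_rpow_of_exponent_le (by norm_num) hα1.le
      _ = 2 := Real.rpow_one _
  have p2 : (3 * δ) ^ α ≤ 3 * δ ^ α := by
    rw [Real.mul_rpow (by norm_num) hδ0.le]
    gcongr
    calc (3:ℝ) ^ α ≤ 3 ^ (1:ℝ) := Real.rpow_le_rpow_of_exponent_le (by norm_num) hα1.le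
      _ = 3 := Real.rpow_one _
  have p3 : δ * (2 * δ) ^ (α - 1) ≤ δ ^ α := by
    have : δ * (2 * δ) ^ (α - 1) = (2 * δ) ^ α / 2 := by
      rw [Real.rpow_sub_one (by positivity)]; field_simp
    rw [this]; linarith
  calc _ ≤ Real.pi⁻¹ * (H * (2 * Real.pi / α * (2 * δ ^ α) + 2 * Real.pi / α * (3 * δ ^ α) +
        20 * (2 * Real.pi / (1 - α) * δ ^ α))) := by
        gcongr
        refine hb.trans ?_
        have : 20 * δ * (2 * Real.pi / (1 - α) * (2 * δ) ^ (α - 1)) =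
          20 * (2 * Real.pi / (1 - α) * (δ * (2 * δ) ^ (α - 1))) := by ring
        rw [this]
        gcongr
    _ = _ := by field_simp; ring


theorem HL_radial {G G' : ℂ → ℂ} {A α : ℝ} (hα : α ∈ Set.Ioo (0:ℝ) 1) (hA : 0 ≤ A)
    (hG : ∀ z, ‖z‖ < 1 → HasDerivAt G (G' z) z) (hb : ∀ z, ‖z‖ < 1 → ‖G' z‖ ≤ A * (1 - ‖z‖) ^ (α - 1))
    {z : ℂ} (hz : ‖z‖ < 1) {s : ℝ} (hs0 : 0 < s) (hs1 : s ≤ 1) :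
    ‖G z - G (((1 - s : ℝ) : ℂ) * z)‖ ≤ A / α * s ^ α := by
  obtain ⟨hα0, hα1⟩ := hα
  set w : ℝ → ℂ := fun τ => ((1 - s + τ : ℝ) : ℂ) * z with hw
  have hwn : ∀ τ ∈ Set.Icc 0 s, ‖w τ‖ = (1 - s + τ) * ‖z‖ := by
    intro τ hτ
    rw [hw]; simp only [norm_mul, Complex.norm_real]
    rw [Real.norm_of_nonneg (by linarith [hτ.1])]
  have hwb : ∀ τ ∈ Set.Icc 0 s, ‖w τ‖ ≤ ‖z‖ := by
    intro τ hτ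
    rw [hwn τ hτ]
    have := norm_nonneg z
    nlinarith [hτ.2]
  have hwb2 : ∀ τ ∈ Set.Icc 0 s, ‖w τ‖ ≤ 1 - s + τ := by
    intro τ hτ
    rw [hwn τ hτ]
    nlinarith [norm_nonneg z, hτ.1]
  have hwd : ∀ τ, HasDerivAt w z τ := by
    intro τ
    have h1 : HasDerivAt (fun τ : ℝ => (1 - s + τ : ℝ)) 1 τ := (hasDerivAt_id τ).const_add _
    have h2 := (h1.ofReal_comp).mul_const z
    refine h2.congr_deriv (by simp)
  have hφ : ∀ τ ∈ Set.Icc 0 s, HasDerivAt (fun τ => G (w τ)) (G' (w τ) * z) τ := by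
    intro τ hτ
    exact HasDerivAt.comp τ (hG (w τ) (lt_of_le_of_lt (hwb τ hτ) hz)) (hwd τ)
  have main := image_norm_le_of_norm_deriv_right_le_deriv_boundary' (a := 0) (b := s)
    (f := fun τ => G (w τ) - G (w 0)) (f' := fun τ => G' (w τ) * z)
    (B := fun τ => A / α * (s ^ α - (s - τ) ^ α)) (B' := fun τ => A * (s - τ) ^ (α - 1))
    (fun τ hτ => ((hφ τ hτ).sub_const _).continuousAt.continuousWithinAt)
    (fun τ hτ => ((hφ τ ⟨hτ.1, hτ.2.le⟩).sub_const _).hasDerivWithinAt)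
    (by simp)
    (by
      apply Continuous.continuousOn
      exact continuous_const.mul (continuous_const.sub
        ((by fun_prop : Continuous fun τ : ℝ => s - τ).rpow_const (fun _ => Or.inr hα0.le))))
    (fun τ hτ => by
      have h1 : HasDerivAt (fun τ : ℝ => s - τ) (-1) τ := (hasDerivAt_id τ).const_sub s
      have h2 := h1.rpow_const (p := α) (Or.inl (by linarith [hτ.2]))
      have h3 := (h2.const_sub (s ^ α)).const_mul (A / α)
      refine (h3.congr_deriv ?_).hasDerivWithinAt
      field_simp)
    (fun τ hτ => by
      rw [norm_mul]
      have hτ' : τ ∈ Set.Icc 0 s := ⟨hτ.1, hτ.2.le⟩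
      have h1 := hb (w τ) (lt_of_le_of_lt (hwb τ hτ') hz)
      have h2 : (1 - ‖w τ‖) ^ (α - 1) ≤ (s - τ) ^ (α - 1) :=
        Real.rpow_le_rpow_of_nonpos (by linarith [hτ.2]) (by linarith [hwb2 τ hτ']) (by linarith)
      calc ‖G' (w τ)‖ * ‖z‖ ≤ ‖G' (w τ)‖ * 1 := by gcongr
        _ ≤ A * (1 - ‖w τ‖) ^ (α - 1) := by linarith
        _ ≤ _ := by gcongr)
    (x := s) ⟨hs0.le, le_rfl⟩
  have e1 : w s = z := by simp [hw]
  have e2 : w 0 = ((1 - s : ℝ) : ℂ) * z := by simp [hw]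
  simp only [e1, e2, sub_self, Real.zero_rpow hα0.ne', sub_zero] at main
  exact main

theorem HL {G G' : ℂ → ℂ} {A α : ℝ} (hα : α ∈ Set.Ioo (0:ℝ) 1) (hA : 0 ≤ A)
    (hG : ∀ z, ‖z‖ < 1 → HasDerivAt G (G' z) z) (hb : ∀ z, ‖z‖ < 1 → ‖G' z‖ ≤ A * (1 - ‖z‖) ^ (α - 1))
    {z z' : ℂ} (hz : ‖z‖ < 1) (hz' : ‖z'‖ < 1) :
    ‖G z - G z'‖ ≤ (2 / α + 1) * A * ‖z - z'‖ ^ α := by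
  obtain ⟨hα0, hα1⟩ := id hα
  rcases eq_or_ne z z' with rfl | hne
  · simp [Real.zero_rpow hα0.ne']
  set δ := ‖z - z'‖ with hδ
  have hδ0 : 0 < δ := norm_pos_iff.2 (sub_ne_zero.2 hne)
  set s := min δ 1 with hs
  have hs0 : 0 < s := lt_min hδ0 one_pos
  have hs1 : s ≤ 1 := min_le_right _ _
  have hsδ : s ≤ δ := min_le_left _ _
  have r1 := HL_radial hα hA hG hb hz hs0 hs1
  have r2 := HL_radial hα hA hG hb hz' hs0 hs1
  have hsα : s ^ α ≤ δ ^ α := Real.rpow_le_rpow hs0.le hsδ hα0.le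
  have mid : ‖G (((1 - s : ℝ) : ℂ) * z) - G (((1 - s : ℝ) : ℂ) * z')‖ ≤ A * δ ^ α := by
    by_cases h1 : δ < 1
    · have hsd : s = δ := min_eq_left h1.le
      have hm : ∀ y : ℂ, ‖y‖ < 1 → ((1 - s : ℝ) : ℂ) * y ∈ closedBall (0:ℂ) (1 - s) := by
        intro y hy
        rw [mem_closedBall_zero_iff, norm_mul, Complex.norm_real, Real.norm_of_nonneg (by linarith)]
        nlinarith
      have := (convex_closedBall (0:ℂ) (1 - s)).norm_image_sub_le_of_norm_hasDerivWithin_le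
        (f := G) (f' := G') (C := A * s ^ (α - 1))
        (fun x hx => by
          have : ‖x‖ ≤ 1 - s := by simpa using hx
          exact (hG x (by linarith)).hasDerivWithinAt)
        (fun x hx => by
          have hx' : ‖x‖ ≤ 1 - s := by simpa using hx
          refine (hb x (by linarith)).trans ?_
          gcongr A * ?_
          exact Real.rpow_le_rpow_of_nonpos hs0 (by linarith) (by linarith))
        (hm z' hz') (hm z hz)
      refine this.trans ?_
      rw [← mul_sub, norm_mul, Complex.norm_real, Real.norm_of_nonneg (by linarith), ← hδ, hsd,
        Real.rpow_sub_one hδ0.ne']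
      have h0 : 0 ≤ A * δ ^ α := by positivity
      calc A * (δ ^ α / δ) * ((1 - δ) * δ) = (A * δ ^ α) * (1 - δ) := by field_simp
        _ ≤ (A * δ ^ α) * 1 := by gcongr; linarith
        _ = _ := mul_one _
    · have hsd : s = 1 := min_eq_right (by linarith)
      rw [hsd]; simp; positivity
  have e : G z - G z' = (G z - G (((1 - s : ℝ) : ℂ) * z)) +
    (G (((1 - s : ℝ) : ℂ) * z) - G (((1 - s : ℝ) : ℂ) * z')) - (G z' - G (((1 - s : ℝ) : ℂ) * z')) := by ring
  have hAα : 0 ≤ A / α := by positivity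
  calc ‖G z - G z'‖ ≤ A / α * s ^ α + A * δ ^ α + A / α * s ^ α := by
        rw [e]
        exact (norm_sub_le _ _).trans (add_le_add ((norm_add_le _ _).trans (add_le_add r1 mid)) r2)
    _ ≤ A / α * δ ^ α + A * δ ^ α + A / α * δ ^ α := by gcongr
    _ = _ := by field_simp; ring


theorem Adm_of_cont {φ : ℂ → ℂ} (h : Continuous φ) (hc : HasCompactSupport φ) : Adm φ := by
  obtain ⟨M, hM⟩ := hc.exists_bound_of_continuous h
  refine ⟨h.aestronglyMeasurable, ⟨M, (norm_nonneg _).trans (hM 0), hM⟩, ?_⟩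
  obtain ⟨r, hr, hr'⟩ := hc.isCompact.isBounded.subset_ball_lt 0 0
  refine ⟨r, hr, fun ζ hζ => ?_⟩
  by_contra h0
  have := hr' (subset_tsupport φ h0)
  simp at this; linarith

noncomputable def kap (t : ℂ) : ℂ := (Real.pi : ℂ)⁻¹ * t⁻¹

theorem kap_locInt : LocallyIntegrable kap volume := by
  intro z
  refine ⟨ball 0 (‖z‖ + 1), isOpen_ball.mem_nhds (by simp), ?_⟩
  have h := (Adm_ball (0:ℂ) (ρ := ‖z‖ + 1) (by positivity)).int 0
  rw [← integrable_indicator_iff measurableSet_ball]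
  refine (h.const_mul ((Real.pi : ℂ)⁻¹)).congr (Filter.Eventually.of_forall fun ζ => ?_)
  by_cases h : ζ ∈ ball (0:ℂ) (‖z‖ + 1)
  · simp only [Set.indicator_of_mem h]; simp [kap]
  · simp only [Set.indicator_of_notMem h]; simp

theorem Kn0_conv (φ : ℂ → ℂ) :
    Kn 0 φ = convolution kap φ (ContinuousLinearMap.mul ℝ ℂ) volume := by
  ext z
  rw [Kn_zero, convolution_def]
  simp only [ContinuousLinearMap.mul_apply']
  rw [← integral_const_mul, ← integral_sub_left_eq_self _ volume z]
  congr 1; ext t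
  simp only [kap]
  rw [show z - t - z = -t by ring, div_neg]
  ring

theorem Kn0_contDiff {φ : ℂ → ℂ} {n : ℕ} (h : ContDiff ℝ n φ) (hc : HasCompactSupport φ) :
    ContDiff ℝ n (Kn 0 φ) := by
  rw [Kn0_conv]
  exact hc.contDiff_convolution_right _ kap_locInt h

theorem Kn0_fderiv {φ : ℂ → ℂ} (h : ContDiff ℝ 1 φ) (hc : HasCompactSupport φ) (z v : ℂ) :
    fderiv ℝ (Kn 0 φ) z v = Kn 0 (fun ζ => fderiv ℝ φ ζ v) z := by
  have h1 := hc.hasFDerivAt_convolution_right (ContinuousLinearMap.mul ℝ ℂ) kap_locInt h z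
  rw [← Kn0_conv] at h1
  rw [h1.fderiv, Kn0_conv, convolution_precompR_apply]
  · exact kap_locInt
  · exact hc.fderiv ℝ
  · exact h.continuous_fderiv (by norm_num)

theorem cs_wD {φ : ℂ → ℂ} (hc : HasCompactSupport φ) : HasCompactSupport (wD φ) := by
  refine (hc.fderiv ℝ).mono ?_
  intro ζ hζ h0
  apply hζ
  have h0' : fderiv ℝ φ ζ = 0 := h0
  simp [wD, h0']

theorem contDiff_wD {φ : ℂ → ℂ} {n : ℕ} (h : ContDiff ℝ (n+1 : ℕ) φ) : ContDiff ℝ n (wD φ) := by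
  rw [← contDiffOn_univ] at h ⊢
  exact contDiffOn_wD isOpen_univ h

theorem wD_Kn0 {φ : ℂ → ℂ} (h : ContDiff ℝ 1 φ) (hc : HasCompactSupport φ) :
    wD (Kn 0 φ) = Kn 0 (wD φ) := by
  have hA : ∀ v : ℂ, Adm (fun ζ => fderiv ℝ φ ζ v) := fun v =>
    Adm_of_cont ((h.continuous_fderiv (by norm_num)).clm_apply continuous_const)
      ((hc.fderiv ℝ).mono (fun ζ hζ h0 => hζ (by have h0' : fderiv ℝ φ ζ = 0 := h0
                                                 simp [h0'])))
  ext z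
  simp only [wD, Kn0_fderiv h hc]
  have e : (fun ζ => (fderiv ℝ φ ζ 1 - I * fderiv ℝ φ ζ I) / 2) =
      fun ζ => (1/2) * (fderiv ℝ φ ζ 1 - I * fderiv ℝ φ ζ I) := by ext; ring
  have e2 : wD φ = fun ζ => (1/2) * (fderiv ℝ φ ζ 1 - I * fderiv ℝ φ ζ I) := e
  rw [show Kn 0 (wD φ) z = _ from congrArg (fun f => Kn 0 f z) e2, Kn_cmul,
    Kn0_sub (hA 1) ((hA I).cmul I), Kn_cmul]
  ring

theorem wD_iter_Kn0 (i : ℕ) : ∀ {φ : ℂ → ℂ}, ContDiff ℝ i φ → HasCompactSupport φ →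
    wD^[i] (Kn 0 φ) = Kn 0 (wD^[i] φ) := by
  induction i with
  | zero => intro φ _ _; rfl
  | succ i ih =>
    intro φ h hc
    rw [Function.iterate_succ_apply, Function.iterate_succ_apply,
      wD_Kn0 (h.of_le (by norm_cast; omega)) hc, ih (contDiff_wD h) (cs_wD hc)]

theorem wDbar_Kn0 {φ : ℂ → ℂ} (h : ContDiff ℝ 1 φ) (hs : ∀ ζ, 2 ≤ ‖ζ‖ → φ ζ = 0) {z : ℂ} (hz : ‖z‖ < 1) :
    wDbar (Kn 0 φ) z = φ z := by
  have hc : HasCompactSupport φ := by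
    apply HasCompactSupport.of_support_subset_isCompact (isCompact_closedBall (0:ℂ) 2)
    intro ζ hζ
    by_contra h0
    exact hζ (hs ζ (by simp at h0; linarith))
  obtain ⟨L, hL⟩ := h.lipschitzWith_of_hasCompactSupport hc (by norm_num)
  obtain ⟨M, hM⟩ := hc.exists_bound_of_continuous h.continuous
  have hM0 : 0 ≤ M := (norm_nonneg _).trans (hM 0)
  have hH : IsH (1/2) (max L (2*M)) φ := by
    refine ⟨fun ζ ζ' => ?_, hs⟩
    rcases le_total ‖ζ - ζ'‖ 1 with h1 | h1
    · have := hL.norm_sub_le ζ ζ'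
      refine this.trans ?_
      gcongr
      · exact le_max_left _ _
      · rcases eq_or_lt_of_le (norm_nonneg (ζ - ζ')) with h0 | h0
        · rw [← h0]; positivity
        calc ‖ζ - ζ'‖ = ‖ζ - ζ'‖ ^ (1:ℝ) := (Real.rpow_one _).symm
          _ ≤ _ := Real.rpow_le_rpow_of_exponent_ge h0 h1 (by norm_num)
    · calc ‖φ ζ - φ ζ'‖ ≤ 2 * M := by
            refine (norm_sub_le _ _).trans ?_
            linarith [hM ζ, hM ζ']
        _ = 2 * M * 1 := by ring
        _ ≤ _ := by
          gcongr
          · exact le_max_right _ _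
          · exact Real.one_le_rpow h1 (by norm_num)
  exact hH.wDbar_eq (by norm_num) hz



noncomputable def prj (ζ : ℂ) : ℂ := ((max 1 ‖ζ‖ : ℝ) : ℂ)⁻¹ * ζ
noncomputable def psi (ζ : ℂ) : ℝ := max 0 (min 1 (2 - ‖ζ‖))

theorem prj_mem (ζ : ℂ) : prj ζ ∈ closedBall (0:ℂ) 1 := by
  have h1 : (0:ℝ) < max 1 ‖ζ‖ := lt_of_lt_of_le one_pos (le_max_left _ _)
  simp only [mem_closedBall_zero_iff, prj, norm_mul, norm_inv, norm_real, Real.norm_eq_abs, abs_of_pos h1]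
  rw [inv_mul_le_iff₀ h1, mul_one]
  exact le_max_right _ _

theorem prj_of_mem {ζ : ℂ} (h : ‖ζ‖ ≤ 1) : prj ζ = ζ := by
  simp [prj, max_eq_left h]

theorem prj_lip (ζ ζ' : ℂ) : ‖prj ζ - prj ζ'‖ ≤ 2 * ‖ζ - ζ'‖ := by
  unfold prj
  set m := max 1 ‖ζ‖ with hm
  set m' := max 1 ‖ζ'‖ with hm'
  have h1 : 1 ≤ m := le_max_left _ _
  have h1' : 1 ≤ m' := le_max_left _ _
  have h2' : ‖ζ'‖ ≤ m' := le_max_right _ _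
  have h3 : |m' - m| ≤ ‖ζ - ζ'‖ := by
    have : |m' - m| ≤ |‖ζ'‖ - ‖ζ‖| := by
      rw [hm, hm']; 
      rw [max_comm 1, max_comm 1]
      exact abs_max_sub_max_le_abs ‖ζ'‖ ‖ζ‖ 1
    refine this.trans ?_
    rw [norm_sub_rev]
    exact abs_norm_sub_norm_le _ _
  have e : ((m:ℝ):ℂ)⁻¹ * ζ - ((m':ℝ):ℂ)⁻¹ * ζ' =
      ((m:ℝ):ℂ)⁻¹ * (ζ - ζ') + (((m' - m) / (m * m') : ℝ) : ℂ) * ζ' := by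
    have : ((m:ℝ):ℂ) ≠ 0 := by exact_mod_cast (by linarith : m ≠ 0)
    have : ((m':ℝ):ℂ) ≠ 0 := by exact_mod_cast (by linarith : m' ≠ 0)
    push_cast
    field_simp
    ring
  rw [e]
  refine (norm_add_le _ _).trans ?_
  rw [norm_mul, norm_mul, norm_inv, norm_real, norm_real, Real.norm_eq_abs, Real.norm_eq_abs, abs_div,
    abs_of_pos (by linarith : 0 < m), abs_of_pos (by positivity : 0 < m * m')]
  have a1 : m⁻¹ * ‖ζ - ζ'‖ ≤ ‖ζ - ζ'‖ := by
    have : m⁻¹ ≤ 1 := inv_le_one_of_one_le₀ h1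
    nlinarith [norm_nonneg (ζ - ζ')]
  have a2 : |m' - m| / (m * m') * ‖ζ'‖ ≤ ‖ζ - ζ'‖ := by
    rw [div_mul_eq_mul_div, div_le_iff₀ (by positivity)]
    calc |m' - m| * ‖ζ'‖ ≤ ‖ζ - ζ'‖ * m' := by gcongr
      _ ≤ ‖ζ - ζ'‖ * (m * m') := by
        gcongr; nlinarith
  linarith

theorem psi_01 (ζ : ℂ) : 0 ≤ psi ζ ∧ psi ζ ≤ 1 := 
  ⟨le_max_left _ _, max_le zero_le_one (min_le_left _ _)⟩

theorem psi_lip (ζ ζ' : ℂ) : |psi ζ - psi ζ'| ≤ ‖ζ - ζ'‖ := by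
  have h := abs_norm_sub_norm_le ζ ζ'
  have hh := abs_le.1 h
  unfold psi
  rw [abs_le]
  constructor
  · rcases max_cases 0 (min 1 (2 - ‖ζ‖)) with h1 | h1 <;> rcases max_cases 0 (min 1 (2 - ‖ζ'‖)) with h2 | h2 <;>
    rcases min_cases 1 (2 - ‖ζ‖) with h3 | h3 <;> rcases min_cases 1 (2 - ‖ζ'‖) with h4 | h4 <;> linarith
  · rcases max_cases 0 (min 1 (2 - ‖ζ‖)) with h1 | h1 <;> rcases max_cases 0 (min 1 (2 - ‖ζ'‖)) with h2 | h2 <;>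
    rcases min_cases 1 (2 - ‖ζ‖) with h3 | h3 <;> rcases min_cases 1 (2 - ‖ζ'‖) with h4 | h4 <;> linarith

theorem le_rpow_of_le_one {α x : ℝ} (hα : α ∈ Set.Ioo (0:ℝ) 1) (h0 : 0 ≤ x) (h1 : x ≤ 1) : x ≤ x ^ α := by
  rcases eq_or_lt_of_le h0 with h | h
  · rw [← h]; exact Real.rpow_nonneg le_rfl _
  calc x = x ^ (1:ℝ) := (Real.rpow_one _).symm
    _ ≤ _ := Real.rpow_le_rpow_of_exponent_ge h h1 hα.2.le

theorem exists_ext {α : ℝ} (hα : α ∈ Set.Ioo (0:ℝ) 1) {h : ℂ → ℂ} {N : ℝ}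
    (hb : ∀ z ∈ closedBall (0:ℂ) 1, ‖h z‖ ≤ N)
    (hh : ∀ z ∈ closedBall (0:ℂ) 1, ∀ z' ∈ closedBall (0:ℂ) 1, ‖h z - h z'‖ ≤ N * ‖z - z'‖ ^ α) :
    ∃ g, IsH α (3 * N) g ∧ Set.EqOn g h (closedBall 0 1) ∧ ∀ ζ, ‖g ζ‖ ≤ N := by
  have hN : 0 ≤ N := (norm_nonneg _).trans (hb 0 (by simp))
  refine ⟨fun ζ => h (prj ζ) * (psi ζ : ℂ), ⟨fun ζ ζ' => ?_, fun ζ hζ => ?_⟩, fun ζ hζ => ?_, fun ζ => ?_⟩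
  · have e : h (prj ζ) * (psi ζ : ℂ) - h (prj ζ') * (psi ζ' : ℂ) =
      (h (prj ζ) - h (prj ζ')) * (psi ζ : ℂ) + h (prj ζ') * ((psi ζ - psi ζ' : ℝ) : ℂ) := by
      push_cast; ring
    dsimp only
    rw [e]
    refine (norm_add_le _ _).trans ?_
    rw [norm_mul, norm_mul, norm_real, norm_real, Real.norm_eq_abs, Real.norm_eq_abs,
      abs_of_nonneg (psi_01 ζ).1]
    have b1 : ‖h (prj ζ) - h (prj ζ')‖ ≤ N * (2 * ‖ζ - ζ'‖ ^ α) := by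
      refine (hh _ (prj_mem ζ) _ (prj_mem ζ')).trans ?_
      gcongr
      calc ‖prj ζ - prj ζ'‖ ^ α ≤ (2 * ‖ζ - ζ'‖) ^ α := 
            Real.rpow_le_rpow (norm_nonneg _) (prj_lip _ _) hα.1.le
        _ = 2 ^ α * ‖ζ - ζ'‖ ^ α := Real.mul_rpow (by norm_num) (norm_nonneg _)
        _ ≤ _ := by
          gcongr
          calc (2:ℝ) ^ α ≤ 2 ^ (1:ℝ) := Real.rpow_le_rpow_of_exponent_le (by norm_num) hα.2.le
            _ = 2 := by norm_num
    have b2 : |psi ζ - psi ζ'| ≤ ‖ζ - ζ'‖ ^ α := by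
      rcases le_total ‖ζ - ζ'‖ 1 with h1 | h1
      · exact (psi_lip _ _).trans (le_rpow_of_le_one hα (norm_nonneg _) h1)
      · refine le_trans ?_ (Real.one_le_rpow h1 hα.1.le)
        have := psi_01 ζ; have := psi_01 ζ'
        rw [abs_le]; constructor <;> linarith
    calc _ ≤ N * (2 * ‖ζ - ζ'‖ ^ α) * 1 + N * ‖ζ - ζ'‖ ^ α := by
          gcongr
          · exact (psi_01 ζ).1
          · exact (psi_01 ζ).2
          · exact hb _ (prj_mem _)
      _ = _ := by ring
  · have : psi ζ = 0 := by
      unfold psi; apply max_eq_left; exact (min_le_right _ _).trans (by linarith)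
    simp [this]
  · have hz : ‖ζ‖ ≤ 1 := by simpa using hζ
    have : psi ζ = 1 := by
      unfold psi; rw [min_eq_left (by linarith)]; simp
    simp [this, prj_of_mem hz]
  · rw [norm_mul, norm_real, Real.norm_eq_abs, abs_of_nonneg (psi_01 ζ).1]
    calc _ ≤ N * 1 := by
          gcongr
          · exact (psi_01 ζ).1
          · exact hb _ (prj_mem _)
          · exact (psi_01 ζ).2
      _ = N := mul_one _



noncomputable def outF (g : ℂ → ℂ) : ℂ → ℂ := (ball (0:ℂ) 1)ᶜ.indicator g

theorem Adm.ind {F : ℂ → ℂ} (hF : Adm F) {S : Set ℂ} (hS : MeasurableSet S) : Adm (S.indicator F) := by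
  obtain ⟨h1, ⟨M, hM, hM'⟩, ρ, hρ, h3⟩ := hF
  refine ⟨h1.indicator hS, ⟨M, hM, fun ζ => ?_⟩, ρ, hρ, fun ζ h => ?_⟩
  · by_cases hh : ζ ∈ S
    · rw [Set.indicator_of_mem hh]; exact hM' ζ
    · rw [Set.indicator_of_notMem hh]; simpa using hM
  · by_cases hh : ζ ∈ S
    · rw [Set.indicator_of_mem hh]; exact h3 ζ h
    · rw [Set.indicator_of_notMem hh]

theorem outF_zero (g : ℂ → ℂ) : ∀ ζ ∈ ball (0:ℂ) 1, outF g ζ = 0 := fun ζ h =>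
  Set.indicator_of_notMem (by simpa using h) _

noncomputable def annI : ℂ → ℂ := fun ζ => (ball (0:ℂ) 4).indicator (fun _ => (1:ℂ)) ζ - (ball (0:ℂ) 1).indicator (fun _ => (1:ℂ)) ζ

theorem annI_adm : Adm annI := (Adm_ball 0 (by norm_num)).sub (Adm_ball 0 (by norm_num))

theorem annI_K {z : ℂ} (hz : z ∈ ball (0:ℂ) 1) : Kn 0 annI z = 0 := by
  unfold annI
  rw [Kn0_sub (Adm_ball 0 (by norm_num)) (Adm_ball 0 (by norm_num)), Kn_ball 0 (by norm_num) hz,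
    Kn_ball 0 (by norm_num) (ball_subset_ball (by norm_num) hz)]
  simp

section
variable {α H : ℝ} {g : ℂ → ℂ}

/-- piece of `outF g` small at `z` -/
noncomputable def f1 (g : ℂ → ℂ) (z : ℂ) : ℂ → ℂ := fun ζ => outF g ζ - g z * annI ζ

theorem f1_adm (hα : 0 < α) (hg : IsH α H g) (z : ℂ) : Adm (f1 g z) :=
  ((hg.adm hα).ind measurableSet_ball.compl).sub (annI_adm.cmul _)

theorem f1_zero (z : ℂ) : ∀ ζ ∈ ball (0:ℂ) 1, f1 g z ζ = 0 := by
  intro ζ h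
  have h4 : ζ ∈ ball (0:ℂ) 4 := ball_subset_ball (by norm_num) h
  simp only [f1, outF_zero g ζ h, annI, Set.indicator_of_mem h, Set.indicator_of_mem h4]
  ring

theorem f1_out (z : ℂ) {ζ : ℂ} (h : ζ ∉ ball (0:ℂ) 1) : f1 g z ζ = fB g 0 z ζ := by
  simp only [f1, outF, annI, Set.indicator_of_notMem h, Set.indicator_of_mem (Set.mem_compl h), fB, sub_zero]

theorem f1_bound (hg : IsH α H g) (z ζ : ℂ) : ‖f1 g z ζ‖ ≤ H * ‖ζ - z‖ ^ α := by
  have hH := hg.nonneg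
  by_cases h : ζ ∈ ball (0:ℂ) 1
  · rw [f1_zero z ζ h]; simp; positivity
  · rw [f1_out z h]; exact fB_bound hg (by simp) z ζ

theorem f1_K (hα : 0 < α) (hg : IsH α H g) (z : ℂ) : Set.EqOn (Kn 0 (outF g)) (Kn 0 (f1 g z)) (ball 0 1) := by
  intro w hw
  unfold f1
  have hA : Adm (outF g) := (hg.adm hα).ind measurableSet_ball.compl
  rw [Kn0_sub hA (annI_adm.cmul _), Kn_cmul, annI_K hw]
  simp

theorem f1_Kn (hα : 0 < α) (hg : IsH α H g) (z : ℂ) (n : ℕ) {w : ℂ} (hw : w ∈ ball (0:ℂ) 1) :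
    Kn n (outF g) w = Kn n (f1 g z) w := by
  have h1 := wD_iter_eqOn isOpen_ball n (f1_K hα hg z) hw
  have h2 := Kn_iter ((hg.adm hα).ind measurableSet_ball.compl) (outF_zero g) n 0 hw
  have h3 := Kn_iter (f1_adm hα hg z) (f1_zero (g := g) z) n 0 hw
  rw [zero_add] at h2 h3
  rw [← h3, ← h1]; exact h2.symm

theorem outF_K2 (hα : α ∈ Set.Ioo (0:ℝ) 1) (hg : IsH α H g) {z : ℂ} (hz : ‖z‖ < 1) :
    ‖Kn 2 (outF g) z‖ ≤ (4 / (1 - α) * H) * (1 - ‖z‖) ^ (α - 1) := by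
  have hH := hg.nonneg
  have hzb : z ∈ ball (0:ℂ) 1 := by simpa using hz
  have hd : 0 < 1 - ‖z‖ := by linarith
  rw [f1_Kn hα.1 hg z 2 hzb, Kn, norm_mul, norm_neg, norm_inv, Complex.norm_real,
    Real.norm_of_nonneg Real.pi_pos.le]
  have i1 := farF_int (s := α - 3) (by linarith [hα.2]) (δ := 1 - ‖z‖) hd z
  have : ‖∫ ζ, f1 g z ζ / (ζ - z) ^ (2 + 1)‖ ≤ ∫ ζ, H * farF (α - 3) (1 - ‖z‖) z ζ := by
    refine norm_integral_le_of_norm_le (i1.1.const_mul _) (Filter.Eventually.of_forall fun ζ => ?_)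
    by_cases h : 1 - ‖z‖ ≤ ‖ζ - z‖
    · rw [farF_of_le h, norm_div, norm_pow]
      have hp : 0 < ‖ζ - z‖ := hd.trans_le h
      rw [div_le_iff₀ (by positivity)]
      refine (f1_bound hg z ζ).trans_eq ?_
      rw [mul_assoc, ← Real.rpow_natCast, ← Real.rpow_add hp]
      congr 2; norm_num
    · have : f1 g z ζ = 0 := f1_zero z ζ (by
        rw [mem_ball_zero_iff]
        have : ‖ζ‖ ≤ ‖ζ - z‖ + ‖z‖ := by simpa using norm_add_le (ζ - z) z
        linarith)
      rw [this]; simp; exact mul_nonneg hH (farF_nonneg _ _ _ _)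
  rw [integral_const_mul, i1.2] at this
  have hpi := Real.pi_pos
  calc Real.pi⁻¹ * ‖((Nat.factorial 2 : ℕ) : ℂ) * ∫ ζ, f1 g z ζ / (ζ - z) ^ (2 + 1)‖
      ≤ Real.pi⁻¹ * (2 * (H * (2 * Real.pi / (-(α - 3 + 2)) * (1 - ‖z‖) ^ (α - 3 + 2)))) := by
        rw [norm_mul]; gcongr; simp
    _ = _ := by
        have : 1 - α ≠ 0 := by linarith [hα.2]
        rw [show α - 3 + 2 = α - 1 by ring, show -(α - 1) = 1 - α by ring]; field_simp; ring

theorem outF_K1 (hα : α ∈ Set.Ioo (0:ℝ) 1) (hg : IsH α H g) :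
    ‖Kn 1 (outF g) 0‖ ≤ (2 / α * 4 ^ α) * H := by
  have hH := hg.nonneg
  rw [f1_Kn hα.1 hg 0 1 (by simp), Kn, norm_mul, norm_neg, norm_inv, Complex.norm_real,
    Real.norm_of_nonneg Real.pi_pos.le]
  have i1 := nearF_int (s := α - 2) (by linarith [hα.1]) (δ := 4) (by norm_num) 0
  have : ‖∫ ζ, f1 g 0 ζ / (ζ - 0) ^ (1 + 1)‖ ≤ ∫ ζ, H * nearF (α - 2) 4 0 ζ := by
    refine norm_integral_le_of_norm_le (i1.1.const_mul _) (Filter.Eventually.of_forall fun ζ => ?_)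
    by_cases h : ζ ∈ ball (0:ℂ) 4
    · rw [nearF_of_lt (by simpa [dist_eq_norm] using h)]
      exact norm_div_sq_le hα (f1_bound hg 0) ζ
    · have h1 : ζ ∉ ball (0:ℂ) 1 := fun h' => h (ball_subset_ball (by norm_num) h')
      have : f1 g 0 ζ = 0 := by
        rw [f1_out _ h1]
        simp [fB, Set.indicator_of_notMem h, hg.2 ζ (notMem_ball4 (by simp) h)]
      rw [this]; simp; exact mul_nonneg hH (nearF_nonneg _ _ _ _)
  rw [integral_const_mul, i1.2] at this
  have hpi := Real.pi_pos
  calc Real.pi⁻¹ * ‖((Nat.factorial 1 : ℕ) : ℂ) * ∫ ζ, f1 g 0 ζ / (ζ - 0) ^ (1 + 1)‖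
      ≤ Real.pi⁻¹ * (H * (2 * Real.pi / (α - 2 + 2) * 4 ^ (α - 2 + 2))) := by
        gcongr; simpa using this
    _ = _ := by
        rw [show α - 2 + 2 = α by ring]; field_simp
end

noncomputable def C0 (α : ℝ) : ℝ :=
  3 * ((10/α+40/(1-α)) + 2 * (2 / α * 4 ^ α) + 4 * (2 / α + 1) * (4 / (1 - α))) + 4

theorem Tcg_sup {h : ℂ → ℂ} {N : ℝ} (hm : ContinuousOn h (closedBall 0 1)) 
    (hb : ∀ z ∈ closedBall (0:ℂ) 1, ‖h z‖ ≤ N) {z : ℂ} (hz : ‖z‖ < 1) : ‖Tcg 1 h z‖ ≤ 4 * N := by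
  have hN : 0 ≤ N := (norm_nonneg _).trans (hb 0 (by simp))
  rw [Tcg_eq, Kn_zero, norm_mul, norm_neg, norm_inv, Complex.norm_real,
    Real.norm_of_nonneg Real.pi_pos.le]
  have i1 := nearF_int (s := -1) (by norm_num) (δ := 2) (by norm_num) z
  have : ‖∫ ζ, (closedBall (0:ℂ) 1).indicator h ζ / (ζ - z)‖ ≤ ∫ ζ, N * nearF (-1) 2 z ζ := by
    refine norm_integral_le_of_norm_le (i1.1.const_mul _) (Filter.Eventually.of_forall fun ζ => ?_)
    by_cases h' : ζ ∈ closedBall (0:ℂ) 1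
    · have h2 : ‖ζ - z‖ < 2 := by
        have := norm_sub_le ζ z
        rw [mem_closedBall_zero_iff] at h'; linarith
      rw [Set.indicator_of_mem h', nearF_of_lt h2, norm_div, Real.rpow_neg_one, div_eq_mul_inv]
      gcongr
      exact hb ζ h'
    · rw [Set.indicator_of_notMem h']; simp; exact mul_nonneg hN (nearF_nonneg _ _ _ _)
  rw [integral_const_mul, i1.2] at this
  have hpi := Real.pi_pos
  calc _ ≤ Real.pi⁻¹ * (N * (2 * Real.pi / (-1 + 2) * 2 ^ ((-1:ℝ) + 2))) := by gcongr
    _ = _ := by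
      norm_num; field_simp; norm_num

theorem base0 {α : ℝ} (hα : α ∈ Set.Ioo (0:ℝ) 1) {h : ℂ → ℂ} {N : ℝ}
    (hb : ∀ z ∈ closedBall (0:ℂ) 1, ‖h z‖ ≤ N)
    (hh : ∀ z ∈ closedBall (0:ℂ) 1, ∀ z' ∈ closedBall (0:ℂ) 1, ‖h z - h z'‖ ≤ N * ‖z - z'‖ ^ α) :
    (∀ z ∈ ball (0:ℂ) 1, DifferentiableAt ℝ (Tcg 1 h) z ∧ wDbar (Tcg 1 h) z = h z ∧
      ‖wD (Tcg 1 h) z‖ ≤ C0 α * N) ∧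
    (∀ z ∈ ball (0:ℂ) 1, ∀ z' ∈ ball (0:ℂ) 1, ‖wD (Tcg 1 h) z - wD (Tcg 1 h) z'‖ ≤ C0 α * N * ‖z - z'‖ ^ α) := by
  have hN : 0 ≤ N := (norm_nonneg _).trans (hb 0 (by simp))
  obtain ⟨g, hg, hgh, hgN⟩ := exists_ext hα hb hh
  have hA : Adm (outF g) := (hg.adm hα.1).ind measurableSet_ball.compl
  have eT : Tcg 1 h = fun z => Kn 0 g z - Kn 0 (outF g) z := by
    ext z
    rw [Tcg_eq, Kn_congr_ae (indicator_closedBall_ae h 1), ← Kn0_sub (hg.adm hα.1) hA]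
    congr 1; ext ζ
    by_cases h1 : ζ ∈ ball (0:ℂ) 1
    · rw [outF_zero g ζ h1, Set.indicator_of_mem h1, sub_zero, hgh (ball_subset_closedBall h1)]
    · rw [Set.indicator_of_notMem h1, outF, Set.indicator_of_mem (Set.mem_compl h1), sub_self]
  have hz1 : ∀ z ∈ ball (0:ℂ) 1, ‖z‖ < 1 := fun z hz => by simpa using hz
  have hd : ∀ z ∈ ball (0:ℂ) 1, HasFDerivAt (Tcg 1 h) (cL (wD (Kn 0 g) z - Kn 1 (outF g) z) (h z)) z := by
    intro z hz
    have h1 := hg.hasFDerivAt hα (hz1 z hz) (hz1 z hz)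
    have h2 := hasFDerivAt_of_hasDerivAt (Kn_hasDerivAt hA (outF_zero g) 0 hz)
    rw [eT]
    refine (h1.sub h2).congr_fderiv ?_
    rw [cL_sub, hg.wD_eq hα (hz1 z hz) (hz1 z hz), hgh (ball_subset_closedBall hz), sub_zero]
  have hw : ∀ z ∈ ball (0:ℂ) 1, wD (Tcg 1 h) z = wD (Kn 0 g) z - Kn 1 (outF g) z := fun z hz =>
    wD_of_hasFDerivAt (hd z hz)
  have c1 : (0:ℝ) < 1 - α := by linarith [hα.2]
  have c2 := hα.1
  have hH3 : 0 ≤ 4 / (1 - α) * (3 * N) := by positivity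
  have hHL : ∀ z ∈ ball (0:ℂ) 1, ∀ z' ∈ ball (0:ℂ) 1, ‖Kn 1 (outF g) z - Kn 1 (outF g) z'‖ ≤
      (2 / α + 1) * (4 / (1 - α) * (3 * N)) * ‖z - z'‖ ^ α := fun z hz z' hz' =>
    HL hα hH3 (fun w hw => Kn_hasDerivAt hA (outF_zero g) 1 (by simpa using hw))
      (fun w hw => outF_K2 hα hg hw) (hz1 z hz) (hz1 z' hz')
  have p4 : (0:ℝ) < 4 ^ α := by positivity
  have q1 : 0 ≤ 2 / α * 4 ^ α := by positivity
  have q2 : 0 ≤ (2 / α + 1) * (4 / (1 - α)) := by positivity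
  have q3 : 0 ≤ 10/α+40/(1-α) := by positivity
  refine ⟨fun z hz => ⟨(hd z hz).differentiableAt, wDbar_of_hasFDerivAt (hd z hz), ?_⟩, fun z hz z' hz' => ?_⟩
  · rw [hw z hz]
    have b1 := hg.sup hα (hz1 z hz)
    have b2 := hHL z hz 0 (by simp)
    have b3 := outF_K1 hα hg
    have b4 : ‖z - 0‖ ^ α ≤ 1 := Real.rpow_le_one (norm_nonneg _) (by simpa using (hz1 z hz).le) c2.le
    have b5 : ‖Kn 1 (outF g) z‖ ≤ ‖Kn 1 (outF g) 0‖ + ‖Kn 1 (outF g) z - Kn 1 (outF g) 0‖ := by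
      have := norm_add_le (Kn 1 (outF g) 0) (Kn 1 (outF g) z - Kn 1 (outF g) 0)
      simpa using this
    have b6 : (2 / α + 1) * (4 / (1 - α) * (3 * N)) * ‖z - 0‖ ^ α ≤ (2 / α + 1) * (4 / (1 - α)) * (3 * N) := by
      calc _ ≤ (2 / α + 1) * (4 / (1 - α) * (3 * N)) * 1 := by gcongr
        _ = _ := by ring
    refine (norm_sub_le _ _).trans ?_
    unfold C0
    have := mul_nonneg q1 hN
    have := mul_nonneg q2 hN
    have := mul_nonneg q3 hN
    nlinarith
  · rw [hw z hz, hw z' hz']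
    have b1 := hg.hol hα (hz1 z hz) (hz1 z' hz')
    have b2 := hHL z hz z' hz'
    have e : wD (Kn 0 g) z - Kn 1 (outF g) z - (wD (Kn 0 g) z' - Kn 1 (outF g) z') =
      (wD (Kn 0 g) z - wD (Kn 0 g) z') - (Kn 1 (outF g) z - Kn 1 (outF g) z') := by ring
    rw [e]
    refine (norm_sub_le _ _).trans ((add_le_add b1 b2).trans ?_)
    rw [← add_mul]
    gcongr
    unfold C0
    have := mul_nonneg q1 hN
    have := mul_nonneg q2 hN
    have := mul_nonneg q3 hN
    nlinarith



/-- Full `C^{k+α}` norm at most `N` on `S`. -/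
def FN (S : Set ℂ) (α : ℝ) : ℕ → ℝ → (ℂ → ℂ) → Prop
  | 0, N, f => (∀ z ∈ S, ‖f z‖ ≤ N) ∧ ∀ z ∈ S, ∀ z' ∈ S, ‖f z - f z'‖ ≤ N * ‖z - z'‖ ^ α
  | (k+1), N, f => ((∀ z ∈ S, ‖f z‖ ≤ N) ∧ ∀ z ∈ S, ∀ z' ∈ S, ‖f z - f z'‖ ≤ N * ‖z - z'‖ ^ α) ∧
      FN S α k N (wD f) ∧ FN S α k N (wDbar f)

section
variable {S V : Set ℂ} {α N M : ℝ}

theorem FN.to0 {k : ℕ} {f : ℂ → ℂ} (h : FN S α k N f) : FN S α 0 N f := by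
  cases k with
  | zero => exact h
  | succ k => exact h.1

theorem FN.down (k : ℕ) : ∀ {f : ℂ → ℂ}, FN S α (k+1) N f → FN S α k N f := by
  induction k with
  | zero => intro f h; exact h.1
  | succ k ih => intro f h; exact ⟨h.1, ih h.2.1, ih h.2.2⟩

theorem FN.mono (hNM : N ≤ M) (k : ℕ) : ∀ {f : ℂ → ℂ}, FN S α k N f → FN S α k M f := by
  have h0 : ∀ {f : ℂ → ℂ}, FN S α 0 N f → FN S α 0 M f := fun {f} h =>
    ⟨fun z hz => (h.1 z hz).trans hNM, fun z hz z' hz' => (h.2 z hz z' hz').trans (by gcongr)⟩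
  induction k with
  | zero => intro f h; exact h0 h
  | succ k ih => intro f h; exact ⟨h0 h.1, ih h.2.1, ih h.2.2⟩

theorem FN.subset {S' : Set ℂ} (hS : S' ⊆ S) (k : ℕ) : ∀ {f : ℂ → ℂ}, FN S α k N f → FN S' α k N f := by
  have h0 : ∀ {f : ℂ → ℂ}, FN S α 0 N f → FN S' α 0 N f := fun {f} h =>
    ⟨fun z hz => h.1 z (hS hz), fun z hz z' hz' => h.2 z (hS hz) z' (hS hz')⟩
  induction k with
  | zero => intro f h; exact h0 h
  | succ k ih => intro f h; exact ⟨h0 h.1, ih h.2.1, ih h.2.2⟩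

theorem FN.congr (hV : IsOpen V) (hS : S ⊆ V) (k : ℕ) : ∀ {f g : ℂ → ℂ}, Set.EqOn f g V → FN S α k N f →
    FN S α k N g := by
  have h0 : ∀ {f g : ℂ → ℂ}, Set.EqOn f g V → FN S α 0 N f → FN S α 0 N g := fun {f g} e h =>
    ⟨fun z hz => by rw [← e (hS hz)]; exact h.1 z hz, fun z hz z' hz' => by
      rw [← e (hS hz), ← e (hS hz')]; exact h.2 z hz z' hz'⟩
  induction k with
  | zero => intro f g e h; exact h0 e h
  | succ k ih => intro f g e h; exact ⟨h0 e h.1, ih (wD_eqOn hV e) h.2.1, ih (wDbar_eqOn hV e) h.2.2⟩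

theorem FN.add (hV : IsOpen V) (hS : S ⊆ V) (k : ℕ) : ∀ {f g : ℂ → ℂ}, ContDiffOn ℝ k f V → ContDiffOn ℝ k g V →
    FN S α k N f → FN S α k M g → FN S α k (N + M) (fun w => f w + g w) := by
  have h0 : ∀ {f g : ℂ → ℂ}, FN S α 0 N f → FN S α 0 M g → FN S α 0 (N + M) (fun w => f w + g w) :=
    fun {f g} hf hg =>
    ⟨fun z hz => (norm_add_le _ _).trans (add_le_add (hf.1 z hz) (hg.1 z hz)), fun z hz z' hz' => by
      dsimp only
      rw [add_mul, show f z + g z - (f z' + g z') = (f z - f z') + (g z - g z') by ring]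
      exact (norm_add_le _ _).trans (add_le_add (hf.2 z hz z' hz') (hg.2 z hz z' hz'))⟩
  induction k with
  | zero => intro f g _ _ hf hg; exact h0 hf hg
  | succ k ih =>
    intro f g cf cg hf hg
    refine ⟨h0 hf.1 hg.1, ?_, ?_⟩
    · refine FN.congr hV hS k (fun z hz => ?_) (ih (contDiffOn_wD hV cf) (contDiffOn_wD hV cg) hf.2.1 hg.2.1)
      exact (wD_add (diffAt_of_contDiffOn hV cf hz) (diffAt_of_contDiffOn hV cg hz)).symm
    · refine FN.congr hV hS k (fun z hz => ?_) (ih (contDiffOn_wDbar hV cf) (contDiffOn_wDbar hV cg) hf.2.2 hg.2.2)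
      exact (wDbar_add (diffAt_of_contDiffOn hV cf hz) (diffAt_of_contDiffOn hV cg hz)).symm

theorem FN.mul (hN : 0 ≤ N) (hM : 0 ≤ M) (hV : IsOpen V) (hS : S ⊆ V) (k : ℕ) : ∀ {f g : ℂ → ℂ}, ContDiffOn ℝ k f V → ContDiffOn ℝ k g V →
    FN S α k N f → FN S α k M g → FN S α k (2^(k+1) * (N * M)) (fun w => f w * g w) := by
  have hNM := mul_nonneg hN hM
  have h0 : ∀ {f g : ℂ → ℂ}, FN S α 0 N f → FN S α 0 M g → FN S α 0 (2 * (N * M)) (fun w => f w * g w) :=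
    fun {f g} hf hg => ⟨fun z hz => by
      rw [norm_mul]
      calc _ ≤ N * M := mul_le_mul (hf.1 z hz) (hg.1 z hz) (norm_nonneg _) hN
        _ ≤ _ := by linarith, fun z hz z' hz' => by
      dsimp only
      rw [show f z * g z - (f z' * g z') = (f z - f z') * g z + f z' * (g z - g z') by ring]
      refine (norm_add_le _ _).trans ?_
      rw [norm_mul, norm_mul]
      calc _ ≤ (N * ‖z - z'‖ ^ α) * M + N * (M * ‖z - z'‖ ^ α) := by
            have p : 0 ≤ ‖z - z'‖ ^ α := Real.rpow_nonneg (norm_nonneg _) _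
            exact add_le_add (mul_le_mul (hf.2 z hz z' hz') (hg.1 z hz) (norm_nonneg _) (by positivity))
              (mul_le_mul (hf.1 z' hz') (hg.2 z hz z' hz') (norm_nonneg _) hN)
        _ = _ := by ring⟩
  induction k with
  | zero => intro f g _ _ hf hg; simpa using h0 hf hg
  | succ k ih =>
    intro f g cf cg hf hg
    have cf' : ContDiffOn ℝ k f V := cf.of_le (by norm_cast; omega)
    have cg' : ContDiffOn ℝ k g V := cg.of_le (by norm_cast; omega)
    have e2 : (2:ℝ)^(k+1+1) * (N * M) = 2^(k+1) * (N * M) + 2^(k+1) * (N * M) := by ring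
    refine ⟨FN.mono ?_ 0 (h0 hf.1 hg.1), ?_, ?_⟩
    · have : (2:ℝ) ≤ 2^(k+1+1) := by
        calc (2:ℝ) = 2^1 := by norm_num
          _ ≤ _ := pow_le_pow_right₀ (by norm_num) (by omega)
      gcongr
    · rw [e2]
      refine FN.congr hV hS k (fun z hz => ?_) (FN.add hV hS k 
        ((contDiffOn_wD hV cf).mul cg') (cf'.mul (contDiffOn_wD hV cg))
        (ih (contDiffOn_wD hV cf) cg' hf.2.1 (FN.down k hg))
        (ih cf' (contDiffOn_wD hV cg) (FN.down k hf) hg.2.1))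
      rw [wD_mul (diffAt_of_contDiffOn hV cf hz) (diffAt_of_contDiffOn hV cg hz)]
    · rw [e2]
      refine FN.congr hV hS k (fun z hz => ?_) (FN.add hV hS k 
        ((contDiffOn_wDbar hV cf).mul cg') (cf'.mul (contDiffOn_wDbar hV cg))
        (ih (contDiffOn_wDbar hV cf) cg' hf.2.2 (FN.down k hg))
        (ih cf' (contDiffOn_wDbar hV cg) (FN.down k hf) hg.2.2))
      rw [wDbar_mul (diffAt_of_contDiffOn hV cf hz) (diffAt_of_contDiffOn hV cg hz)]

theorem wD_const (c z : ℂ) : wD (fun _ => c) z = 0 := wD_of_hasDerivAt (hasDerivAt_const z c)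
theorem wDbar_const (c z : ℂ) : wDbar (fun _ => c) z = 0 := wDbar_of_hasDerivAt (hasDerivAt_const z c)

theorem FN.const (k : ℕ) : ∀ (c : ℂ), ‖c‖ ≤ N → FN S α k N (fun _ => c) := by
  have h0 : ∀ c : ℂ, ‖c‖ ≤ N → FN S α 0 N (fun _ => c) := fun c hc =>
    ⟨fun z hz => hc, fun z hz z' hz' => by
      simp; exact mul_nonneg ((norm_nonneg _).trans hc) (Real.rpow_nonneg (norm_nonneg _) _)⟩
  induction k with
  | zero => exact h0
  | succ k ih =>
    intro c hc
    refine ⟨h0 c hc, ?_, ?_⟩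
    · rw [show wD (fun _ => c) = fun _ => 0 from funext (wD_const c)]
      exact ih 0 (by simpa using (norm_nonneg _).trans hc)
    · rw [show wDbar (fun _ => c) = fun _ => 0 from funext (wDbar_const c)]
      exact ih 0 (by simpa using (norm_nonneg _).trans hc)

theorem lin_le_holder (hα : α ∈ Set.Ioo (0:ℝ) 1) {z z' : ℂ} (hz : z ∈ closedBall (0:ℂ) 1) (hz' : z' ∈ closedBall (0:ℂ) 1) :
    ‖z - z'‖ ≤ 2 * ‖z - z'‖ ^ α := by
  have h2 : ‖z - z'‖ ≤ 2 := by
    have := norm_sub_le z z'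
    rw [mem_closedBall_zero_iff] at hz hz'; linarith
  have := le_rpow_of_le_one hα (x := ‖z - z'‖ / 2) (by positivity) (by linarith)
  have h3 : (‖z - z'‖ / 2) ^ α ≤ ‖z - z'‖ ^ α := Real.rpow_le_rpow (by positivity) (by linarith [norm_nonneg (z - z')]) hα.1.le
  linarith

theorem wD_cj (z : ℂ) : wD (fun w => (starRingEnd ℂ) w) z = 0 := by
  have := wD_of_hasFDerivAt (hasFDerivAt_conj_sub 0 z); simpa using this
theorem wDbar_cj (z : ℂ) : wDbar (fun w => (starRingEnd ℂ) w) z = 1 := by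
  have := wDbar_of_hasFDerivAt (hasFDerivAt_conj_sub 0 z); simpa using this

theorem FN.cj (hα : α ∈ Set.Ioo (0:ℝ) 1) (k : ℕ) : FN (closedBall 0 1) α k 2 (fun w => (starRingEnd ℂ) w) := by
  have h0 : FN (closedBall 0 1) α 0 2 (fun w => (starRingEnd ℂ) w) := 
    ⟨fun z hz => by simp at hz ⊢; linarith, fun z hz z' hz' => by
      rw [← map_sub, RCLike.norm_conj]; exact lin_le_holder hα hz hz'⟩
  cases k with
  | zero => exact h0
  | succ k =>
    refine ⟨h0, ?_, ?_⟩
    · rw [show wD (fun w => (starRingEnd ℂ) w) = fun _ => 0 from funext wD_cj]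
      exact FN.const k 0 (by simp)
    · rw [show wDbar (fun w => (starRingEnd ℂ) w) = fun _ => 1 from funext wDbar_cj]
      exact FN.const k 1 (by simp)

theorem FN.wDbar_iter (j : ℕ) : ∀ {k : ℕ} {f : ℂ → ℂ}, FN S α (k + j) N f → FN S α k N (wDbar^[j] f) := by
  induction j with
  | zero => intro k f h; exact h
  | succ j ih => 
    intro k f h
    rw [Function.iterate_succ_apply]
    exact ih h.2.2
theorem FN.wD_iter (j : ℕ) : ∀ {k : ℕ} {f : ℂ → ℂ}, FN S α (k + j) N f → FN S α k N (wD^[j] f) := by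
  induction j with
  | zero => intro k f h; exact h
  | succ j ih => 
    intro k f h
    rw [Function.iterate_succ_apply]
    exact ih h.2.1

theorem FN.wDij {k i j : ℕ} {f : ℂ → ℂ} (h : FN S α k N f) (hij : i + j ≤ k) : FN S α 0 N (wDij i j f) := by
  obtain ⟨m, rfl⟩ := Nat.exists_eq_add_of_le hij
  rw [show i + j + m = m + i + j by ring] at h
  exact (FN.wD_iter i (FN.wDbar_iter j h)).to0

theorem contDiff_cj {n : ℕ} : ContDiff ℝ n (fun w : ℂ => (starRingEnd ℂ) w) := 
  Complex.conjCLE.contDiff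
end



theorem wDbar_Kn0' {φ : ℂ → ℂ} (h : ContDiff ℝ 1 φ) (hc : HasCompactSupport φ) :
    wDbar (Kn 0 φ) = Kn 0 (wDbar φ) := by
  have hA : ∀ v : ℂ, Adm (fun ζ => fderiv ℝ φ ζ v) := fun v =>
    Adm_of_cont ((h.continuous_fderiv (by norm_num)).clm_apply continuous_const)
      ((hc.fderiv ℝ).mono (fun ζ hζ h0 => hζ (by have h0' : fderiv ℝ φ ζ = 0 := h0
                                                 simp [h0'])))
  ext z
  simp only [wDbar, Kn0_fderiv h hc]
  have e : (fun ζ => (fderiv ℝ φ ζ 1 + I * fderiv ℝ φ ζ I) / 2) =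
      fun ζ => (1/2) * (fderiv ℝ φ ζ 1 + I * fderiv ℝ φ ζ I) := by ext; ring
  have e2 : wDbar φ = fun ζ => (1/2) * (fderiv ℝ φ ζ 1 + I * fderiv ℝ φ ζ I) := e
  rw [show Kn 0 (wDbar φ) z = _ from congrArg (fun f => Kn 0 f z) e2, Kn_cmul,
    Kn0_add (hA 1) ((hA I).cmul I), Kn_cmul]
  ring

theorem Kn_tendsto {F : ℕ → ℂ → ℂ} {M δ : ℝ} {z : ℂ} (hδ : 0 < δ) (m : ℕ) (hF : ∀ n, Adm (F n))
    (hM : ∀ n ζ, ‖F n ζ‖ ≤ M) (hs : ∀ n, ∀ ζ ∉ ball (0:ℂ) 1, F n ζ = 0)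
    (h0 : ∀ n, ∀ ζ ∈ ball z δ, F n ζ = 0) (he : ∀ ζ, ∀ᶠ n in Filter.atTop, F n ζ = 0) :
    Filter.Tendsto (fun n => Kn m (F n) z) Filter.atTop (nhds 0) := by
  have hM0 : 0 ≤ M := (norm_nonneg _).trans (hM 0 0)
  have h1 : Filter.Tendsto (fun n => ∫ ζ, F n ζ / (ζ - z)^(m+1)) Filter.atTop (nhds (∫ ζ : ℂ, (0:ℂ))) := by
    refine tendsto_integral_of_dominated_convergence
      ((ball (0:ℂ) 1).indicator (fun _ => M / δ^(m+1))) (fun n => (hF n).meas_div (m+1) z) ?_ ?_ ?_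
    · rw [integrable_indicator_iff measurableSet_ball]
      exact integrableOn_const (measure_ball_lt_top.ne) (by simp)
    · intro n
      refine Filter.Eventually.of_forall fun ζ => ?_
      by_cases h1 : ζ ∈ ball (0:ℂ) 1
      · rw [Set.indicator_of_mem h1]
        by_cases h2 : ζ ∈ ball z δ
        · rw [h0 n ζ h2]; simp; positivity
        · rw [norm_div, norm_pow]
          rw [mem_ball, dist_eq_norm, not_lt] at h2
          gcongr
          exact hM n ζ
      · rw [hs n ζ h1, Set.indicator_of_notMem h1]; simp
    · refine Filter.Eventually.of_forall fun ζ => ?_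
      refine tendsto_const_nhds.congr' ?_
      filter_upwards [he ζ] with n hn
      rw [hn]; simp
  have := (h1.const_mul (m.factorial : ℂ)).const_mul (-(Real.pi : ℂ)⁻¹)
  simpa [Kn] using this

noncomputable def tau (n : ℕ) (ζ : ℂ) : ℝ := n * (1 - ‖ζ‖^2) - 1
noncomputable def cut (n : ℕ) (ζ : ℂ) : ℂ := ((Real.smoothTransition (tau n ζ) : ℝ) : ℂ)

theorem tau_contDiff (n : ℕ) : ContDiff ℝ 1 (tau n) := by
  unfold tau
  exact (contDiff_const.mul (contDiff_const.sub (contDiff_norm_sq ℝ))).sub contDiff_const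

theorem cut_contDiff (n : ℕ) : ContDiff ℝ 1 (cut n) := by
  unfold cut
  exact ofRealCLM.contDiff.comp (Real.smoothTransition.contDiff.comp (tau_contDiff n))

theorem cut_hasFDerivAt (n : ℕ) (ζ : ℂ) : HasFDerivAt (cut n)
    (cL (-(n * deriv Real.smoothTransition (tau n ζ) : ℝ) * (starRingEnd ℂ) ζ)
      (-(n * deriv Real.smoothTransition (tau n ζ) : ℝ) * ζ)) ζ := by
  have h1 : HasDerivAt Real.smoothTransition (deriv Real.smoothTransition (tau n ζ)) (tau n ζ) :=
    ((Real.smoothTransition.contDiff (n := 1)).differentiable (by norm_num) _).hasDerivAt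
  have h2 : HasFDerivAt (fun w : ℂ => ‖w‖^2) (2 • innerSL ℝ ζ) ζ := by
    have := (hasStrictFDerivAt_norm_sq (F := ℂ) ζ).hasFDerivAt
    simpa using this
  have h3 := ((h2.const_sub 1).const_mul (n:ℝ)).sub_const 1
  have h4 := h1.comp_hasFDerivAt ζ h3
  have h5 := ofRealCLM.hasFDerivAt.comp ζ h4
  refine HasFDerivAt.congr_fderiv h5 ?_
  ext v
  rw [cL_apply]
  simp only [ContinuousLinearMap.comp_apply, ContinuousLinearMap.smul_apply, ContinuousLinearMap.neg_apply,
    innerSL_apply_apply, ofRealCLM_apply, Complex.inner, smul_eq_mul, nsmul_eq_mul]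
  have e : (((v * (starRingEnd ℂ) ζ).re : ℝ) : ℂ) = (v * (starRingEnd ℂ) ζ + (starRingEnd ℂ) v * ζ) / 2 := by
    rw [Complex.re_eq_add_conj]; simp
  push_cast
  rw [e]; ring

theorem st_deriv_bound : ∃ K : ℝ, 0 ≤ K ∧ ∀ t, |deriv Real.smoothTransition t * (t+1)| ≤ K := by
  have hc : Continuous (fun t => |deriv Real.smoothTransition t * (t+1)|) :=
    (((Real.smoothTransition.contDiff (n := 1)).continuous_deriv (by norm_num)).mul
      (continuous_id.add continuous_const)).abs
  obtain ⟨K, hK⟩ := (isCompact_Icc (a := (0:ℝ)) (b := 1)).bddAbove_image hc.continuousOn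
  refine ⟨max K 0, le_max_right _ _, fun t => ?_⟩
  by_cases ht : t ∈ Set.Icc (0:ℝ) 1
  · exact (hK (Set.mem_image_of_mem _ ht)).trans (le_max_left _ _)
  · have : deriv Real.smoothTransition t = 0 := by
      rcases lt_or_ge t 0 with h | h
      · have : Real.smoothTransition =ᶠ[nhds t] fun _ => 0 := by
          filter_upwards [Iio_mem_nhds h] with x hx using Real.smoothTransition.zero_of_nonpos (le_of_lt hx)
        rw [this.deriv_eq]; simp
      · have h1 : 1 < t := by
          by_contra h'; exact ht ⟨h, by linarith⟩
        have : Real.smoothTransition =ᶠ[nhds t] fun _ => 1 := by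
          filter_upwards [Ioi_mem_nhds h1] with x hx using Real.smoothTransition.one_of_one_le (le_of_lt hx)
        rw [this.deriv_eq]; simp
    rw [this]; simp

theorem cut_zero {n : ℕ} {ζ : ℂ} (h : tau n ζ ≤ 0) : cut n ζ = 0 := by
  simp [cut, Real.smoothTransition.zero_of_nonpos h]
theorem cut_one {n : ℕ} {ζ : ℂ} (h : 1 ≤ tau n ζ) : cut n ζ = 1 := by
  simp [cut, Real.smoothTransition.one_of_one_le h]
theorem cut_norm (n : ℕ) (ζ : ℂ) : ‖cut n ζ‖ ≤ 1 ∧ ‖1 - cut n ζ‖ ≤ 1 := by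
  have h1 := Real.smoothTransition.nonneg (tau n ζ)
  have h2 := Real.smoothTransition.le_one (tau n ζ)
  unfold cut
  constructor
  · rw [norm_real, Real.norm_eq_abs, abs_of_nonneg h1]; exact h2
  · rw [← Complex.ofReal_one, ← Complex.ofReal_sub, norm_real, Real.norm_eq_abs, abs_of_nonneg (by linarith)]; linarith
theorem tau_neg {n : ℕ} {ζ : ℂ} (h : 1 ≤ ‖ζ‖) : tau n ζ < 0 := by
  unfold tau
  have : (n:ℝ) * (1 - ‖ζ‖^2) ≤ 0 := mul_nonpos_of_nonneg_of_nonpos (by positivity) (by nlinarith)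
  linarith
theorem tau_big {ρ : ℝ} (h0 : 0 ≤ ρ) (h : ρ < 1) : ∃ n0 : ℕ, ∀ n ≥ n0, ∀ ζ : ℂ, ‖ζ‖ ≤ ρ → 1 < tau n ζ := by
  obtain ⟨n0, hn0⟩ := exists_nat_gt (2 / (1 - ρ^2))
  have hp : 0 < 1 - ρ^2 := by nlinarith
  refine ⟨n0, fun n hn ζ hζ => ?_⟩
  have h1 : 2 / (1 - ρ^2) < n := hn0.trans_le (by exact_mod_cast hn)
  rw [div_lt_iff₀ hp] at h1
  unfold tau
  have : (n:ℝ) * (1 - ρ^2) ≤ n * (1 - ‖ζ‖^2) := by gcongr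
  linarith



noncomputable def uop (h : ℂ → ℂ) (w : ℂ) : ℂ :=
  wD h w - ((starRingEnd ℂ) w)^2 * wDbar h w - 2 * (starRingEnd ℂ) w * h w

theorem wDbar_cj2 (z : ℂ) : wDbar (fun w => ((starRingEnd ℂ) w)^2) z = 2 * (starRingEnd ℂ) z := by
  have hd : DifferentiableAt ℝ (fun w : ℂ => (starRingEnd ℂ) w) z := 
    (contDiff_cj (n := 1)).differentiable (by norm_num) z
  have : (fun w : ℂ => ((starRingEnd ℂ) w)^2) = fun w => (starRingEnd ℂ) w * (starRingEnd ℂ) w := by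
    ext; ring
  rw [this, wDbar_mul hd hd, wDbar_cj]; ring

section
variable {U : Set ℂ} {h : ℂ → ℂ}

theorem Adm_ind {f : ℂ → ℂ} (hf : ContinuousOn f (closedBall 0 1)) : Adm ((ball (0:ℂ) 1).indicator f) := by
  obtain ⟨M, hM⟩ := (isCompact_closedBall (0:ℂ) 1).exists_bound_of_continuousOn hf
  refine ⟨?_, ⟨M, (norm_nonneg _).trans (hM 0 (by simp)), fun ζ => ?_⟩, 1, by norm_num, fun ζ h => ?_⟩
  · rw [aestronglyMeasurable_indicator_iff measurableSet_ball]
    exact (hf.mono ball_subset_closedBall).aestronglyMeasurable measurableSet_ball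
  · by_cases hh : ζ ∈ ball (0:ℂ) 1
    · rw [Set.indicator_of_mem hh]; exact hM ζ (ball_subset_closedBall hh)
    · rw [Set.indicator_of_notMem hh]; simpa using (norm_nonneg _).trans (hM 0 (by simp))
  · exact Set.indicator_of_notMem (by simpa using h) _

theorem Tcg1_eq (h : ℂ → ℂ) (z : ℂ) : Tcg 1 h z = Kn 0 ((ball (0:ℂ) 1).indicator h) z := by
  rw [Tcg_eq, Kn_congr_ae (indicator_closedBall_ae h 1)]

noncomputable def phi (h : ℂ → ℂ) (n : ℕ) (ζ : ℂ) : ℂ := cut n ζ * h ζ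

theorem tau_cont (n : ℕ) : Continuous (tau n) := (tau_contDiff n).continuous

theorem phi_contDiff (hU : IsOpen U) (hs : closedBall 0 1 ⊆ U) (hh : ContDiffOn ℝ 1 h U) (n : ℕ) :
    ContDiff ℝ 1 (phi h n) := by
  rw [contDiff_iff_contDiffAt]
  intro ζ
  by_cases h1 : ζ ∈ closedBall (0:ℂ) 1
  · exact (cut_contDiff n).contDiffAt.mul (hh.contDiffAt (hU.mem_nhds (hs h1)))
  · have ht : tau n ζ < 0 := tau_neg (by simp at h1; linarith)
    have : phi h n =ᶠ[nhds ζ] fun _ => 0 := by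
      filter_upwards [(tau_cont n).continuousAt.preimage_mem_nhds (Iio_mem_nhds ht)] with w hw
      simp [phi, cut_zero (le_of_lt hw)]
    exact contDiffAt_const.congr_of_eventuallyEq this

theorem phi_zero {n : ℕ} {ζ : ℂ} (h1 : 1 ≤ ‖ζ‖) : phi h n ζ = 0 := by
  simp [phi, cut_zero (tau_neg h1).le]

theorem phi_cs (n : ℕ) : HasCompactSupport (phi h n) := by
  apply HasCompactSupport.of_support_subset_isCompact (isCompact_closedBall (0:ℂ) 1)
  intro ζ hζ
  by_contra h0
  exact hζ (phi_zero (by simp at h0; linarith))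

/-- error terms -/
noncomputable def Vn (h : ℂ → ℂ) (n : ℕ) (ζ : ℂ) : ℂ :=
  (wD (phi h n) ζ - wDbar (fun w => ((starRingEnd ℂ) w)^2 * phi h n w) ζ) - (ball (0:ℂ) 1).indicator (uop h) ζ
noncomputable def Rn (h : ℂ → ℂ) (n : ℕ) (ζ : ℂ) : ℂ :=
  (ball (0:ℂ) 1).indicator h ζ - phi h n ζ

theorem Vn_in (hU : IsOpen U) (hs : closedBall 0 1 ⊆ U) (hh : ContDiffOn ℝ 1 h U) (n : ℕ) {ζ : ℂ} (hζ : ζ ∈ ball (0:ℂ) 1) :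
    Vn h n ζ = -(((deriv Real.smoothTransition (tau n ζ)) * (tau n ζ + 1) : ℝ) : ℂ) * (starRingEnd ℂ) ζ * h ζ +
      (cut n ζ - 1) * uop h ζ := by
  have dh : DifferentiableAt ℝ h ζ := diffAt_of_contDiffOn (n := 0) hU (by simpa using hh) (hs (ball_subset_closedBall hζ))
  have dc := (cut_hasFDerivAt n ζ).differentiableAt
  have dφ : DifferentiableAt ℝ (phi h n) ζ := dc.mul dh
  have dj : DifferentiableAt ℝ (fun w : ℂ => ((starRingEnd ℂ) w)^2) ζ :=
    ((contDiff_cj (n := 1)).differentiable (by norm_num) ζ).pow 2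
  unfold Vn
  rw [Set.indicator_of_mem hζ, wDbar_mul dj dφ, wDbar_cj2]
  have e1 : wD (phi h n) ζ = _ := wD_mul dc dh
  have e2 : wDbar (phi h n) ζ = _ := wDbar_mul dc dh
  rw [e1, e2, wD_of_hasFDerivAt (cut_hasFDerivAt n ζ), wDbar_of_hasFDerivAt (cut_hasFDerivAt n ζ)]
  have e3 : (((tau n ζ : ℝ)) : ℂ) + 1 = n * (1 - ζ * (starRingEnd ℂ) ζ) := by
    rw [Complex.mul_conj, normSq_eq_norm_sq, tau]; push_cast; ring
  unfold uop
  push_cast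
  rw [e3]
  simp only [phi]
  ring

theorem Vn_out (n : ℕ) {ζ : ℂ} (hζ : ζ ∉ ball (0:ℂ) 1) : Vn h n ζ = 0 := by
  have ht : tau n ζ < 0 := tau_neg (by simpa using hζ)
  have e : phi h n =ᶠ[nhds ζ] fun _ => 0 := by
    filter_upwards [(tau_cont n).continuousAt.preimage_mem_nhds (Iio_mem_nhds ht)] with w hw
    simp [phi, cut_zero (le_of_lt hw)]
  have e' : (fun w => ((starRingEnd ℂ) w)^2 * phi h n w) =ᶠ[nhds ζ] fun _ => 0 := by
    filter_upwards [e] with w hw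
    rw [hw]; simp
  rw [Vn, wD_congr e, wDbar_congr e', wD_const, wDbar_const, Set.indicator_of_notMem hζ]; simp

theorem Rn_out (n : ℕ) {ζ : ℂ} (hζ : ζ ∉ ball (0:ℂ) 1) : Rn h n ζ = 0 := by
  rw [Rn, Set.indicator_of_notMem hζ, phi_zero (by simpa using hζ)]; simp

theorem Rn_in (n : ℕ) {ζ : ℂ} (hζ : ζ ∈ ball (0:ℂ) 1) : Rn h n ζ = (1 - cut n ζ) * h ζ := by
  rw [Rn, Set.indicator_of_mem hζ, phi]; ring

theorem st_deriv_zero {t : ℝ} (h1 : 1 < t) : deriv Real.smoothTransition t = 0 := by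
  have : Real.smoothTransition =ᶠ[nhds t] fun _ => 1 := by
    filter_upwards [Ioi_mem_nhds h1] with x hx using Real.smoothTransition.one_of_one_le (le_of_lt hx)
  rw [this.deriv_eq]; simp

theorem uop_cont (hU : IsOpen U) (hs : closedBall 0 1 ⊆ U) (hh : ContDiffOn ℝ 1 h U) :
    ContinuousOn (uop h) U := by
  have c1 : ContinuousOn (wD h) U := (contDiffOn_wD (n := 0) hU (by simpa using hh)).continuousOn
  have c2 : ContinuousOn (wDbar h) U := (contDiffOn_wDbar (n := 0) hU (by simpa using hh)).continuousOn
  have c3 : Continuous (fun w : ℂ => (starRingEnd ℂ) w) := continuous_conj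
  unfold uop
  exact (c1.sub ((c3.pow 2).continuousOn.mul c2)).sub ((continuous_const.mul c3).continuousOn.mul hh.continuousOn)

theorem wD_Tcg (hU : IsOpen U) (hs : closedBall 0 1 ⊆ U) (hh : ContDiffOn ℝ 1 h U) {z : ℂ} (hz : z ∈ ball (0:ℂ) 1) :
    wD (Tcg 1 h) z = h z * ((starRingEnd ℂ) z)^2 + Tcg 1 (uop h) z := by
  have hz1 : ‖z‖ < 1 := by simpa using hz
  have ch : ContinuousOn h (closedBall 0 1) := hh.continuousOn.mono hs
  have cu : ContinuousOn (uop h) (closedBall 0 1) := (uop_cont hU hs hh).mono hs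
  obtain ⟨M1, hM1⟩ := (isCompact_closedBall (0:ℂ) 1).exists_bound_of_continuousOn ch
  obtain ⟨M2, hM2⟩ := (isCompact_closedBall (0:ℂ) 1).exists_bound_of_continuousOn cu
  obtain ⟨K, hK0, hK⟩ := st_deriv_bound
  have hM10 : 0 ≤ M1 := (norm_nonneg _).trans (hM1 0 (by simp))
  have hM20 : 0 ≤ M2 := (norm_nonneg _).trans (hM2 0 (by simp))
  set δ := (1 - ‖z‖) / 2 with hδ
  have hδ0 : 0 < δ := by rw [hδ]; linarith
  have hρ : ∀ ζ ∈ ball z δ, ‖ζ‖ ≤ (1 + ‖z‖) / 2 := by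
    intro ζ hζ
    rw [mem_ball, dist_eq_norm] at hζ
    have : ‖ζ‖ ≤ ‖ζ - z‖ + ‖z‖ := by simpa using norm_add_le (ζ - z) z
    linarith
  obtain ⟨n0, hn0⟩ := tau_big (ρ := (1 + ‖z‖)/2) (by positivity) (by linarith)
  have cφ := phi_contDiff hU hs hh
  have cj : ContDiff ℝ 1 (fun w : ℂ => ((starRingEnd ℂ) w)^2) := (contDiff_cj (n := 1)).pow 2
  have cψ : ∀ n, ContDiff ℝ 1 (fun w => ((starRingEnd ℂ) w)^2 * phi h n w) := fun n => cj.mul (cφ n)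
  have sφ : ∀ n, HasCompactSupport (phi h n) := phi_cs
  have sψ : ∀ n, HasCompactSupport (fun w => ((starRingEnd ℂ) w)^2 * phi h n w) := fun n => (sφ n).mul_left
  have aφ : ∀ n, Adm (phi h n) := fun n => Adm_of_cont (cφ n).continuous (sφ n)
  have aW : ∀ n, Adm (wD (phi h n)) := fun n => 
    Adm_of_cont (contDiff_wD (n := 0) (by simpa using cφ n)).continuous (cs_wD (sφ n))
  have aWb : ∀ n, Adm (wDbar (fun w => ((starRingEnd ℂ) w)^2 * phi h n w)) := fun n => by
    refine Adm_of_cont ?_ ?_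
    · have := contDiffOn_wDbar (n := 0) isOpen_univ (contDiffOn_univ.2 (by simpa using cψ n))
      exact (contDiffOn_univ.1 this).continuous
    · refine ((sψ n).fderiv ℝ).mono ?_
      intro ζ hζ h0
      apply hζ
      have h0' : fderiv ℝ (fun w => ((starRingEnd ℂ) w)^2 * phi h n w) ζ = 0 := h0
      simp [wDbar, h0']
  have aU := Adm_ind cu
  have aH := Adm_ind ch
  have aV : ∀ n, Adm (Vn h n) := fun n => ((aW n).sub (aWb n)).sub aU
  have aR : ∀ n, Adm (Rn h n) := fun n => aH.sub (aφ n)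
  -- vanishing where the cutoff is one
  have V0 : ∀ n ζ, ζ ∈ ball (0:ℂ) 1 → 1 < tau n ζ → Vn h n ζ = 0 := fun n ζ h1 h2 => by
    rw [Vn_in hU hs hh n h1, st_deriv_zero h2, cut_one h2.le]; simp
  have R0 : ∀ n ζ, ζ ∈ ball (0:ℂ) 1 → 1 < tau n ζ → Rn h n ζ = 0 := fun n ζ h1 h2 => by
    rw [Rn_in n h1, cut_one h2.le]; simp
  have bsub : ∀ ζ ∈ ball z δ, ζ ∈ ball (0:ℂ) 1 := fun ζ hζ => by
    have := hρ ζ hζ; rw [mem_ball_zero_iff]; linarith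
  have ev : ∀ ζ ∈ ball (0:ℂ) 1, ∀ᶠ n in Filter.atTop, 1 < tau (n + n0) ζ := fun ζ hζ => by
    obtain ⟨n1, hn1⟩ := tau_big (ρ := ‖ζ‖) (by positivity) (by simpa using hζ)
    filter_upwards [Filter.eventually_ge_atTop n1] with n hn using hn1 (n + n0) (by omega) ζ le_rfl
  have t1 := Kn_tendsto (F := fun n => Vn h (n + n0)) (M := K * M1 + M2) hδ0 0 (fun n => aV _) (fun n ζ => by
      by_cases h1 : ζ ∈ ball (0:ℂ) 1
      · rw [Vn_in hU hs hh _ h1]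
        refine (norm_add_le _ _).trans ?_
        have h1' := ball_subset_closedBall h1
        rw [norm_mul, norm_mul, norm_mul, norm_neg, norm_real, RCLike.norm_conj, Real.norm_eq_abs]
        have := (cut_norm (n + n0) ζ).2
        rw [norm_sub_rev] at this
        have hl : ‖ζ‖ ≤ 1 := by simpa using h1'
        gcongr
        · calc _ ≤ K * 1 := by
                gcongr
                exact hK _
            _ = K := mul_one K
        · exact hM1 ζ h1'
        · calc _ ≤ 1 * M2 := by
                gcongr
                exact hM2 ζ h1'
            _ = M2 := one_mul _
      · rw [Vn_out _ h1]; simp; positivity) (fun n ζ h => Vn_out _ h)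
    (fun n ζ hζ => V0 _ ζ (bsub ζ hζ) (hn0 _ (by omega) ζ (hρ ζ hζ))) (fun ζ => by
      by_cases h1 : ζ ∈ ball (0:ℂ) 1
      · filter_upwards [ev ζ h1] with n hn using V0 _ ζ h1 hn
      · exact Filter.Eventually.of_forall fun n => Vn_out _ h1)
  have t2 := Kn_tendsto (F := fun n => Rn h (n + n0)) (M := M1) hδ0 1 (fun n => aR _) (fun n ζ => by
      by_cases h1 : ζ ∈ ball (0:ℂ) 1
      · rw [Rn_in _ h1, norm_mul]
        calc _ ≤ 1 * M1 := by
                gcongr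
                · exact (cut_norm _ _).2
                · exact hM1 ζ (ball_subset_closedBall h1)
            _ = M1 := one_mul _
      · rw [Rn_out _ h1]; simpa using hM10) (fun n ζ h => Rn_out _ h)
    (fun n ζ hζ => R0 _ ζ (bsub ζ hζ) (hn0 _ (by omega) ζ (hρ ζ hζ))) (fun ζ => by
      by_cases h1 : ζ ∈ ball (0:ℂ) 1
      · filter_upwards [ev ζ h1] with n hn using R0 _ ζ h1 hn
      · exact Filter.Eventually.of_forall fun n => Rn_out _ h1)
  have key : ∀ n, wD (Tcg 1 h) z - (h z * ((starRingEnd ℂ) z)^2 + Tcg 1 (uop h) z) =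
      Kn 0 (Vn h (n + n0)) z + Kn 1 (Rn h (n + n0)) z := by
    intro n
    set m := n + n0 with hm
    have e1 : Tcg 1 h = fun w => Kn 0 (phi h m) w + Kn 0 (Rn h m) w := by
      ext w
      rw [← Kn0_add (aφ m) (aR m), Tcg1_eq]
      congr 1; ext ζ; simp only [Rn]; ring
    have dR := Kn_hasDerivAt (aR m) (z := z) (δ := δ)
      (fun ζ hζ => R0 _ ζ (bsub ζ hζ) (hn0 _ (by omega) ζ (hρ ζ hζ))) 0 (mem_ball_self hδ0)
    have dφ : DifferentiableAt ℝ (Kn 0 (phi h m)) z := 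
      (Kn0_contDiff (n := 1) (by simpa using cφ m) (sφ m)).differentiable (by norm_num) z
    rw [e1, wD_add dφ (hasFDerivAt_of_hasDerivAt dR).differentiableAt, wD_of_hasDerivAt dR,
      congrFun (wD_Kn0 (cφ m) (sφ m)) z, Tcg1_eq]
    have e2 : Kn 0 (Vn h m) z = (Kn 0 (wD (phi h m)) z - Kn 0 (wDbar (fun w => ((starRingEnd ℂ) w)^2 * phi h m w)) z)
        - Kn 0 ((ball (0:ℂ) 1).indicator (uop h)) z := by
      rw [← Kn0_sub (aW m) (aWb m), ← Kn0_sub ((aW m).sub (aWb m)) aU]; rfl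
    rw [e2, ← congrFun (wDbar_Kn0' (cψ m) (sψ m)) z, wDbar_Kn0 (cψ m) (fun ζ hζ => by
      rw [phi_zero (by linarith)]; simp) hz1]
    have : phi h m z = h z := by
      rw [phi, cut_one (hn0 m (by omega) z (by linarith)).le, one_mul]
    rw [this]; ring
  have t3 := t1.add t2
  have t4 : Filter.Tendsto (fun n : ℕ => wD (Tcg 1 h) z - (h z * ((starRingEnd ℂ) z)^2 + Tcg 1 (uop h) z)) Filter.atTop (nhds (0 + 0)) :=
    t3.congr (fun n => (key n).symm)
  have := tendsto_nhds_unique t4 tendsto_const_nhds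
  rw [add_zero] at this
  exact sub_eq_zero.1 this.symm
end



theorem lip_of_wirt {S : Set ℂ} (hS : Convex ℝ S) {f : ℂ → ℂ} {A B : ℝ} (hd : ∀ z ∈ S, DifferentiableAt ℝ f z)
    (hA : ∀ z ∈ S, ‖wD f z‖ ≤ A) (hB : ∀ z ∈ S, ‖wDbar f z‖ ≤ B) {z z' : ℂ} (hz : z ∈ S) (hz' : z' ∈ S) :
    ‖f z - f z'‖ ≤ (A + B) * ‖z - z'‖ := by
  refine hS.norm_image_sub_le_of_norm_hasFDerivWithin_le (𝕜 := ℝ) (f' := fun z => cL (wD f z) (wDbar f z))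
    (fun w hw => (hasFDerivAt_wirt (hd w hw)).hasFDerivWithinAt) (fun w hw => ?_) hz' hz
  exact (norm_cL_le _ _).trans (add_le_add (hA w hw) (hB w hw))

theorem FN.nonneg {S : Set ℂ} {α N : ℝ} {k : ℕ} {f : ℂ → ℂ} (h : FN S α k N f) {z : ℂ} (hz : z ∈ S) : 0 ≤ N :=
  (norm_nonneg _).trans (h.to0.1 z hz)

theorem FN.cont {S : Set ℂ} {α N : ℝ} (hα : 0 < α) {f : ℂ → ℂ} (h : FN S α 0 N f) : ContinuousOn f S := by
  intro z hz
  rw [ContinuousWithinAt, tendsto_iff_norm_sub_tendsto_zero]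
  have hc : Filter.Tendsto (fun w : ℂ => N * ‖w - z‖ ^ α) (nhdsWithin z S) (nhds (N * ‖z - z‖ ^ α)) := by
    have : Continuous (fun w : ℂ => N * ‖w - z‖ ^ α) :=
      continuous_const.mul ((continuous_id.sub continuous_const).norm.rpow_const (fun _ => Or.inr hα.le))
    exact this.continuousWithinAt
  rw [sub_self, norm_zero, Real.zero_rpow hα.ne', mul_zero] at hc
  refine squeeze_zero' (Filter.Eventually.of_forall fun _ => norm_nonneg _) ?_ hc
  filter_upwards [self_mem_nhdsWithin] with w hw using h.2 w hw z hz

theorem uop_FN {α : ℝ} (hα : α ∈ Set.Ioo (0:ℝ) 1) (k : ℕ) : ∃ C : ℝ, 0 ≤ C ∧ ∀ (U : Set ℂ) (h : ℂ → ℂ) (N : ℝ), IsOpen U →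
    closedBall 0 1 ⊆ U → ContDiffOn ℝ (k+1:ℕ) h U → FN (closedBall 0 1) α (k+1) N h →
    ContDiffOn ℝ k (uop h) U ∧ FN (closedBall 0 1) α k (C * N) (uop h) := by
  set b : ℝ := 2^(k+1) with hb
  have hb0 : 0 < b := by positivity
  refine ⟨1 + b * (b * (2 * 2) * (b * (1 * 1))) + b * (b * (2 * 2) * 1), by positivity, ?_⟩
  intro U h N hU hs hc hF
  have hN := hF.nonneg (z := 0) (by simp)
  have c0 : ContDiffOn ℝ k h U := hc.of_le (by norm_cast; omega)
  have c1 := contDiffOn_wD hU hc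
  have c2 := contDiffOn_wDbar hU hc
  have cj : ContDiffOn ℝ k (fun w : ℂ => (starRingEnd ℂ) w) U := contDiff_cj.contDiffOn
  have cc : ∀ c : ℂ, ContDiffOn ℝ k (fun w : ℂ => c) U := fun c => contDiffOn_const
  have fj := FN.cj hα k
  have m1 := FN.mul (by norm_num) (by norm_num) hU hs k cj cj fj fj
  have m2 := FN.mul (N := 1) (by norm_num) hN hU hs k (cc (-1)) c2 (FN.const k (-1) (by simp)) hF.2.2
  have m3 := FN.mul (by positivity) (by positivity) hU hs k (cj.mul cj) ((cc (-1)).mul c2) m1 m2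
  have m4 := FN.mul (N := 2) (by norm_num) (by norm_num) hU hs k (cc (-2)) cj (FN.const k (-2) (by simp)) fj
  have m5 := FN.mul (by positivity) hN hU hs k ((cc (-2)).mul cj) c0 m4 (FN.down k hF)
  have d3 := (cj.mul cj).mul ((cc (-1)).mul c2)
  have d5 := ((cc (-2)).mul cj).mul c0
  have s1 := FN.add hU hs k c1 d3 hF.2.1 m3
  have s2 := FN.add hU hs k (c1.add d3) d5 s1 m5
  have e : uop h = fun w => (wD h w + ((starRingEnd ℂ) w * (starRingEnd ℂ) w) * ((-1) * wDbar h w)) +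
      (-2) * (starRingEnd ℂ) w * h w := by
    ext w; unfold uop; ring
  rw [e]
  refine ⟨(c1.add d3).add d5, FN.mono (le_of_eq ?_) k s2⟩
  rw [← hb]; ring

theorem Tcg_wDbar {α : ℝ} (hα : α ∈ Set.Ioo (0:ℝ) 1) {h : ℂ → ℂ} {N : ℝ} (hF : FN (closedBall 0 1) α 0 N h) :
    Set.EqOn (wDbar (Tcg 1 h)) h (ball 0 1) := fun z hz => ((base0 hα hF.1 hF.2).1 z hz).2.1

theorem Qk {α : ℝ} (hα : α ∈ Set.Ioo (0:ℝ) 1) (k : ℕ) : ∃ C : ℝ, 0 ≤ C ∧ ∀ (U : Set ℂ) (h : ℂ → ℂ) (N : ℝ), IsOpen U →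
    closedBall 0 1 ⊆ U → ContDiffOn ℝ k h U → FN (closedBall 0 1) α k N h →
    ContDiffOn ℝ (k+1:ℕ) (Tcg 1 h) (ball 0 1) ∧ FN (ball 0 1) α (k+1) (C * N) (Tcg 1 h) := by
  have hcv : Convex ℝ (ball (0:ℂ) 1) := convex_ball _ _
  have c1 : (0:ℝ) < 1 - α := by linarith [hα.2]
  have c2 := hα.1
  have hC0 : 0 ≤ C0 α := by unfold C0; positivity
  -- the order zero part
  have Z : ∀ (h : ℂ → ℂ) (N : ℝ), FN (closedBall 0 1) α 0 N h → FN (ball 0 1) α 0 ((2 * C0 α + 6) * N) (Tcg 1 h) := by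
    intro h N hF
    have hN := hF.nonneg (z := 0) (by simp)
    have hp := mul_nonneg hC0 hN
    have hB := base0 hα hF.1 hF.2
    refine ⟨fun z hz => (Tcg_sup (hF.cont hα.1) hF.1 (by simpa using hz)).trans (by nlinarith), fun z hz z' hz' => ?_⟩
    refine (lip_of_wirt hcv (A := C0 α * N) (B := N) (fun w hw => (hB.1 w hw).1) (fun w hw => (hB.1 w hw).2.2) (fun w hw => by
      rw [(hB.1 w hw).2.1]; exact hF.1 w (ball_subset_closedBall hw)) hz hz').trans ?_
    calc _ ≤ (C0 α * N + N) * (2 * ‖z - z'‖ ^ α) := by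
          gcongr
          exact lin_le_holder hα (ball_subset_closedBall hz) (ball_subset_closedBall hz')
      _ = (2 * C0 α * N + 2 * N) * ‖z - z'‖ ^ α := by ring
      _ ≤ _ := by gcongr; linarith
  induction k with
  | zero =>
    refine ⟨2 * C0 α + 6, by positivity, fun U h N hU hs hc hF => ?_⟩
    have hN := hF.nonneg (z := 0) (by simp)
    have hp := mul_nonneg hC0 hN
    have hB := base0 hα hF.1 hF.2
    have F1 : FN (ball 0 1) α 0 ((2 * C0 α + 6) * N) (wD (Tcg 1 h)) :=
      FN.mono (by nlinarith) 0 (N := C0 α * N) ⟨fun z hz => (hB.1 z hz).2.2, hB.2⟩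
    have F2 : FN (ball 0 1) α 0 ((2 * C0 α + 6) * N) (wDbar (Tcg 1 h)) :=
      FN.congr isOpen_ball le_rfl 0 (Tcg_wDbar hα hF).symm 
        (FN.mono (by nlinarith) 0 (FN.subset ball_subset_closedBall 0 hF))
    refine ⟨contDiffOn_succ_of_wirt isOpen_ball (fun z hz => (hB.1 z hz).1) ?_ ?_, Z h N hF, F1, F2⟩
    · simpa using F1.cont hα.1
    · simpa using F2.cont hα.1
  | succ k ih =>
    obtain ⟨C, hC, ih⟩ := ih
    obtain ⟨Cu, hCu, hu⟩ := uop_FN hα k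
    set b : ℝ := 2^(k+1+1) with hb
    have hb1 : 1 ≤ b := one_le_pow₀ (by norm_num)
    refine ⟨(2 * C0 α + 6) + (b * (1 * (b * (2 * 2)))) + C * Cu, by positivity, fun U h N hU hs hc hF => ?_⟩
    have hN := hF.nonneg (z := 0) (by simp)
    have hB := base0 hα hF.to0.1 hF.to0.2
    obtain ⟨cu, fu⟩ := hu U h N hU hs hc hF
    obtain ⟨cT, fT⟩ := ih U (uop h) _ hU hs cu fu
    have hsb : ball (0:ℂ) 1 ⊆ U := ball_subset_closedBall.trans hs
    have ch : ContDiffOn ℝ (k+1:ℕ) h (ball 0 1) := hc.mono hsb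
    have cj : ContDiffOn ℝ (k+1:ℕ) (fun w : ℂ => (starRingEnd ℂ) w) (ball 0 1) := contDiff_cj.contDiffOn
    have fj := FN.subset ball_subset_closedBall (k+1) (FN.cj hα (k+1))
    have m1 := FN.mul (by norm_num) (by norm_num) isOpen_ball le_rfl (k+1) cj cj fj fj
    have m2 := FN.mul hN (by positivity) isOpen_ball le_rfl (k+1) ch (cj.mul cj) 
      (FN.subset ball_subset_closedBall (k+1) hF) m1
    have s := FN.add isOpen_ball le_rfl (k+1) (ch.mul (cj.mul cj)) cT m2 fT
    have e : Set.EqOn (fun w => h w * ((starRingEnd ℂ) w * (starRingEnd ℂ) w) + Tcg 1 (uop h) w) (wD (Tcg 1 h)) (ball 0 1) := by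
      intro z hz
      rw [wD_Tcg hU hs (hc.of_le (by norm_cast; omega)) hz]; dsimp only; ring
    have eb := Tcg_wDbar hα hF.to0
    have q1 : 0 ≤ C0 α * N := mul_nonneg hC0 hN
    have q2 : 0 ≤ (b * (1 * (b * (2 * 2)))) * N := by positivity
    have q3 : 0 ≤ C * Cu * N := by positivity
    refine ⟨contDiffOn_succ_of_wirt isOpen_ball (fun z hz => (hB.1 z hz).1) ?_ ?_, 
      FN.mono (by nlinarith) 0 (Z h N hF.to0), ?_, ?_⟩
    · exact ((ch.mul (cj.mul cj)).add cT).congr e.symm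
    · exact ch.congr eb
    · refine FN.congr isOpen_ball le_rfl (k+1) e (FN.mono ?_ (k+1) s)
      rw [← hb]; nlinarith
    · exact FN.congr isOpen_ball le_rfl (k+1) eb.symm (FN.mono (by nlinarith) (k+1) (FN.subset ball_subset_closedBall (k+1) hF))



/-- monomials -/
def mon (a b : ℕ) : ℂ → ℂ := fun w => w ^ a * (starRingEnd ℂ) w ^ b

theorem mon_contDiff (a b n : ℕ) : ContDiff ℝ n (mon a b) := by
  unfold mon
  exact (contDiff_id.pow a).mul (contDiff_cj.pow b)

theorem hasDerivAt_powR (a : ℕ) (z : ℂ) : HasFDerivAt (fun w : ℂ => w ^ a) (cL (a * z ^ (a-1)) 0) z :=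
  hasFDerivAt_of_hasDerivAt (hasDerivAt_pow a z)

theorem wD_mon (a b : ℕ) : wD (mon a b) = fun z => (a:ℂ) * mon (a-1) b z := by
  ext z
  have d1 : DifferentiableAt ℝ (fun w : ℂ => w ^ a) z := (hasDerivAt_powR a z).differentiableAt
  have d2 : DifferentiableAt ℝ (fun w : ℂ => (starRingEnd ℂ) w ^ b) z :=
    ((contDiff_cj (n := 1)).pow b).differentiable (by simp) z
  have e1 : wD (fun w : ℂ => w ^ a) z = a * z ^ (a-1) := wD_of_hasFDerivAt (hasDerivAt_powR a z)
  have e2 : wD (fun w : ℂ => (starRingEnd ℂ) w ^ b) z = 0 := by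
    have h := wirt_conj (hasDerivAt_powR b z).differentiableAt
    have h2 : wDbar (fun w : ℂ => w ^ b) z = 0 := wDbar_of_hasFDerivAt (hasDerivAt_powR b z)
    rw [h2] at h
    have h3 := wD_of_hasFDerivAt h
    simpa using h3
  unfold mon
  rw [wD_mul d1 d2, e1, e2]; ring

theorem wDbar_mon (a b : ℕ) : wDbar (mon a b) = fun z => (b:ℂ) * mon a (b-1) z := by
  ext z
  have d1 : DifferentiableAt ℝ (fun w : ℂ => w ^ a) z := (hasDerivAt_powR a z).differentiableAt
  have d2 : DifferentiableAt ℝ (fun w : ℂ => (starRingEnd ℂ) w ^ b) z :=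
    ((contDiff_cj (n := 1)).pow b).differentiable (by simp) z
  have e1 : wDbar (fun w : ℂ => w ^ a) z = 0 := wDbar_of_hasFDerivAt (hasDerivAt_powR a z)
  have e2 : wDbar (fun w : ℂ => (starRingEnd ℂ) w ^ b) z = b * (starRingEnd ℂ) z ^ (b-1) := by
    have h := wirt_conj (hasDerivAt_powR b z).differentiableAt
    have h2 : wD (fun w : ℂ => w ^ b) z = _ := wD_of_hasFDerivAt (hasDerivAt_powR b z)
    rw [h2] at h
    have h3 := wDbar_of_hasFDerivAt h
    simpa using h3
  unfold mon
  rw [wDbar_mul d1 d2, e1, e2]; ring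

theorem wD_iter_mon (i : ℕ) : ∀ (a b : ℕ), wD^[i] (mon a b) = fun z => (a.descFactorial i : ℂ) * mon (a-i) b z := by
  induction i with
  | zero => intro a b; ext z; simp
  | succ i ih =>
    intro a b
    ext z
    rw [Function.iterate_succ_apply', ih a b,
      wD_cmul _ ((mon_contDiff _ _ 1).differentiable (by simp) z), wD_mon]
    rw [Nat.descFactorial_succ]
    simp only [Nat.sub_sub]; push_cast; ring

theorem wDbar_iter_mon (i : ℕ) : ∀ (a b : ℕ), wDbar^[i] (mon a b) = fun z => (b.descFactorial i : ℂ) * mon a (b-i) z := by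
  induction i with
  | zero => intro a b; ext z; simp
  | succ i ih =>
    intro a b
    ext z
    rw [Function.iterate_succ_apply', ih a b,
      wDbar_cmul _ ((mon_contDiff _ _ 1).differentiable (by simp) z), wDbar_mon]
    rw [Nat.descFactorial_succ]
    simp only [Nat.sub_sub]; push_cast; ring

theorem wDij_mon (i j a b : ℕ) (z : ℂ) : wDij i j (mon a b) z =
    (a.descFactorial i : ℂ) * (b.descFactorial j : ℂ) * mon (a-i) (b-j) z := by
  unfold wDij
  rw [wDbar_iter_mon, wD_iter_cmul isOpen_univ _ i (mon_contDiff _ _ _).contDiffOn (Set.mem_univ z), wD_iter_mon]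
  ring

theorem wDij_mon_zero (i j a b : ℕ) : wDij i j (mon a b) 0 =
    if i = a ∧ j = b then (a.factorial : ℂ) * (b.factorial : ℂ) else 0 := by
  rw [wDij_mon]
  split_ifs with h
  · obtain ⟨rfl, rfl⟩ := h
    simp [mon, Nat.descFactorial_self]
  · by_cases h1 : a < i
    · simp [Nat.descFactorial_of_lt h1]
    by_cases h2 : b < j
    · simp [Nat.descFactorial_of_lt h2]
    have : a - i ≠ 0 ∨ b - j ≠ 0 := by omega
    rcases this with h | h <;> simp [mon, h]

/-- Linearity of the Cauchy-Green operator -/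
theorem Tcg1_add {f g : ℂ → ℂ} (hf : ContinuousOn f (closedBall 0 1)) (hg : ContinuousOn g (closedBall 0 1)) (z : ℂ) :
    Tcg 1 (fun w => f w + g w) z = Tcg 1 f z + Tcg 1 g z := by
  simp only [Tcg1_eq]
  rw [← Kn0_add (Adm_ind hf) (Adm_ind hg)]
  congr 1; ext w; by_cases h : w ∈ ball (0:ℂ) 1 <;> simp [h]

theorem Tcg_cmul (R : ℝ) (f : ℂ → ℂ) (c z : ℂ) :
    Tcg R (fun w => c * f w) z = c * Tcg R f z := by
  simp only [Tcg_eq]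
  rw [← Kn_cmul]
  congr 1; ext w; by_cases h : w ∈ closedBall (0:ℂ) R <;> simp [h]

theorem Adm.integrable {F : ℂ → ℂ} (hF : Adm F) : Integrable F := by
  obtain ⟨hm, ⟨M, hM0, hM⟩, ρ, hρ, hs⟩ := hF
  have h1 : Integrable ((closedBall (0:ℂ) ρ).indicator (fun _ => M)) := by
    rw [integrable_indicator_iff measurableSet_closedBall]
    exact integrableOn_const (measure_closedBall_lt_top.ne)
  refine h1.mono' hm (Filter.Eventually.of_forall fun ζ => ?_)
  by_cases h : ζ ∈ closedBall (0:ℂ) ρ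
  · simp only [h, Set.indicator_of_mem]; exact hM ζ
  · simp only [h, not_false_iff, Set.indicator_of_notMem]
    rw [hs ζ (by simp at h; exact h.le)]; simp

theorem Kn0_zmul {F : ℂ → ℂ} (hF : Adm F) (z : ℂ) :
    Kn 0 (fun ζ => ζ * F ζ) z = -(Real.pi : ℂ)⁻¹ * (∫ ζ, F ζ) + z * Kn 0 F z := by
  simp only [Kn_zero]
  have h : ∫ ζ, ζ * F ζ / (ζ - z) = ∫ ζ, (F ζ + z * (F ζ / (ζ - z))) := by
    apply integral_congr_ae
    have : ∀ᵐ ζ : ℂ, ζ ≠ z := by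
      rw [ae_iff]; simp
    filter_upwards [this] with ζ hζ
    have := sub_ne_zero.2 hζ
    field_simp; ring
  rw [h, integral_add hF.integrable ((hF.int z).const_mul z), integral_const_mul]; ring

theorem Tcg_mon (a b : ℕ) : ∃ p : Polynomial ℂ, p.natDegree ≤ a ∧ ∀ z ∈ ball (0:ℂ) 1,
    Tcg 1 (mon a b) z = p.eval z + (b+1:ℂ)⁻¹ * mon a (b+1) z := by
  induction a with
  | zero =>
    refine ⟨0, by simp, fun z hz => ?_⟩
    rw [Tcg1_eq]
    have : mon 0 b = fun ζ => (starRingEnd ℂ) ζ ^ b := by ext ζ; simp [mon]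
    rw [this, Kn_disc b one_pos (by simpa using hz)]
    simp [mon]; ring
  | succ a ih =>
    obtain ⟨p, hp, ih⟩ := ih
    set c : ℂ := -(Real.pi : ℂ)⁻¹ * (∫ ζ, (ball (0:ℂ) 1).indicator (mon a b) ζ) with hc
    refine ⟨Polynomial.C c + Polynomial.X * p, ?_, fun z hz => ?_⟩
    · refine (Polynomial.natDegree_add_le _ _).trans ?_
      simp only [Polynomial.natDegree_C, max_le_iff, zero_le, true_and]
      refine Polynomial.natDegree_mul_le.trans ?_
      have := Polynomial.natDegree_X_le (R := ℂ)
      omega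
    · have A := Kn0_zmul (Adm_ind (mon_contDiff a b 0).continuous.continuousOn) z
      rw [← hc, ← Tcg1_eq, ih z hz] at A
      rw [Tcg1_eq]
      have e : (ball (0:ℂ) 1).indicator (mon (a+1) b) = fun ζ => ζ * (ball (0:ℂ) 1).indicator (mon a b) ζ := by
        ext w; by_cases h : w ∈ ball (0:ℂ) 1 <;> simp [h, mon]; ring
      rw [e, A]
      simp [mon]; ring

theorem wD_iter_poly (n : ℕ) : ∀ p : Polynomial ℂ, wD^[n] (fun z => p.eval z) = fun z => (Polynomial.derivative^[n] p).eval z := by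
  induction n with
  | zero => intro p; rfl
  | succ n ih =>
    intro p
    rw [Function.iterate_succ_apply, Function.iterate_succ_apply, ← ih]
    congr 1; ext z
    exact wD_of_hasDerivAt (p.hasDerivAt z)

theorem poly_contDiff (p : Polynomial ℂ) (n : ℕ) : ContDiff ℝ n (fun z : ℂ => p.eval z) := by
  have : ContDiff ℂ n (fun z : ℂ => p.eval z) := by
    simpa using p.contDiff_aeval (𝕜 := ℂ) n
  exact this.restrict_scalars ℝ

theorem Tcg_mon_kill {a b k : ℕ} (h : a < k) :
    ContDiffOn ℝ k (Tcg 1 (mon a b)) (ball 0 1) ∧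
    Set.EqOn (wD^[k] (Tcg 1 (mon a b))) (fun _ => 0) (ball 0 1) := by
  obtain ⟨p, hp, he⟩ := Tcg_mon a b
  have c1 := (poly_contDiff p k).contDiffOn (s := ball 0 1)
  have c2 : ContDiffOn ℝ k (fun z => (b+1:ℂ)⁻¹ * mon a (b+1) z) (ball 0 1) :=
    contDiffOn_const.mul (mon_contDiff a (b+1) k).contDiffOn
  refine ⟨(c1.add c2).congr he, fun z hz => ?_⟩
  rw [wD_iter_eqOn isOpen_ball k he hz, wD_iter_add isOpen_ball k c1 c2 hz]
  dsimp only
  rw [wD_iter_cmul isOpen_ball _ k (mon_contDiff _ _ _).contDiffOn hz, wD_iter_mon, wD_iter_poly,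
    Polynomial.iterate_derivative_eq_zero (by omega), Nat.descFactorial_of_lt h]
  simp



theorem taylor_exists (k : ℕ) (c : ℕ × ℕ → ℂ) (s : Finset (ℕ × ℕ)) : (∀ p ∈ s, p.1 + p.2 < k) → 
    ∃ P : ℂ → ℂ, (∀ n : ℕ, ContDiff ℝ n P) ∧ (∀ i j, wDij i j P 0 = if (i,j) ∈ s then c (i,j) else 0) ∧
      (∀ i j, i + j = k → ∀ z, wDij i j P z = 0) ∧
      ContDiffOn ℝ (k+1:ℕ) (Tcg 1 P) (ball 0 1) ∧ Set.EqOn (wD^[k+1] (Tcg 1 P)) (fun _ => 0) (ball 0 1) := by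
  classical
  induction s using Finset.induction_on with
  | empty =>
    intro _
    have hw : ∀ i : ℕ, wD^[i] (fun _ : ℂ => (0:ℂ)) = fun _ => 0 := by
      intro i
      induction i with
      | zero => rfl
      | succ i ih => rw [Function.iterate_succ_apply', ih]; ext z; exact wD_const 0 z
    have hwb : ∀ i : ℕ, wDbar^[i] (fun _ : ℂ => (0:ℂ)) = fun _ => 0 := by
      intro i
      induction i with
      | zero => rfl
      | succ i ih => rw [Function.iterate_succ_apply', ih]; ext z; exact wDbar_const 0 z
    have hij : ∀ i j z, wDij i j (fun _ : ℂ => (0:ℂ)) z = 0 := by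
      intro i j z; unfold wDij; rw [hwb, hw]
    have hT : Tcg 1 (fun _ : ℂ => (0:ℂ)) = fun _ => 0 := by
      ext z; simp [Tcg]
    refine ⟨fun _ => 0, fun n => contDiff_const, fun i j => by simp [hij], fun i j _ z => hij i j z, ?_, ?_⟩
    · rw [hT]; exact contDiffOn_const
    · rw [hT, hw]; exact fun _ _ => rfl
  | insert p s hp ih =>
    intro hs
    obtain ⟨P, hP1, hP2, hP3, hP4, hP5⟩ := ih (fun q hq => hs q (Finset.mem_insert_of_mem hq))
    have hpk := hs p (Finset.mem_insert_self _ _)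
    obtain ⟨a, b⟩ := p
    simp only at hpk
    set d : ℂ := c (a,b) / ((a.factorial : ℂ) * (b.factorial : ℂ)) with hd
    have cm : ∀ n : ℕ, ContDiff ℝ n (fun w => d * mon a b w) := fun n => contDiff_const.mul (mon_contDiff a b n)
    have key : ∀ i j z, wDij i j (fun w => P w + d * mon a b w) z = wDij i j P z + d * wDij i j (mon a b) z := by
      intro i j z
      rw [wDij_add isOpen_univ (hP1 _).contDiffOn (cm _).contDiffOn (Set.mem_univ z)]
      dsimp only
      rw [wDij_cmul isOpen_univ d (mon_contDiff _ _ _).contDiffOn (Set.mem_univ z)]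
    have hT : Tcg 1 (fun w => P w + d * mon a b w) = fun z => Tcg 1 P z + d * Tcg 1 (mon a b) z := by
      ext z
      rw [Tcg1_add (hP1 0).continuous.continuousOn (cm 0).continuous.continuousOn, Tcg_cmul]
    obtain ⟨m1, m2⟩ := Tcg_mon_kill (a := a) (b := b) (k := k+1) (by omega)
    refine ⟨fun w => P w + d * mon a b w, fun n => (hP1 n).add (cm n), fun i j => ?_, fun i j hij z => ?_, ?_, ?_⟩
    · rw [key, hP2, wDij_mon_zero]
      have f1 : (a.factorial : ℂ) ≠ 0 := by exact_mod_cast a.factorial_ne_zero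
      have f2 : (b.factorial : ℂ) ≠ 0 := by exact_mod_cast b.factorial_ne_zero
      by_cases h : i = a ∧ j = b
      · obtain ⟨rfl, rfl⟩ := h
        simp only [hp, if_false, and_self, if_true, Finset.mem_insert_self, zero_add, hd]
        field_simp
      · have h' : (i,j) ≠ (a,b) := by simpa using h
        simp [h, h', Finset.mem_insert]
    · rw [key, hP3 i j hij, wDij_mon]
      have : a < i ∨ b < j := by omega
      rcases this with h | h <;> simp [Nat.descFactorial_of_lt h]
    · rw [hT]; exact hP4.add (contDiffOn_const.mul m1)
    · intro z hz
      rw [hT, wD_iter_add isOpen_ball (k+1) hP4 (contDiffOn_const.mul m1) hz]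
      dsimp only
      rw [wD_iter_cmul isOpen_ball d (k+1) m1 hz, hP5 hz]; dsimp only; rw [m2 hz]; simp

theorem FN_of_wDij {α : ℝ} (hα : α ∈ Set.Ioo (0:ℝ) 1) {k : ℕ} {U : Set ℂ} {f : ℂ → ℂ} {M : ℝ} (hU : IsOpen U)
    (hs : closedBall 0 1 ⊆ U) (hc : ContDiffOn ℝ k f U) 
    (hb : ∀ i j, i + j ≤ k → ∀ z ∈ closedBall (0:ℂ) 1, ‖wDij i j f z‖ ≤ M)
    (ht : ∀ i j, i + j = k → ∀ z ∈ closedBall (0:ℂ) 1, ∀ z' ∈ closedBall (0:ℂ) 1,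
      ‖wDij i j f z - wDij i j f z'‖ ≤ M * ‖z - z'‖ ^ α) : FN (closedBall 0 1) α k (4 * M) f := by
  have hM : 0 ≤ M := (norm_nonneg _).trans (hb 0 0 (by omega) 0 (by simp))
  have main : ∀ m i j, i + j + m = k → FN (closedBall 0 1) α m (4 * M) (wDij i j f) := by
    intro m
    induction m with
    | zero =>
      intro i j h
      exact ⟨fun z hz => (hb i j (by omega) z hz).trans (by linarith), fun z hz z' hz' => 
        (ht i j (by omega) z hz z' hz').trans (by gcongr; linarith)⟩
    | succ m ih =>
      intro i j h
      have hcc : ContDiffOn ℝ (i+j+1:ℕ) f U := hc.of_le (by norm_cast; omega)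
      have ew := wDbar_wDij hU hcc
      refine ⟨⟨fun z hz => (hb i j (by omega) z hz).trans (by linarith), fun z hz z' hz' => ?_⟩, ?_, ?_⟩
      · have := lip_of_wirt (convex_closedBall (0:ℂ) 1) (f := wDij i j f) (A := M) (B := M) (fun w hw => 
            diffAt_of_contDiffOn (n := 0) hU (contDiffOn_wDij hU (hc.of_le (by norm_cast; omega))) (hs hw))
          (fun w hw => by rw [wD_wDij]; exact hb _ _ (by omega) w hw)
          (fun w hw => by rw [ew (hs hw)]; exact hb _ _ (by omega) w hw) hz hz'
        refine this.trans ?_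
        have h2 := lin_le_holder hα hz hz'
        nlinarith
      · rw [wD_wDij]; exact ih _ _ (by omega)
      · exact FN.congr hU hs m ew.symm (ih _ _ (by omega))
  exact main k 0 0 (by omega)

theorem vanish_bound {k : ℕ} {U : Set ℂ} {f : ℂ → ℂ} {M : ℝ} (hU : IsOpen U)
    (hs : closedBall 0 1 ⊆ U) (hc : ContDiffOn ℝ k f U) 
    (h0 : ∀ i j, i + j < k → wDij i j f 0 = 0)
    (hb : ∀ i j, i + j = k → ∀ z ∈ closedBall (0:ℂ) 1, ‖wDij i j f z‖ ≤ M) :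
    ∀ i j, i + j ≤ k → ∀ z ∈ closedBall (0:ℂ) 1, ‖wDij i j f z‖ ≤ 2^k * M := by
  have hM : 0 ≤ M := (norm_nonneg _).trans (hb 0 k (by omega) 0 (by simp))
  have main : ∀ m i j, i + j + m = k → ∀ z ∈ closedBall (0:ℂ) 1, ‖wDij i j f z‖ ≤ 2^m * M := by
    intro m
    induction m with
    | zero => intro i j h; simpa using hb i j (by omega)
    | succ m ih =>
      intro i j h z hz
      have ew := wDbar_wDij hU (i := i) (j := j) (f := f) (hc.of_le (by norm_cast; omega))
      have := lip_of_wirt (convex_closedBall (0:ℂ) 1) (f := wDij i j f) (A := 2^m * M) (B := 2^m*M) (fun w hw => 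
            diffAt_of_contDiffOn (n := 0) hU (contDiffOn_wDij hU (hc.of_le (by norm_cast; omega))) (hs hw))
          (fun w hw => by rw [wD_wDij]; exact ih _ _ (by omega) w hw)
          (fun w hw => by rw [ew (hs hw)]; exact ih _ _ (by omega) w hw) hz (z' := 0) (by simp)
      rw [h0 i j (by omega), sub_zero, sub_zero] at this
      refine this.trans ?_
      have h1 : ‖z‖ ≤ 1 := by simpa using hz
      have h2 : 0 ≤ 2^m * M := by positivity
      rw [pow_succ]; nlinarith
  intro i j h z hz
  obtain ⟨m, hm⟩ := Nat.exists_eq_add_of_le h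
  refine (main m i j hm.symm z hz).trans ?_
  gcongr
  · norm_num
  · omega

theorem Main1 {α : ℝ} (hα : α ∈ Set.Ioo (0:ℝ) 1) (k : ℕ) : ∃ C : ℝ, 0 ≤ C ∧ ∀ (U : Set ℂ) (h : ℂ → ℂ) (N : ℝ), IsOpen U →
    closedBall 0 1 ⊆ U → ContDiffOn ℝ k h U → (∀ i j, i + j = k → FN (closedBall 0 1) α 0 N (wDij i j h)) →
    ContDiffOn ℝ (k+1:ℕ) (Tcg 1 h) (ball 0 1) ∧ (∃ N', FN (ball 0 1) α (k+1) N' (Tcg 1 h)) ∧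
    Set.EqOn (wDbar (Tcg 1 h)) h (ball 0 1) ∧ FN (ball 0 1) α 0 (C * N) (wD^[k+1] (Tcg 1 h)) := by
  obtain ⟨C, hC, hQ⟩ := Qk hα k
  refine ⟨C * (4 * 2^k), by positivity, fun U h N hU hs hc hF => ?_⟩
  have hN : 0 ≤ N := (hF 0 k (by omega)).nonneg (z := 0) (by simp)
  -- qualitative part
  have hq : ∃ M, N ≤ M ∧ ∀ i j, i + j ≤ k → ∀ z ∈ closedBall (0:ℂ) 1, ‖wDij i j h z‖ ≤ M := by
    have : ∀ p : ℕ × ℕ, ∃ M, 0 ≤ M ∧ (p.1 + p.2 ≤ k → ∀ z ∈ closedBall (0:ℂ) 1, ‖wDij p.1 p.2 h z‖ ≤ M) := by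
      intro p
      by_cases hp : p.1 + p.2 ≤ k
      · have : ContinuousOn (wDij p.1 p.2 h) (closedBall 0 1) := 
          ((contDiffOn_wDij (n := 0) hU (hc.of_le (by norm_cast; omega))).continuousOn).mono hs
        obtain ⟨M, hM⟩ := (isCompact_closedBall (0:ℂ) 1).exists_bound_of_continuousOn this
        exact ⟨M, (norm_nonneg _).trans (hM 0 (by simp)), fun _ => hM⟩
      · exact ⟨0, le_rfl, fun h => absurd h hp⟩
    choose M hM0 hM using this
    refine ⟨N + ∑ p ∈ Finset.range (k+1) ×ˢ Finset.range (k+1), M p, by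
      have := Finset.sum_nonneg (s := Finset.range (k+1) ×ˢ Finset.range (k+1)) (fun p _ => hM0 p); linarith, fun i j hij z hz => ?_⟩
    have h1 := hM (i,j) hij z hz
    have h2 := Finset.single_le_sum (f := M) (s := Finset.range (k+1) ×ˢ Finset.range (k+1)) (fun p _ => hM0 p)
      (a := (i,j)) (by simp; omega)
    dsimp only at h1
    linarith
  obtain ⟨M, hNM, hM⟩ := hq
  have hFh : FN (closedBall 0 1) α k (4 * M) h := FN_of_wDij hα hU hs hc hM (fun i j hij z hz z' hz' => 
    ((hF i j hij).2 z hz z' hz').trans (by gcongr))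
  obtain ⟨q1, q2⟩ := hQ U h _ hU hs hc hFh
  refine ⟨q1, ⟨_, q2⟩, Tcg_wDbar hα hFh.to0, ?_⟩
  obtain ⟨P, hP1, hP2, hP3, hP4, hP5⟩ := taylor_exists k (fun p => wDij p.1 p.2 h 0)
    ((Finset.range (k+1) ×ˢ Finset.range (k+1)).filter (fun p => p.1 + p.2 < k)) (by simp)
  set r : ℂ → ℂ := fun w => h w - P w with hr
  have cr : ContDiffOn ℝ k r U := hc.sub (hP1 k).contDiffOn
  have er : ∀ i j, i + j ≤ k → Set.EqOn (wDij i j r) (fun w => wDij i j h w - wDij i j P w) U := fun i j hij =>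
    wDij_sub hU (hc.of_le (by norm_cast)) (hP1 _).contDiffOn
  have er1 : ∀ i j, i + j = k → Set.EqOn (wDij i j h) (wDij i j r) U := by
    intro i j hij z hz
    rw [er i j hij.le hz]; dsimp only; rw [hP3 i j hij, sub_zero]
  have er0 : ∀ i j, i + j < k → wDij i j r 0 = 0 := by
    intro i j hij
    rw [er i j hij.le (hs (by simp))]; dsimp only
    rw [hP2, if_pos (by simp; omega), sub_self]
  have Fr : ∀ i j, i + j = k → FN (closedBall 0 1) α 0 N (wDij i j r) := fun i j hij => 
    FN.congr hU hs 0 (er1 i j hij) (hF i j hij)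
  have b := vanish_bound hU hs cr er0 (fun i j hij => (Fr i j hij).1)
  have Frr : FN (closedBall 0 1) α k (4 * (2^k * N)) r := FN_of_wDij hα hU hs cr b (fun i j hij z hz z' hz' => 
    ((Fr i j hij).2 z hz z' hz').trans (by 
      gcongr
      have : (1:ℝ) ≤ 2^k := one_le_pow₀ (by norm_num)
      nlinarith))
  obtain ⟨r1, r2⟩ := hQ U r _ hU hs cr Frr
  have e : Tcg 1 h = fun z => Tcg 1 r z + Tcg 1 P z := by
    ext z
    rw [← Tcg1_add (cr.continuousOn.mono hs) (hP1 0).continuous.continuousOn]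
    congr 1; ext w; simp [hr]
  have e2 : Set.EqOn (wD^[k+1] (Tcg 1 r)) (wD^[k+1] (Tcg 1 h)) (ball 0 1) := by
    intro z hz
    rw [e, wD_iter_add isOpen_ball (k+1) r1 hP4 hz]; dsimp only; rw [hP5 hz, add_zero]
  have r3 := FN.wD_iter (k := 0) (k+1) (by simpa using r2)
  exact FN.congr isOpen_ball le_rfl 0 e2 (FN.mono (le_of_eq (by ring)) 0 r3)



theorem wD_cmulF (c : ℂ) (f : ℂ → ℂ) : wD (fun w => c * f w) = fun z => c * wD f z := by
  ext z
  have : fderiv ℝ (fun w => c * f w) z = c • fderiv ℝ f z := by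
    have := congrFun (fderiv_const_smul_field (𝕜 := ℝ) (f := f) c) z
    exact this
  simp only [wD, this, ContinuousLinearMap.smul_apply, smul_eq_mul]; ring

theorem wDbar_cmulF (c : ℂ) (f : ℂ → ℂ) : wDbar (fun w => c * f w) = fun z => c * wDbar f z := by
  ext z
  have : fderiv ℝ (fun w => c * f w) z = c • fderiv ℝ f z := by
    have := congrFun (fderiv_const_smul_field (𝕜 := ℝ) (f := f) c) z
    exact this
  simp only [wDbar, this, ContinuousLinearMap.smul_apply, smul_eq_mul]; ring

theorem wD_iter_scale (a : ℝ) (n : ℕ) : ∀ (c : ℂ) (f : ℂ → ℂ),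
    wD^[n] (fun w => c * f (a * w)) = fun z => (c * a^n) * wD^[n] f (a * z) := by
  induction n with
  | zero => intro c f; simp
  | succ n ih =>
    intro c f
    have h1 : wD (fun w => c * f (a * w)) = fun z => (c * a) * wD f (a * z) := by
      rw [wD_cmulF]; ext z
      have := wD_affine f a 0 z
      simp only [add_zero] at this; rw [this]; ring
    rw [Function.iterate_succ_apply, h1, ih, Function.iterate_succ_apply]
    ext z; ring

theorem wDbar_iter_scale (a : ℝ) (n : ℕ) : ∀ (c : ℂ) (f : ℂ → ℂ),
    wDbar^[n] (fun w => c * f (a * w)) = fun z => (c * a^n) * wDbar^[n] f (a * z) := by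
  induction n with
  | zero => intro c f; simp
  | succ n ih =>
    intro c f
    have h1 : wDbar (fun w => c * f (a * w)) = fun z => (c * a) * wDbar f (a * z) := by
      rw [wDbar_cmulF]; ext z
      have := wDbar_affine f a 0 z
      simp only [add_zero] at this; rw [this]; ring
    rw [Function.iterate_succ_apply, h1, ih, Function.iterate_succ_apply]
    ext z; ring

theorem wDij_scale (a : ℝ) (i j : ℕ) (c : ℂ) (f : ℂ → ℂ) (z : ℂ) :
    wDij i j (fun w => c * f (a * w)) z = (c * a^(i+j)) * wDij i j f (a * z) := by
  unfold wDij
  rw [wDbar_iter_scale, wD_iter_scale]; dsimp only; ring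

theorem Tcg_scale {R : ℝ} (hR : 0 < R) (h : ℂ → ℂ) (z : ℂ) :
    Tcg R h z = (R:ℂ) * Tcg 1 (fun w => 1 * h (R * w)) ((R⁻¹:ℝ) * z) := by
  simp only [Tcg_eq, Kn_zero]
  have hR' : (R:ℂ) ≠ 0 := by exact_mod_cast hR.ne'
  have h1 := Measure.integral_comp_smul_of_nonneg volume
    (fun ζ : ℂ => (closedBall (0:ℂ) R).indicator h ζ / (ζ - z)) R (hR := hR.le)
  rw [Complex.finrank_real_complex] at h1
  have h2 : ∀ w : ℂ, (closedBall (0:ℂ) R).indicator h (R • w) / (R • w - z) =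
      (R:ℂ)⁻¹ * ((closedBall (0:ℂ) 1).indicator (fun w => 1 * h (R * w)) w / (w - (R⁻¹:ℝ) * z)) := by
    intro w
    have e1 : R • w - z = R * (w - (R⁻¹:ℝ) * z) := by
      push_cast; rw [real_smul]; field_simp
    have e2 : (closedBall (0:ℂ) R).indicator h (R • w) = (closedBall (0:ℂ) 1).indicator (fun w => 1 * h (R * w)) w := by
      have : R • w ∈ closedBall (0:ℂ) R ↔ w ∈ closedBall (0:ℂ) 1 := by
        simp [abs_of_pos hR]
        constructor
        · intro h; by_contra hh; push Not at hh; nlinarith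
        · intro h; nlinarith
      by_cases hw : w ∈ closedBall (0:ℂ) 1
      · rw [Set.indicator_of_mem hw, Set.indicator_of_mem (this.2 hw), real_smul, one_mul]
      · rw [Set.indicator_of_notMem hw, Set.indicator_of_notMem (fun h => hw (this.1 h))]
    rw [e1, e2, div_mul_eq_div_div_swap]
    ring
  simp only [h2] at h1
  rw [integral_const_mul] at h1
  have h3 : ∫ ζ : ℂ, (closedBall (0:ℂ) R).indicator h ζ / (ζ - z) = (R:ℂ) * 
      ∫ w, ((closedBall (0:ℂ) 1).indicator (fun w => 1 * h (R * w)) w / (w - (R⁻¹:ℝ) * z)) := by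
    rw [real_smul] at h1
    push_cast at h1 ⊢
    field_simp at h1 ⊢
    rw [h1]
  rw [h3]; ring

theorem ext_of_FN {α N R : ℝ} (hα : 0 < α) (hR : 0 < R) {f : ℂ → ℂ} (h : FN (ball 0 R) α 0 N f) :
    ∃ g : ℂ → ℂ, ContinuousOn g (closedBall (0:ℂ) R) ∧ Set.EqOn f g (ball (0:ℂ) R) := by
  have hcl : closure (ball (0:ℂ) R) = closedBall 0 R := closure_ball _ hR.ne'
  have huc : UniformContinuousOn f (ball 0 R) := by
    rw [Metric.uniformContinuousOn_iff]
    intro ε hε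
    have hc : Filter.Tendsto (fun x : ℝ => N * x ^ α) (nhds 0) (nhds (N * 0 ^ α)) :=
      (continuous_const.mul (continuous_id.rpow_const (fun _ => Or.inr hα.le))).tendsto 0
    rw [Real.zero_rpow hα.ne', mul_zero] at hc
    obtain ⟨δ, hδ, hd⟩ := Metric.eventually_nhds_iff.1 (hc.eventually (gt_mem_nhds hε))
    refine ⟨δ, hδ, fun x hx y hy hxy => ?_⟩
    rw [dist_eq_norm] at hxy ⊢
    exact (h.2 x hx y hy).trans_lt (hd (by simpa using hxy))
  refine ⟨extendFrom (ball 0 R) f, continuousOn_extendFrom hcl.ge (fun x hx => ?_), fun x hx =>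
    (extendFrom_extends huc.continuousOn x hx).symm⟩
  rw [← hcl] at hx
  haveI := mem_closure_iff_nhdsWithin_neBot.mp hx
  have : Cauchy (Filter.map f (nhdsWithin x (ball 0 R))) :=
    (cauchy_nhds.mono nhdsWithin_le_nhds).map_of_le huc inf_le_right
  exact CompleteSpace.complete this

theorem Hol_le_of {α H : ℝ} (hH : 0 ≤ H) {A : Set ℂ} {f : ℂ → ℂ}
    (h : ∀ z ∈ A, ∀ z' ∈ A, ‖f z - f z'‖ ≤ H * ‖z - z'‖ ^ α) : Hol α A f ≤ ENNReal.ofReal H := by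
  unfold Hol
  refine iSup₂_le fun z hz => iSup₂_le fun z' hz' => iSup_le fun hne => ?_
  have hp : 0 < ‖z - z'‖ := norm_pos_iff.2 (sub_ne_zero.2 hne)
  apply ENNReal.div_le_of_le_mul
  have e1 : (‖z - z'‖₊ : ℝ≥0∞) ^ α = ENNReal.ofReal (‖z - z'‖ ^ α) := by
    rw [← ENNReal.ofReal_rpow_of_pos hp, ofReal_norm_eq_enorm]; rfl
  have e2 : (‖f z - f z'‖₊ : ℝ≥0∞) = ENNReal.ofReal ‖f z - f z'‖ := by
    rw [ofReal_norm_eq_enorm]; rfl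
  rw [e1, e2, ← ENNReal.ofReal_mul hH]
  exact ENNReal.ofReal_le_ofReal (h z hz z' hz')

theorem le_of_Hol {α H : ℝ} (hα : 0 < α) (hH : 0 ≤ H) {A : Set ℂ} {f : ℂ → ℂ} (h : Hol α A f ≤ ENNReal.ofReal H) :
    ∀ z ∈ A, ∀ z' ∈ A, ‖f z - f z'‖ ≤ H * ‖z - z'‖ ^ α := by
  intro z hz z' hz'
  by_cases hne : z = z'
  · subst hne; simp [Real.zero_rpow hα.ne']
  have hp : 0 < ‖z - z'‖ := norm_pos_iff.2 (sub_ne_zero.2 hne)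
  have e1 : (‖z - z'‖₊ : ℝ≥0∞) ^ α = ENNReal.ofReal (‖z - z'‖ ^ α) := by
    rw [← ENNReal.ofReal_rpow_of_pos hp, ofReal_norm_eq_enorm]; rfl
  have e2 : (‖f z - f z'‖₊ : ℝ≥0∞) = ENNReal.ofReal ‖f z - f z'‖ := by
    rw [ofReal_norm_eq_enorm]; rfl
  have h1 : (‖f z - f z'‖₊ : ℝ≥0∞) / (‖z - z'‖₊ : ℝ≥0∞) ^ α ≤ Hol α A f := by
    unfold Hol
    exact le_iSup₂_of_le z hz (le_iSup₂_of_le z' hz' (le_iSup_of_le hne le_rfl))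
  have h2 := h1.trans h
  have hpp : 0 < ‖z - z'‖ ^ α := Real.rpow_pos_of_pos hp _
  rw [e1, e2, ENNReal.div_le_iff (by simpa using hpp) ENNReal.ofReal_ne_top, ← ENNReal.ofReal_mul hH] at h2
  exact (ENNReal.ofReal_le_ofReal_iff (by positivity)).1 h2

theorem Hol_congr {α : ℝ} {A : Set ℂ} {f g : ℂ → ℂ} (h : Set.EqOn f g A) : Hol α A f = Hol α A g := by
  unfold Hol
  refine iSup_congr fun z => iSup_congr fun hz => iSup_congr fun z' => iSup_congr fun hz' => ?_
  rw [h hz, h hz']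

theorem Hol_mono {α : ℝ} {A B : Set ℂ} {f : ℂ → ℂ} (h : A ⊆ B) : Hol α A f ≤ Hol α B f := by
  unfold Hol
  exact iSup₂_le fun z hz => iSup₂_le fun z' hz' => le_iSup₂_of_le z (h hz) (le_iSup₂_of_le z' (h hz') le_rfl)

theorem Hol_conj {α : ℝ} {A : Set ℂ} {f : ℂ → ℂ} : Hol α A (fun w => (starRingEnd ℂ) (f w)) = Hol α A f := by
  unfold Hol
  simp only [← map_sub, RCLike.nnnorm_conj]

theorem hnorm_congr {α R : ℝ} {f g : ℂ → ℂ} (h : Set.EqOn f g (closedBall 0 R)) : hnorm α R f = hnorm α R g := by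
  unfold hnorm
  rw [Hol_congr h]
  congr 1
  refine iSup_congr fun z => iSup_congr fun hz => ?_
  rw [h hz]

theorem hnormB_congr {α R : ℝ} {f g : ℂ → ℂ} (h : Set.EqOn f g (ball 0 R)) : hnormB α R f = hnormB α R g := by
  unfold hnormB
  rw [Hol_congr h]
  congr 1
  refine iSup_congr fun z => iSup_congr fun hz => ?_
  rw [h hz]

theorem hnorm_conj {α R : ℝ} {f : ℂ → ℂ} : hnorm α R (fun w => (starRingEnd ℂ) (f w)) = hnorm α R f := by
  unfold hnorm; rw [Hol_conj]; simp only [RCLike.nnnorm_conj]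

theorem hnormB_conj {α R : ℝ} {f : ℂ → ℂ} : hnormB α R (fun w => (starRingEnd ℂ) (f w)) = hnormB α R f := by
  unfold hnormB; rw [Hol_conj]; simp only [RCLike.nnnorm_conj]

theorem hnormB_le_hnorm {α R : ℝ} {f : ℂ → ℂ} : hnormB α R f ≤ hnorm α R f := by
  unfold hnormB hnorm
  have h1 := Hol_mono (α := α) (f := f) (ball_subset_closedBall (x := (0:ℂ)) (ε := R))
  have h2 : (⨆ z ∈ ball (0:ℂ) R, (‖f z‖₊ : ℝ≥0∞)) ≤ ⨆ z ∈ closedBall (0:ℂ) R, (‖f z‖₊ : ℝ≥0∞) :=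
    iSup₂_le fun z hz => le_iSup₂_of_le z (ball_subset_closedBall hz) le_rfl
  gcongr

theorem hnormB_le_of {α R N : ℝ} (hR : 0 < R) (hα : α ∈ Set.Ioo (0:ℝ) 1) (hN : 0 ≤ N) {f : ℂ → ℂ}
    (h1 : ∀ z ∈ ball (0:ℂ) R, ‖f z‖ ≤ N)
    (h2 : ∀ z ∈ ball (0:ℂ) R, ∀ z' ∈ ball (0:ℂ) R, ‖f z - f z'‖ ≤ (N * (R ^ α)⁻¹) * ‖z - z'‖ ^ α) :
    hnormB α R f ≤ ENNReal.ofReal (3 * N) := by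
  have hRα : 0 < R ^ α := Real.rpow_pos_of_pos hR _
  have a := Hol_le_of (by positivity) h2
  have b : (⨆ z ∈ ball (0:ℂ) R, (‖f z‖₊ : ℝ≥0∞)) ≤ ENNReal.ofReal N := iSup₂_le fun z hz => by
    have e2 : (‖f z‖₊ : ℝ≥0∞) = ENNReal.ofReal ‖f z‖ := by
      rw [ofReal_norm_eq_enorm]; rfl
    rw [e2]; exact ENNReal.ofReal_le_ofReal (h1 z hz)
  unfold hnormB
  have h2a : (2:ℝ)^α ≤ 2 := by
    calc (2:ℝ)^α ≤ 2^(1:ℝ) := Real.rpow_le_rpow_of_exponent_le (by norm_num) hα.2.le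
      _ = 2 := by simp
  calc _ ≤ ENNReal.ofReal N + ENNReal.ofReal ((2*R)^α) * ENNReal.ofReal (N * (R ^ α)⁻¹) := by gcongr
    _ = ENNReal.ofReal (N + (2*R)^α * (N * (R ^ α)⁻¹)) := by
      rw [← ENNReal.ofReal_mul (by positivity), ← ENNReal.ofReal_add hN (by positivity)]
    _ ≤ _ := by
      apply ENNReal.ofReal_le_ofReal
      rw [Real.mul_rpow (by norm_num) hR.le]
      have : 2 ^ α * R ^ α * (N * (R ^ α)⁻¹) = 2^α * N := by field_simp
      rw [this]; nlinarith



theorem hnormK_lt_top {k : ℕ} {α R : ℝ} {h : ℂ → ℂ} (hh : CkHolder k α R h) : hnormK k α R h < ⊤ := by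
  obtain ⟨⟨U, hU, hs, hc⟩, hH⟩ := hh
  unfold hnormK
  rw [← Finset.sup_eq_iSup, Finset.sup_lt_iff (by simp)]
  rintro ⟨i, j⟩ hp
  have hij : i + j = k := by simpa using hp
  unfold hnorm
  dsimp only
  have hcont : ContinuousOn (wDij i j h) (closedBall 0 R) :=
    ((contDiffOn_wDij (n := 0) hU (hc.of_le (by norm_cast; omega))).continuousOn).mono hs
  obtain ⟨M, hM⟩ := (isCompact_closedBall (0:ℂ) R).exists_bound_of_continuousOn hcont
  refine ENNReal.add_lt_top.2 ⟨lt_of_le_of_lt (b := ENNReal.ofReal M) (iSup₂_le fun z hz => ?_) ENNReal.ofReal_lt_top,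
    ENNReal.mul_lt_top ENNReal.ofReal_lt_top (hH i j hij)⟩
  have e2 : (‖wDij i j h z‖₊ : ℝ≥0∞) = ENNReal.ofReal ‖wDij i j h z‖ := by
    rw [ofReal_norm_eq_enorm]; rfl
  rw [e2]; exact ENNReal.ofReal_le_ofReal (hM z hz)

theorem hnorm_bounds {α R N : ℝ} (hα : α ∈ Set.Ioo (0:ℝ) 1) (hR : 0 < R) (hN : 0 ≤ N) {f : ℂ → ℂ}
    (h : hnorm α R f ≤ ENNReal.ofReal N) :
    (∀ z ∈ closedBall (0:ℂ) R, ‖f z‖ ≤ N) ∧ ∀ z ∈ closedBall (0:ℂ) R, ∀ z' ∈ closedBall (0:ℂ) R,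
      ‖f z - f z'‖ ≤ (N * (R^α)⁻¹) * ‖z - z'‖ ^ α := by
  have hRα : 0 < R ^ α := Real.rpow_pos_of_pos hR _
  unfold hnorm at h
  constructor
  · intro z hz
    have h1 : (‖f z‖₊ : ℝ≥0∞) ≤ ENNReal.ofReal N :=
      (le_iSup₂_of_le (f := fun z (_ : z ∈ closedBall (0:ℂ) R) => (‖f z‖₊ : ℝ≥0∞)) z hz le_rfl).trans (le_self_add.trans h)
    have e2 : (‖f z‖₊ : ℝ≥0∞) = ENNReal.ofReal ‖f z‖ := by
      rw [ofReal_norm_eq_enorm]; rfl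
    rw [e2] at h1
    exact (ENNReal.ofReal_le_ofReal_iff hN).1 h1
  · have h2 : ENNReal.ofReal ((2*R)^α) * Hol α (closedBall 0 R) f ≤ ENNReal.ofReal N := le_add_self.trans h
    have h3 : ENNReal.ofReal (R^α) * Hol α (closedBall 0 R) f ≤ ENNReal.ofReal N := by
      refine le_trans ?_ h2
      gcongr
      · exact hα.1.le
      · linarith
    apply le_of_Hol hα.1 (by positivity)
    rw [ENNReal.ofReal_mul hN, ENNReal.ofReal_inv_of_pos hRα, ← div_eq_mul_inv, 
      ENNReal.le_div_iff_mul_le (by simp [hRα]) (by simp), mul_comm]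
    exact h3

theorem CkHolder_conj {k : ℕ} {α R : ℝ} {h : ℂ → ℂ} (hh : CkHolder k α R h) :
    CkHolder k α R (fun w => (starRingEnd ℂ) (h w)) ∧
    hnormK k α R (fun w => (starRingEnd ℂ) (h w)) ≤ hnormK k α R h := by
  obtain ⟨⟨U, hU, hs, hc⟩, hH⟩ := hh
  have e : ∀ i j, i + j = k → Set.EqOn (wDij i j (fun w => (starRingEnd ℂ) (h w)))
      (fun w => (starRingEnd ℂ) (wDij j i h w)) (closedBall 0 R) := fun i j hij =>
    (wDij_conj hU (by rw [hij]; exact hc)).mono hs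
  refine ⟨⟨⟨U, hU, hs, Complex.conjCLE.contDiff.comp_contDiffOn hc⟩, fun i j hij => ?_⟩, ?_⟩
  · rw [Hol_congr (e i j hij), Hol_conj]; exact hH j i (by omega)
  · unfold hnormK
    refine iSup₂_le ?_
    rintro ⟨i, j⟩ hp
    have hij : i + j = k := by simpa using hp
    dsimp only
    rw [hnorm_congr (e i j hij), hnorm_conj]
    exact le_iSup₂_of_le (f := fun (p : ℕ × ℕ) (_ : p ∈ Finset.HasAntidiagonal.antidiagonal k) => hnorm α R (wDij p.1 p.2 h)) (j, i) (by simp; omega) le_rfl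

theorem CkHolderBall_conj {k : ℕ} {α R : ℝ} {h : ℂ → ℂ} (hh : CkHolderBall k α R h) :
    CkHolderBall k α R (fun w => (starRingEnd ℂ) (h w)) ∧
    hnormKB k α R (fun w => (starRingEnd ℂ) (h w)) ≤ hnormKB k α R h := by
  obtain ⟨hc, hg, hH⟩ := hh
  have e : ∀ i j, i + j ≤ k → Set.EqOn (wDij i j (fun w => (starRingEnd ℂ) (h w)))
      (fun w => (starRingEnd ℂ) (wDij j i h w)) (ball 0 R) := fun i j hij =>
    (wDij_conj isOpen_ball (hc.of_le (by norm_cast)))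
  refine ⟨⟨Complex.conjCLE.contDiff.comp_contDiffOn hc, fun i j hij => ?_, fun i j hij => ?_⟩, ?_⟩
  · obtain ⟨g, g1, g2⟩ := hg j i (by omega)
    refine ⟨fun w => (starRingEnd ℂ) (g w), Complex.continuous_conj.comp_continuousOn g1, fun z hz => ?_⟩
    rw [e i j hij hz]; dsimp only; rw [g2 hz]
  · rw [Hol_congr (e i j hij.le), Hol_conj]; exact hH j i (by omega)
  · unfold hnormKB
    refine iSup₂_le ?_
    rintro ⟨i, j⟩ hp
    have hij : i + j = k := by simpa using hp
    dsimp only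
    rw [hnormB_congr (e i j hij.le), hnormB_conj]
    exact le_iSup₂_of_le (f := fun (p : ℕ × ℕ) (_ : p ∈ Finset.HasAntidiagonal.antidiagonal k) => hnormB α R (wDij p.1 p.2 h)) (j, i) (by simp; omega) le_rfl

theorem Tcg_bound (k : ℕ) {α : ℝ} (hα : α ∈ Set.Ioo (0:ℝ) 1) :
    ∃ C : ℝ, 0 < C ∧ ∀ R : ℝ, 0 < R → R ≤ 1 → ∀ h : ℂ → ℂ, CkHolder k α R h →
      (CkHolderBall (k+1) α R (Tcg R h) ∧
        hnormKB (k+1) α R (Tcg R h) ≤ ENNReal.ofReal C * hnormK k α R h) := by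
  obtain ⟨C, hC, hM⟩ := Main1 hα k
  refine ⟨3 * C + 1, by positivity, fun R hR hR1 h hh => ?_⟩
  have hRα : 0 < R ^ α := Real.rpow_pos_of_pos hR _
  have hR' : (R:ℂ) ≠ 0 := by exact_mod_cast hR.ne'
  have htop := hnormK_lt_top hh
  set N : ℝ := (hnormK k α R h).toReal with hNdef
  have hN : 0 ≤ N := ENNReal.toReal_nonneg
  have hNe : ENNReal.ofReal N = hnormK k α R h := ENNReal.ofReal_toReal htop.ne
  have hle : ∀ i j, i + j = k → hnorm α R (wDij i j h) ≤ ENNReal.ofReal N := by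
    intro i j hij
    rw [hNe]
    exact le_iSup₂_of_le (f := fun (p : ℕ × ℕ) (_ : p ∈ Finset.HasAntidiagonal.antidiagonal k) => hnorm α R (wDij p.1 p.2 h)) (i, j) (by simpa using hij) le_rfl
  obtain ⟨⟨U, hU, hs, hc⟩, hH⟩ := hh
  set g : ℂ → ℂ := fun w => 1 * h (R * w) with hg
  set V : Set ℂ := (fun w : ℂ => (R:ℂ) * w) ⁻¹' U with hV
  have hVo : IsOpen V := hU.preimage (by fun_prop)
  have mem1 : ∀ w ∈ closedBall (0:ℂ) 1, (R:ℂ) * w ∈ closedBall (0:ℂ) R := by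
    intro w hw
    simp [abs_of_pos hR] at hw ⊢; nlinarith
  have mem2 : ∀ w ∈ ball (0:ℂ) R, ((R⁻¹:ℝ):ℂ) * w ∈ ball (0:ℂ) 1 := by
    intro w hw
    simp [abs_of_pos hR] at hw ⊢
    rw [inv_mul_lt_iff₀ hR]; linarith
  have hVs : closedBall (0:ℂ) 1 ⊆ V := fun w hw => hs (mem1 w hw)
  have hgc : ContDiffOn ℝ k g V := by
    refine contDiffOn_const.mul (hc.comp (ContDiff.contDiffOn ?_) (fun w hw => hw))
    fun_prop
  have norm_scale : ∀ (a : ℝ) (w w' : ℂ), 0 < a → ‖(a:ℂ) * w - a * w'‖ ^ α = a^α * ‖w - w'‖^α := by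
    intro a w w' ha
    rw [← mul_sub, norm_mul, Complex.norm_real, Real.norm_of_nonneg ha.le, Real.mul_rpow ha.le (norm_nonneg _)]
  have hgF : ∀ i j, i + j = k → FN (closedBall 0 1) α 0 (R^k * N) (wDij i j g) := by
    intro i j hij
    obtain ⟨b1, b2⟩ := hnorm_bounds hα hR hN (hle i j hij)
    have e : ∀ z, wDij i j g z = (R:ℂ)^k * wDij i j h (R * z) := by
      intro z; rw [hg, wDij_scale, hij]; ring
    have nr : ‖(R:ℂ)^k‖ = R^k := by rw [norm_pow, Complex.norm_real, Real.norm_of_nonneg hR.le]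
    refine ⟨fun z hz => ?_, fun z hz z' hz' => ?_⟩
    · rw [e, norm_mul, nr]; gcongr; exact b1 _ (mem1 z hz)
    · rw [e, e, ← mul_sub, norm_mul, nr, mul_assoc]
      have := b2 _ (mem1 z hz) _ (mem1 z' hz')
      rw [norm_scale R z z' hR] at this
      gcongr
      refine this.trans (le_of_eq ?_)
      field_simp
  obtain ⟨m1, ⟨N', m2⟩, m3, m4⟩ := hM V g (R^k * N) hVo hVs hgc hgF
  set F := Tcg 1 g with hF
  have eT : Tcg R h = fun z => (R:ℂ) * F ((R⁻¹:ℝ) * z) := by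
    ext z; exact Tcg_scale hR h z
  have cT : ContDiffOn ℝ (k+1:ℕ) (Tcg R h) (ball 0 R) := by
    rw [eT]
    refine contDiffOn_const.mul (m1.comp (ContDiff.contDiffOn ?_) (fun w hw => mem2 w hw))
    fun_prop
  have eW : ∀ i j z, wDij i j (Tcg R h) z = ((R:ℂ) * ((R⁻¹:ℝ):ℂ)^(i+j)) * wDij i j F ((R⁻¹:ℝ) * z) := by
    intro i j z; rw [eT, wDij_scale]
  have hRi : 0 < R⁻¹ := by positivity
  -- transfer of bounds
  have tr : ∀ i j M, FN (ball 0 1) α 0 M (wDij i j F) → 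
      (∀ z ∈ ball (0:ℂ) R, ‖wDij i j (Tcg R h) z‖ ≤ R * R⁻¹^(i+j) * M) ∧ 
      ∀ z ∈ ball (0:ℂ) R, ∀ z' ∈ ball (0:ℂ) R, ‖wDij i j (Tcg R h) z - wDij i j (Tcg R h) z'‖ ≤
        (R * R⁻¹^(i+j) * M * (R^α)⁻¹) * ‖z - z'‖^α := by
    intro i j M hFN
    have nr : ‖(R:ℂ) * ((R⁻¹:ℝ):ℂ)^(i+j)‖ = R * R⁻¹^(i+j) := by 
      rw [norm_mul, norm_pow, Complex.norm_real, Complex.norm_real, Real.norm_of_nonneg hR.le, Real.norm_of_nonneg hRi.le]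
    refine ⟨fun z hz => ?_, fun z hz z' hz' => ?_⟩
    · rw [eW, norm_mul, nr]; gcongr; exact hFN.1 _ (mem2 z hz)
    · rw [eW, eW, ← mul_sub, norm_mul, nr]
      have := hFN.2 _ (mem2 z hz) _ (mem2 z' hz')
      rw [norm_scale _ z z' hRi, Real.inv_rpow hR.le] at this
      rw [mul_assoc (R * R⁻¹^(i+j)), mul_assoc (R * R⁻¹^(i+j)), mul_assoc M]
      gcongr
  have eB : Set.EqOn (wDbar (Tcg R h)) h (ball 0 R) := by
    intro z hz
    have h1 := eW 0 1 z
    have h2 := m3 (mem2 z hz)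
    have h3 : wDbar (Tcg R h) z = ((R:ℂ) * ((R⁻¹:ℝ):ℂ)^(0+1)) * wDbar F ((R⁻¹:ℝ) * z) := h1
    rw [h3, h2, hg]
    push_cast
    have h4 : (R:ℂ) * ((R:ℂ)⁻¹ * z) = z := by field_simp
    rw [h4]; field_simp
  refine ⟨⟨cT, fun i j hij => ?_, fun i j hij => ?_⟩, ?_⟩
  · obtain ⟨t1, t2⟩ := tr i j N' (FN.wDij m2 hij)
    set A := R * R⁻¹^(i+j) * N' with hA
    have hA0 : 0 ≤ A := (norm_nonneg _).trans (t1 0 (by simpa using hR))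
    have hA1 : 0 ≤ A * (R^α)⁻¹ := by positivity
    exact ext_of_FN (N := A + A * (R^α)⁻¹) hα.1 hR ⟨fun z hz => (t1 z hz).trans (by linarith), fun z hz z' hz' =>
      (t2 z hz z' hz').trans (by gcongr; linarith)⟩
  · obtain ⟨t1, t2⟩ := tr i j N' (FN.wDij m2 hij.le)
    have hA0 : 0 ≤ R * R⁻¹^(i+j) * N' := (norm_nonneg _).trans (t1 0 (by simpa using hR))
    exact (Hol_le_of (by positivity) t2).trans_lt ENNReal.ofReal_lt_top
  · unfold hnormKB
    refine iSup₂_le ?_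
    rintro ⟨i, j⟩ hp
    have hij : i + j = k + 1 := by simpa using hp
    dsimp only
    rw [← hNe, ← ENNReal.ofReal_mul (by positivity)]
    cases j with
    | zero =>
      obtain rfl : i = k + 1 := by omega
      obtain ⟨t1, t2⟩ := tr (k+1) 0 (C * (R^k * N)) m4
      have e : R * R⁻¹^(k+1+0) * (C * (R^k * N)) = C * N := by
        rw [add_zero, inv_pow, pow_succ]; field_simp
      rw [e] at t1 t2
      refine (hnormB_le_of hR hα (by positivity) t1 t2).trans (ENNReal.ofReal_le_ofReal ?_)
      nlinarith
    | succ j =>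
      rw [wD_wDij', hnormB_congr (wDij_eqOn isOpen_ball i j eB)]
      refine (hnormB_le_hnorm.trans (hle i j (by omega))).trans (ENNReal.ofReal_le_ofReal ?_)
      have := mul_nonneg hC hN
      nlinarith



/-- `Th ∈ C^{k+1+α}(D)` with `‖Th‖^{(k+1)} ≤ C‖h‖^{(k)}`, and
likewise for `T̄h`, for `0 < R ≤ 1` and `h ∈ C^{k+α}(D)`. -/
theorem Tcg_norm_bound (k : ℕ) (α : ℝ) (hα : α ∈ Set.Ioo (0:ℝ) 1) :
    ∃ C : ℝ, 0 < C ∧ ∀ R : ℝ, 0 < R → R ≤ 1 → ∀ h : ℂ → ℂ, CkHolder k α R h →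
      (CkHolderBall (k+1) α R (Tcg R h) ∧
        hnormKB (k+1) α R (Tcg R h) ≤ ENNReal.ofReal C * hnormK k α R h) ∧
      (CkHolderBall (k+1) α R (Tcgbar R h) ∧
        hnormKB (k+1) α R (Tcgbar R h) ≤ ENNReal.ofReal C * hnormK k α R h) := by
  obtain ⟨C, hC, hT⟩ := Tcg_bound k hα
  refine ⟨C, hC, fun R hR hR1 h hh => ⟨hT R hR hR1 h hh, ?_⟩⟩
  obtain ⟨c1, c2⟩ := CkHolder_conj hh
  obtain ⟨d1, d2⟩ := hT R hR hR1 _ c1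
  obtain ⟨e1, e2⟩ := CkHolderBall_conj d1
  exact ⟨e1, e2.trans (d2.trans (by gcongr))⟩
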